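/- arXiv:2411.01323 — 4 statements merged into one kernel-verified Lean document; each statement's English description precedes it below -/
import Mathlib

section
/- Let (V, f) be a finite-dimensional nondegenerate symmetric bilinear space over a field K with char K ≠ 2, let φ ∈ O(V), and let σ ∈ O(V) be an involution with σφσ⁻¹ = φ⁻¹. Then V has an orthogonal decomposition V = U₁ ⊥ U₂ ⊥ … ⊥ U_m where each U_j is a nondegenerate subspace invariant under both φ and σ, and the restriction of φ to each U_j is orthogonally indecomposable. -/
open Polynomial Module

namespace Biref

variable {K V : Type*} [Field K] [AddCommGroup V] [Module K V]

/-- The orthogonal group of a bilinear form: all linear automorphisms preserving `f`. -/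
def orthGroup (f : LinearMap.BilinForm K V) : Subgroup (V ≃ₗ[K] V) where
  carrier := {φ | ∀ x y : V, f (φ x) (φ y) = f x y}
  one_mem' := fun _ _ => rfl
  mul_mem' := by
    intro a b ha hb x y
    simpa using (ha (b x) (b y)).trans (hb x y)
  inv_mem' := by
    intro a ha x y
    show f (a.symm x) (a.symm y) = f x y
    conv_rhs => rw [← a.apply_symm_apply x, ← a.apply_symm_apply y]
    exact (ha _ _).symm

/-- The special orthogonal group: isometries of determinant 1. -/
def specialOrthGroup (f : LinearMap.BilinForm K V) : Subgroup (V ≃ₗ[K] V) where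
  carrier := {φ | (∀ x y : V, f (φ x) (φ y) = f x y) ∧
      LinearMap.det (φ : V →ₗ[K] V) = 1}
  one_mem' := ⟨fun _ _ => rfl, by simp⟩
  mul_mem' := by
    rintro a b ⟨ha, ha'⟩ ⟨hb, hb'⟩
    refine ⟨fun x y => by simpa using (ha (b x) (b y)).trans (hb x y), ?_⟩
    rw [LinearEquiv.coe_toLinearMap_mul, map_mul, ha', hb', one_mul]
  inv_mem' := by
    rintro a ⟨ha, ha'⟩
    refine ⟨fun x y => ?_, ?_⟩
    · show f (a.symm x) (a.symm y) = f x y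
      conv_rhs => rw [← a.apply_symm_apply x, ← a.apply_symm_apply y]
      exact (ha _ _).symm
    · have h1 : LinearMap.det ((a⁻¹ * a : V ≃ₗ[K] V) : V →ₗ[K] V) = 1 := by
        rw [inv_mul_cancel, LinearEquiv.coe_toLinearMap_one, LinearMap.det_id]
      rw [LinearEquiv.coe_toLinearMap_mul, map_mul, ha', mul_one] at h1
      exact h1

/-- The commutator subgroup `Ω(V)` of the orthogonal group. -/
def omegaGroup (f : LinearMap.BilinForm K V) : Subgroup (V ≃ₗ[K] V) :=
  ⁅orthGroup f, orthGroup f⁆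

/-- `g` is a product of two involutions lying in the subgroup `H`. -/
def IsBireflectionalIn {G : Type*} [Group G] (H : Subgroup G) (g : G) : Prop :=
  ∃ σ τ : G, σ ∈ H ∧ τ ∈ H ∧ σ ^ 2 = 1 ∧ τ ^ 2 = 1 ∧ g = σ * τ

/-- `g` is bireflectional in the group `G`. -/
def IsBireflectional {G : Type*} [Group G] (g : G) : Prop :=
  ∃ σ τ : G, σ ^ 2 = 1 ∧ τ ^ 2 = 1 ∧ g = σ * τ

/-- `g` is reversed by some element of `H`. -/
def IsReversibleIn {G : Type*} [Group G] (H : Subgroup G) (g : G) : Prop :=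
  ∃ α : G, α ∈ H ∧ α * g * α⁻¹ = g⁻¹

/-- A subspace is invariant under an endomorphism. -/
def Invt (ψ : V →ₗ[K] V) (U : Submodule K V) : Prop :=
  ∀ x ∈ U, ψ x ∈ U

/-- The discriminant of a (finite-dimensional, nondegenerate) bilinear space is the class
of `d` in `K*/(K*)²`: some Gram determinant equals `d` times a nonzero square. -/
def HasDisc (f : LinearMap.BilinForm K V) (d : K) : Prop :=
  ∃ (b : Basis (Fin (Module.finrank K V)) K V) (c : Kˣ),
    (Matrix.of fun i j => f (b i) (b j)).det = d * (c : K) ^ 2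

/-- A nondegenerate symmetric bilinear space is hyperbolic iff its Witt index is half its
dimension, i.e. there is a totally isotropic subspace of half the dimension. -/
def IsHyperbolicSpace (f : LinearMap.BilinForm K V) : Prop :=
  ∃ W : Submodule K V, (∀ x ∈ W, ∀ y ∈ W, f x y = 0) ∧
    2 * Module.finrank K W = Module.finrank K V

/-- The multiplicity of `p ^ d` as an elementary divisor of `φ`. -/
noncomputable def edMult (φ : Module.End K V) (p : K[X]) (d : ℕ) : ℕ :=
  (2 * Module.finrank K (LinearMap.ker (Polynomial.aeval φ p ^ d))
    - Module.finrank K (LinearMap.ker (Polynomial.aeval φ p ^ (d + 1)))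
    - Module.finrank K (LinearMap.ker (Polynomial.aeval φ p ^ (d - 1)))) / p.natDegree

/-- `n_j(φ)`: the number of elementary divisors `(x ± 1) ^ d` of `φ` with `d ≡ j mod 8`,
counted with multiplicity. -/
noncomputable def nPM [FiniteDimensional K V] (φ : Module.End K V) (j : ℕ) : ℕ :=
  ∑ d ∈ Finset.range (Module.finrank K V + 1),
    if d % 8 = j % 8 then edMult φ (X - 1) d + edMult φ (X + 1) d else 0

/-- The Fitting one space `Bahn^∞(ψ) = ⋂ⱼ im (ψ - 1)^j`. -/
noncomputable def bahnInf (ψ : Module.End K V) : Submodule K V :=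
  ⨅ j : ℕ, LinearMap.range ((ψ - 1) ^ j)

/-- The `K[x]`-submodule generated by `v` (`x` acting as `ψ`). -/
def cycSub (ψ : Module.End K V) (v : V) : Submodule K V :=
  Submodule.span K (Set.range fun n : ℕ => (ψ ^ n) v)

/-- `V` is a cyclic `K[x]`-module, `x` acting as `ψ`. -/
def IsCyclicEnd (ψ : Module.End K V) : Prop :=
  ∃ v : V, cycSub ψ v = ⊤

/-- `V` is a direct sum of two cyclic `K[x]`-submodules, `x` acting as `ψ`. -/
def IsBicyclicEnd (ψ : Module.End K V) : Prop :=
  ∃ v w : V, cycSub ψ v ⊓ cycSub ψ w = ⊥ ∧ cycSub ψ v ⊔ cycSub ψ w = ⊤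

/-- `V` is an indecomposable `K[x]`-module, `x` acting as `ψ`. -/
def ModIndec (ψ : Module.End K V) : Prop :=
  (⊥ : Submodule K V) ≠ ⊤ ∧
    ¬∃ A B : Submodule K V, Invt ψ A ∧ Invt ψ B ∧ A ≠ ⊥ ∧ B ≠ ⊥ ∧ A ⊓ B = ⊥ ∧ A ⊔ B = ⊤

/-- `ψ` is orthogonally indecomposable w.r.t. `f`: `V ≠ 0` and the only nondegenerate
invariant subspaces are `0` and `V`. -/
def OrthIndec (f : LinearMap.BilinForm K V) (ψ : Module.End K V) : Prop :=
  (⊥ : Submodule K V) ≠ ⊤ ∧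
    ∀ U : Submodule K V, Invt ψ U → (f.restrict U).Nondegenerate → U = ⊥ ∨ U = ⊤

/-- The Witt index: the dimension of a maximal totally isotropic subspace. -/
noncomputable def wittIndex (f : LinearMap.BilinForm K V) : ℕ :=
  sSup {n | ∃ W : Submodule K V, (∀ x ∈ W, ∀ y ∈ W, f x y = 0) ∧ Module.finrank K W = n}

/-!
Split off minimal nonzero nondegenerate subspaces invariant under both `φ` and `σ`; it remains to
see that `φ` alone is orthogonally indecomposable on such a subspace, which we call `V` again.

The operator `S = φ + φ⁻¹` is self-adjoint and commutes with `φ` and `σ`, so by Fitting's lemma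
every polynomial in `S` is nilpotent or injective on `V`, and `q(S)` is nilpotent for some
irreducible `q`.

* If `φ - φ⁻¹` is injective, let `q(S) ^ n` be the last nonzero power. The form `f (q(S) ^ n x) y`
  is symmetric and `σ`-invariant, so there is an eigenvector `x` of `σ` with
  `f (q(S) ^ n x) x ≠ 0`. Then `K[S] x` is nondegenerate and orthogonal to `(φ - φ⁻¹) K[S] x`, so
  `K[φ] x` is nondegenerate and equals `V`. On a cyclic space, orthogonal projections onto
  `φ`-invariant subspaces are polynomials in `φ`, hence commute with `σ`, and minimality applies to
  their images.
* Otherwise `φ` or `-φ` is unipotent, because `(φ - φ⁻¹) ^ 2 = (S - 2) (S + 2)`. Take `φ = 1 + N`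
  and let `N ^ k` be the last nonzero power. For even `k` the form `f (N ^ k x) y` is symmetric
  and `V` is cyclic as before. For odd `k` it is alternating and `V = K[φ] x + K[φ] y` for two
  eigenvectors of `σ`, so it has rank two. By the Plücker relation it cannot be nonzero both on a
  `φ`-invariant `P` and on its orthogonal complement, and the one on which it vanishes is zero if
  `P` is nondegenerate.
-/

section Adjoint

variable {f : LinearMap.BilinForm K V} {T T' : End K V}

theorem restrict_nondegenerate_iff (hf : f.IsSymm) {U : Submodule K V} :
    (f.restrict U).Nondegenerate ↔ ∀ x ∈ U, (∀ y ∈ U, f x y = 0) → x = 0 := by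
  refine (hf.restrict U).isRefl.nondegenerate_iff_separatingLeft.trans ?_
  simp [LinearMap.SeparatingLeft]

theorem isAdjointPair_pow (h : LinearMap.IsAdjointPair f f T T') (n : ℕ) :
    LinearMap.IsAdjointPair f f ⇑(T ^ n) ⇑(T' ^ n) := by
  induction n with
  | zero => exact fun _ _ => rfl
  | succ n ih => rw [pow_succ, pow_succ']; exact ih.mul h

theorem isAdjointPair_aeval (h : LinearMap.IsAdjointPair f f T T') (p : K[X]) :
    LinearMap.IsAdjointPair f f ⇑(aeval T p) ⇑(aeval T' p) := by
  intro x y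
  have hpow (n : ℕ) : f ((T ^ n) x) y = f x ((T' ^ n) y) := isAdjointPair_pow h n x y
  simp [aeval_eq_sum_range, hpow]

theorem semiconjBy_aeval {σ : End K V} (h : SemiconjBy σ T T') (p : K[X]) :
    SemiconjBy σ (aeval T p) (aeval T' p) := by
  simp only [SemiconjBy, aeval_eq_sum_range, Finset.mul_sum, Finset.sum_mul,
    mul_smul_comm, smul_mul_assoc, (h.pow_right _).eq]

theorem isAdjointPair_swap (hf : f.IsSymm) (h : LinearMap.IsAdjointPair f f T T') :
    LinearMap.IsAdjointPair f f T' T := fun x y => by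
  rw [hf.eq, ← h, hf.eq]

end Adjoint

section Invt

variable {T T' : End K V} {U W : Submodule K V}

theorem Invt.pow (h : Invt T U) (n : ℕ) : Invt (T ^ n) U := by
  induction n with
  | zero => exact fun x hx => hx
  | succ n ih => exact fun x hx => by rw [pow_succ]; exact ih _ (h x hx)

theorem Invt.aeval (h : Invt T U) (p : K[X]) : Invt (aeval T p) U := fun x hx => by
  simp only [aeval_eq_sum_range, LinearMap.sum_apply, LinearMap.smul_apply]
  exact U.sum_mem fun i _ => U.smul_mem _ (h.pow i x hx)

theorem Invt.add (h : Invt T U) (h' : Invt T' U) : Invt (T + T') U := fun x hx =>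
  U.add_mem (h x hx) (h' x hx)

theorem Invt.sub (h : Invt T U) (h' : Invt T' U) : Invt (T - T') U := fun x hx =>
  U.sub_mem (h x hx) (h' x hx)

theorem Invt.inf (hU : Invt T U) (hW : Invt T W) : Invt T (U ⊓ W) :=
  End.invtSubmodule.inf_mem hU hW

theorem Invt.sup (hU : Invt T U) (hW : Invt T W) : Invt T (U ⊔ W) :=
  End.invtSubmodule.sup_mem hU hW

theorem Invt.orthogonal {f : LinearMap.BilinForm K V} (h : LinearMap.IsAdjointPair f f T T')
    (hU : Invt T U) : Invt T' (f.orthogonal U) := fun x hx u hu => by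
  rw [← h]
  exact hx _ (hU u hu)

theorem Invt.of_mul_eq_one [FiniteDimensional K V] (h : T' * T = 1) (hU : Invt T U) :
    Invt T' U := fun x hx => by
  have hleft (y : V) : T' (T y) = y := LinearMap.congr_fun h y
  have hinj : Function.Injective (T.restrict hU) := fun a b hab =>
    Subtype.ext <| Function.LeftInverse.injective hleft (congrArg Subtype.val hab)
  obtain ⟨y, hy⟩ := LinearMap.surjective_of_injective hinj ⟨x, hx⟩
  have hyx : T y = x := congrArg Subtype.val hy
  rw [← hyx, hleft]
  exact y.2

end Invt

section Cyclic

variable {T : End K V} {U : Submodule K V} {x v : V}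

theorem mem_cycSub : v ∈ cycSub T x ↔ ∃ p : K[X], aeval T p x = v := by
  constructor
  · intro hv
    induction hv using Submodule.span_induction with
    | mem _ h => obtain ⟨n, rfl⟩ := h; exact ⟨X ^ n, by simp⟩
    | zero => exact ⟨0, by simp⟩
    | add _ _ _ _ hp hq =>
      obtain ⟨⟨p, rfl⟩, q, rfl⟩ := hp, hq
      exact ⟨p + q, by simp⟩
    | smul a _ _ hp =>
      obtain ⟨p, rfl⟩ := hp
      exact ⟨a • p, by simp⟩
  · rintro ⟨p, rfl⟩
    rw [aeval_eq_sum_range, LinearMap.sum_apply]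
    exact Submodule.sum_mem _ fun i _ => Submodule.smul_mem _ _ (Submodule.subset_span ⟨i, rfl⟩)

theorem self_mem_cycSub : x ∈ cycSub T x := mem_cycSub.2 ⟨1, by simp⟩

theorem invt_cycSub : Invt T (cycSub T x) := fun v hv => by
  obtain ⟨p, rfl⟩ := mem_cycSub.1 hv
  exact mem_cycSub.2 ⟨X * p, by simp⟩

theorem cycSub_le (hU : Invt T U) (hx : x ∈ U) : cycSub T x ≤ U := fun v hv => by
  obtain ⟨p, rfl⟩ := mem_cycSub.1 hv
  exact hU.aeval p x hx

end Cyclic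

section Nondegenerate

variable {f : LinearMap.BilinForm K V} {T T' : End K V}

-- If a radical vector is `T ^ j w`, then `T ^ k w` is its image under `T ^ (k - j)`, so it is
-- still orthogonal to `U` and `w` lies in `T U`; hence a radical vector lies in
-- `T ^ (k + 1) U = 0`.
theorem restrict_nondegenerate_of_pow_succ_eq_zero (hf : f.IsSymm)
    (hT : LinearMap.IsAdjointPair f f T T') {U : Submodule K V} (hU : Invt T' U) {k : ℕ}
    (hk : T ^ (k + 1) = 0)
    (hmap : ∀ u ∈ U, (∀ v ∈ U, f ((T ^ k) u) v = 0) → u ∈ U.map T) :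
    (f.restrict U).Nondegenerate := by
  refine (restrict_nondegenerate_iff hf).2 fun x hx hrad => ?_
  have hpow (j : ℕ) (hj : j ≤ k + 1) : ∃ w ∈ U, (T ^ j) w = x := by
    induction j with
    | zero => exact ⟨x, hx, rfl⟩
    | succ j ih =>
      obtain ⟨w, hw, hwx⟩ := ih (by lia)
      have hTw : (T ^ k) w = (T ^ (k - j)) x := by
        rw [← hwx, ← Module.End.mul_apply, ← pow_add, Nat.sub_add_cancel (by lia)]
      obtain ⟨w', hw', rfl⟩ := hmap w hw fun v hv => by
        rw [hTw, isAdjointPair_pow hT]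
        exact hrad _ (hU.pow _ v hv)
      exact ⟨w', hw', by rw [pow_succ, Module.End.mul_apply, hwx]⟩
  obtain ⟨w, -, rfl⟩ := hpow (k + 1) le_rfl
  rw [hk, LinearMap.zero_apply]

theorem restrict_cycSub_nondegenerate (hf : f.IsSymm) (hT : LinearMap.IsAdjointPair f f T T')
    {x : V} (hx : Invt T' (cycSub T x)) {q : K[X]} (hq : Irreducible q) {n : ℕ}
    (hn : aeval T q ^ (n + 1) = 0) (hne : f ((aeval T q ^ n) x) x ≠ 0) :
    (f.restrict (cycSub T x)).Nondegenerate := by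
  refine restrict_nondegenerate_of_pow_succ_eq_zero hf (isAdjointPair_aeval hT q)
    (hx.aeval q) hn fun u hu horth => ?_
  obtain ⟨r, rfl⟩ := mem_cycSub.1 hu
  by_cases hqr : q ∣ r
  · obtain ⟨s, rfl⟩ := hqr
    exact ⟨aeval T s x, mem_cycSub.2 ⟨s, rfl⟩, by rw [map_mul, Module.End.mul_apply]⟩
  · obtain ⟨a, b, hab⟩ : IsCoprime (q ^ (n + 1)) r :=
      ((hq.coprime_iff_not_dvd).2 hqr).pow_left
    have hbr : aeval T b * aeval T r = 1 := by
      simpa [hn] using congrArg (aeval T) hab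
    refine absurd (horth _ (hx.aeval b x self_mem_cycSub)) ?_
    have hcomm : aeval T b * (aeval T q ^ n * aeval T r) = aeval T q ^ n := by
      rw [← map_pow, (Commute.all (q ^ n) r).map (aeval T) |>.eq, ← mul_assoc, hbr, one_mul]
    rwa [← isAdjointPair_aeval hT, ← Module.End.mul_apply, ← Module.End.mul_apply,
      mul_assoc, hcomm]

theorem restrict_ker_nondegenerate (hf : f.IsSymm) (hnd : f.Nondegenerate)
    (hT : LinearMap.IsAdjointPair f f T T) (hc : Codisjoint (LinearMap.ker T) (LinearMap.range T)) :
    (f.restrict (LinearMap.ker T)).Nondegenerate := by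
  refine (restrict_nondegenerate_iff hf).2 fun x hx hrad => hnd.1 x fun y => ?_
  obtain ⟨a, _, ha, ⟨b, rfl⟩, rfl⟩ := Submodule.codisjoint_iff_exists_add_eq.1 hc y
  rw [map_add, hrad a ha, ← hT, LinearMap.mem_ker.1 hx, map_zero, LinearMap.zero_apply, add_zero]

theorem restrict_top_nondegenerate (hf : f.IsSymm) (hnd : f.Nondegenerate) :
    (f.restrict ⊤).Nondegenerate :=
  (restrict_nondegenerate_iff hf).2 fun x _ hx => hnd.1 x fun y => hx y trivial

theorem restrict_inf_orthogonal_nondegenerate [FiniteDimensional K V] (hf : f.IsSymm)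
    {A U : Submodule K V} (hA : (f.restrict A).Nondegenerate)
    (hU : (f.restrict U).Nondegenerate) (hAU : A ≤ U) :
    (f.restrict (U ⊓ f.orthogonal A)).Nondegenerate := by
  have hc := f.isCompl_orthogonal_of_restrict_nondegenerate hf.isRefl hA
  rw [restrict_nondegenerate_iff hf] at hU ⊢
  intro x hx hrad
  refine hU x hx.1 fun y hy => ?_
  obtain ⟨a, b, ha, hb, rfl⟩ := Submodule.codisjoint_iff_exists_add_eq.1 hc.codisjoint y
  have hbU : b ∈ U := (Submodule.add_mem_iff_right U (hAU ha)).1 hy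
  rw [map_add, hf.isRefl _ _ (hx.2 a ha), hrad b ⟨hbU, hb⟩, add_zero]

theorem restrict_orthogonal_nondegenerate [FiniteDimensional K V] (hf : f.IsSymm)
    (hnd : f.Nondegenerate) {U : Submodule K V} (hU : (f.restrict U).Nondegenerate) :
    (f.restrict (f.orthogonal U)).Nondegenerate := by
  rw [← top_inf_eq (f.orthogonal U)]
  exact restrict_inf_orthogonal_nondegenerate hf hU (restrict_top_nondegenerate hf hnd) le_top

theorem restrict_map_subtype_nondegenerate (hf : f.IsSymm) {U : Submodule K V}
    {W : Submodule K U} (hW : ((f.restrict U).restrict W).Nondegenerate) :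
    (f.restrict (W.map U.subtype)).Nondegenerate := by
  rw [restrict_nondegenerate_iff (hf.restrict U)] at hW
  refine (restrict_nondegenerate_iff hf).2 ?_
  rintro _ ⟨w, hw, rfl⟩ hrad
  rw [hW w hw fun v hv => hrad v ⟨v, hv, rfl⟩, map_zero]

theorem isAdjointPair_projection_orthogonal (hf : f.IsSymm) {U : Submodule K V}
    (hU : IsCompl U (f.orthogonal U)) :
    LinearMap.IsAdjointPair f f (U.projection (f.orthogonal U) hU)
      (U.projection (f.orthogonal U) hU) := by
  set π : End K V := U.projection (f.orthogonal U) hU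
  have hπ (x : V) : π x ∈ U := U.projection_apply_mem hU x
  have horth (x y : V) : f (π x) y = f (π x) (π y) := by
    have hy : y - π y ∈ f.orthogonal U := by
      rw [← Submodule.projection_eq_self_sub_projection hU]
      exact Submodule.projection_apply_mem hU.symm y
    rw [← sub_eq_zero, ← map_sub]
    exact hy _ (hπ x)
  intro x y
  rw [horth, hf.eq, ← horth, hf.eq]

end Nondegenerate

section Involution

variable {B : LinearMap.BilinForm K V} {σ : End K V}

theorem apply_add_apply_mem_span (hσ : σ * σ = 1) (x : V) : σ (x + σ x) ∈ K ∙ (x + σ x) := by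
  have hx : σ (σ x) = x := LinearMap.congr_fun hσ x
  rw [map_add, hx, add_comm]
  exact Submodule.mem_span_singleton_self _

theorem apply_sub_apply_mem_span (hσ : σ * σ = 1) (x : V) : σ (x - σ x) ∈ K ∙ (x - σ x) := by
  have hx : σ (σ x) = x := LinearMap.congr_fun hσ x
  rw [map_sub, hx, ← Submodule.neg_mem_iff, neg_sub]
  exact Submodule.mem_span_singleton_self _

variable [NeZero (2 : K)]

theorem exists_apply_mem_span_of_isSymm (hB : B.IsSymm) (hB0 : B ≠ 0) (hσ : σ * σ = 1)
    (hBσ : ∀ x y, B (σ x) (σ y) = B x y) : ∃ x, σ x ∈ K ∙ x ∧ B x x ≠ 0 := by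
  let : Invertible (2 : K) := invertibleOfNonzero two_ne_zero
  obtain ⟨x, hx⟩ := LinearMap.BilinForm.exists_bilinForm_self_ne_zero hB0
    (LinearMap.BilinForm.isSymm_iff.1 hB)
  by_contra! h
  have hadd := h _ (apply_add_apply_mem_span hσ x)
  have hsub := h _ (apply_sub_apply_mem_span hσ x)
  have hsum : B (x + σ x) (x + σ x) + B (x - σ x) (x - σ x) = 2 * (2 * B x x) := by
    simp only [map_add, map_sub, LinearMap.add_apply, LinearMap.sub_apply, hBσ]
    ring
  rw [hadd, hsub, add_zero] at hsum
  exact mul_ne_zero two_ne_zero (mul_ne_zero two_ne_zero hx) hsum.symm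

theorem exists_apply_mem_span_pair (hB0 : B ≠ 0) (hσ : σ * σ = 1) :
    ∃ x y, σ x ∈ K ∙ x ∧ σ y ∈ K ∙ y ∧ B x y ≠ 0 := by
  obtain ⟨x, y, hxy⟩ : ∃ x y, B x y ≠ 0 := by
    contrapose! hB0
    exact LinearMap.ext₂ hB0
  by_contra! h
  have hsum : B (x + σ x) (y + σ y) + B (x + σ x) (y - σ y) + B (x - σ x) (y + σ y)
      + B (x - σ x) (y - σ y) = 2 * (2 * B x y) := by
    simp only [map_add, map_sub, LinearMap.add_apply, LinearMap.sub_apply]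
    ring
  have hadd := apply_add_apply_mem_span (K := K) hσ
  have hsub := apply_sub_apply_mem_span (K := K) hσ
  rw [h _ _ (hadd x) (hadd y), h _ _ (hadd x) (hsub y), h _ _ (hsub x) (hadd y),
    h _ _ (hsub x) (hsub y)] at hsum
  simp [hxy, two_ne_zero] at hsum

end Involution

section Polynomial

theorem exists_aeval_eq_of_commute {T A : End K V} {x : V} (hx : cycSub T x = ⊤)
    (hA : Commute A T) : ∃ p : K[X], aeval T p = A := by
  have hmem (v : V) : ∃ p : K[X], aeval T p x = v := mem_cycSub.1 (hx ▸ Submodule.mem_top)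
  obtain ⟨p, hp⟩ := hmem (A x)
  refine ⟨p, LinearMap.ext fun v => ?_⟩
  obtain ⟨r, rfl⟩ := hmem v
  have hpr : aeval T p * aeval T r = aeval T r * aeval T p :=
    ((Commute.all p r).map (aeval T)).eq
  calc aeval T p (aeval T r x) = aeval T r (aeval T p x) := LinearMap.congr_fun hpr x
    _ = aeval T r (A x) := by rw [hp]
    _ = A (aeval T r x) := (LinearMap.congr_fun (semiconjBy_aeval hA r).eq x).symm

theorem exists_irreducible_not_injective_aeval [FiniteDimensional K V] [Nontrivial V]
    (T : End K V) : ∃ q : K[X], Irreducible q ∧ ¬Function.Injective (aeval T q) := by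
  have hT : IsIntegral K T := Algebra.IsIntegral.isIntegral T
  obtain ⟨q, hq, r, hqr⟩ :=
    WfDvdMonoid.exists_irreducible_factor (minpoly.not_isUnit K T) (minpoly.ne_zero hT)
  refine ⟨q, hq, fun hinj => ?_⟩
  have hr : r ≠ 0 := by rintro rfl; exact minpoly.ne_zero hT (by simpa using hqr)
  have hTr : aeval T r = 0 := LinearMap.ext fun v => hinj <| by
    rw [← Module.End.mul_apply, ← map_mul, ← hqr, minpoly.aeval, LinearMap.zero_apply,
      map_zero]
  have hdvd : q * r ∣ 1 * r := by rw [one_mul, ← hqr]; exact minpoly.dvd K T hTr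
  exact hq.not_isUnit (isUnit_of_dvd_one ((mul_dvd_mul_iff_right hr).1 hdvd))

theorem exists_pow_ne_zero_of_isNilpotent {R : Type*} [Semiring R] [Nontrivial R] {a : R}
    (ha : IsNilpotent a) : ∃ n, a ^ (n + 1) = 0 ∧ a ^ n ≠ 0 := by
  have hpos := pos_nilpotencyClass_iff.2 ha
  refine ⟨nilpotencyClass a - 1, ?_, pow_pred_nilpotencyClass ha⟩
  rw [Nat.sub_add_cancel hpos, pow_nilpotencyClass ha]

end Polynomial

/-- An isometry `φ` of a nondegenerate symmetric bilinear space together with an isometric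
involution `σ` reversing it. The inverse `ψ` of `φ` is carried as separate data, so that `φ`, `ψ`
and `σ` are plain endomorphisms, which restrict to invariant subspaces; being an isometry is
expressed as being adjoint to one's inverse. -/
structure ReversedIsometry (f : LinearMap.BilinForm K V) (φ ψ σ : End K V) : Prop where
  isSymm : f.IsSymm
  nondegenerate : f.Nondegenerate
  mul_inv : φ * ψ = 1
  inv_mul : ψ * φ = 1
  isAdjointPair : LinearMap.IsAdjointPair f f φ ψ
  involution : σ * σ = 1
  involution_isAdjointPair : LinearMap.IsAdjointPair f f σ σ
  semiconjBy : SemiconjBy σ φ ψ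

/-- `U` is a nondegenerate subspace invariant under `φ` and `σ`, so that it can be split off as an
orthogonal summand of the whole configuration. -/
def IsReducing (f : LinearMap.BilinForm K V) (φ σ : End K V) (U : Submodule K V) : Prop :=
  Invt φ U ∧ Invt σ U ∧ (f.restrict U).Nondegenerate

/-- `V` is nonzero and has no proper nonzero subspace reducing `φ` and `σ`: the analogue of
`OrthIndec` for a pair of endomorphisms. -/
def OrthIndecPair (f : LinearMap.BilinForm K V) (φ σ : End K V) : Prop :=
  (⊥ : Submodule K V) ≠ ⊤ ∧ ∀ U : Submodule K V, IsReducing f φ σ U → U = ⊥ ∨ U = ⊤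

theorem invt_neg_iff {T : End K V} {U : Submodule K V} : Invt (-T) U ↔ Invt T U := by
  simp [Invt]

theorem orthIndec_neg_iff {f : LinearMap.BilinForm K V} {φ : End K V} :
    OrthIndec f (-φ) ↔ OrthIndec f φ := by
  simp only [OrthIndec, invt_neg_iff]

theorem orthIndecPair_neg_iff {f : LinearMap.BilinForm K V} {φ σ : End K V} :
    OrthIndecPair f (-φ) σ ↔ OrthIndecPair f φ σ := by
  simp only [OrthIndecPair, IsReducing, invt_neg_iff]

namespace ReversedIsometry

variable {f : LinearMap.BilinForm K V} {φ ψ σ : End K V}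

theorem neg (h : ReversedIsometry f φ ψ σ) : ReversedIsometry f (-φ) (-ψ) σ where
  isSymm := h.isSymm
  nondegenerate := h.nondegenerate
  mul_inv := by rw [neg_mul_neg, h.mul_inv]
  inv_mul := by rw [neg_mul_neg, h.inv_mul]
  isAdjointPair := fun x y => by simpa using h.isAdjointPair x y
  involution := h.involution
  involution_isAdjointPair := h.involution_isAdjointPair
  semiconjBy := h.semiconjBy.neg_right

theorem restrict (h : ReversedIsometry f φ ψ σ) {U : Submodule K V}
    (hU : (f.restrict U).Nondegenerate) (hφ : Invt φ U) (hψ : Invt ψ U) (hσ : Invt σ U) :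
    ReversedIsometry (f.restrict U) (LinearMap.restrict φ hφ) (LinearMap.restrict ψ hψ)
      (LinearMap.restrict σ hσ) where
  isSymm := h.isSymm.restrict U
  nondegenerate := hU
  mul_inv := LinearMap.ext fun x => Subtype.ext (LinearMap.congr_fun h.mul_inv x)
  inv_mul := LinearMap.ext fun x => Subtype.ext (LinearMap.congr_fun h.inv_mul x)
  isAdjointPair := fun x y => h.isAdjointPair x y
  involution := LinearMap.ext fun x => Subtype.ext (LinearMap.congr_fun h.involution x)
  involution_isAdjointPair := fun x y => h.involution_isAdjointPair x y
  semiconjBy := LinearMap.ext fun x => Subtype.ext (LinearMap.congr_fun h.semiconjBy.eq x)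

theorem semiconjBy_inv (h : ReversedIsometry f φ ψ σ) : SemiconjBy σ ψ φ :=
  calc σ * ψ = φ * ψ * σ * ψ := by rw [h.mul_inv, one_mul]
    _ = φ * (σ * φ) * ψ := by rw [h.semiconjBy.eq]; simp only [mul_assoc]
    _ = φ * σ := by simp only [mul_assoc, h.mul_inv, mul_one]

theorem add_isAdjointPair (h : ReversedIsometry f φ ψ σ) :
    LinearMap.IsAdjointPair f f ⇑(φ + ψ) ⇑(φ + ψ) := by
  have := h.isAdjointPair.add (isAdjointPair_swap h.isSymm h.isAdjointPair)
  rwa [add_comm (⇑ψ)] at this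

theorem commute_add (h : ReversedIsometry f φ ψ σ) : Commute φ (φ + ψ) :=
  (Commute.refl φ).add_right (h.mul_inv.trans h.inv_mul.symm)

theorem involution_commute_add (h : ReversedIsometry f φ ψ σ) : Commute σ (φ + ψ) := by
  have := h.semiconjBy.add_right h.semiconjBy_inv
  rwa [add_comm ψ] at this

theorem sub_mul_sub (h : ReversedIsometry f φ ψ σ) :
    (φ - ψ) * (φ - ψ) = aeval (φ + ψ) (X ^ 2 - 4 : K[X]) := by
  rw [map_sub, map_pow, aeval_X, map_ofNat, sq]
  have hfour : (4 : End K V) = 1 + 1 + 1 + 1 := by norm_num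
  simp only [sub_mul, mul_sub, add_mul, mul_add, h.mul_inv, h.inv_mul, hfour]
  abel

theorem commute_sub_add (h : ReversedIsometry f φ ψ σ) : Commute (φ - ψ) (φ + ψ) := by
  have hφψ : Commute φ ψ := h.mul_inv.trans h.inv_mul.symm
  exact h.commute_add.sub_left (hφψ.symm.add_right (Commute.refl ψ))

theorem sub_isAdjointPair (h : ReversedIsometry f φ ψ σ) :
    LinearMap.IsAdjointPair f f ⇑(φ - ψ) ⇑(-(φ - ψ)) := by
  rw [neg_sub]
  exact h.isAdjointPair.sub (isAdjointPair_swap h.isSymm h.isAdjointPair)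

theorem orthogonal_invt [FiniteDimensional K V] (h : ReversedIsometry f φ ψ σ)
    {P : Submodule K V} (hP : Invt φ P) : Invt φ (f.orthogonal P) :=
  (hP.of_mul_eq_one h.inv_mul).orthogonal (isAdjointPair_swap h.isSymm h.isAdjointPair)

theorem cycSub_invt_involution [FiniteDimensional K V] (h : ReversedIsometry f φ ψ σ) {x : V}
    (hx : σ x ∈ cycSub φ x) : Invt σ (cycSub φ x) := fun v hv => by
  obtain ⟨p, rfl⟩ := mem_cycSub.1 hv
  rw [← Module.End.mul_apply, (semiconjBy_aeval h.semiconjBy p).eq, Module.End.mul_apply]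
  exact (invt_cycSub.of_mul_eq_one h.inv_mul).aeval p _ hx

-- The orthogonal projection onto `P` is a polynomial in `φ`, and self-adjointness turns
-- `σ p(φ) = p(φ⁻¹) σ` into commutation with `σ`.
theorem invt_involution_of_cycSub_eq_top [FiniteDimensional K V] (h : ReversedIsometry f φ ψ σ)
    {x : V} (hx : cycSub φ x = ⊤) {P : Submodule K V} (hP : Invt φ P)
    (hnd : (f.restrict P).Nondegenerate) : Invt σ P := by
  have hc : IsCompl P (f.orthogonal P) :=
    f.isCompl_orthogonal_of_restrict_nondegenerate h.isSymm.isRefl hnd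
  set π : End K V := P.projection (f.orthogonal P) hc with hπ
  have hidem : IsIdempotentElem π := Submodule.isIdempotentElem_projection hc
  have hadj : LinearMap.IsAdjointPair f f π π :=
    isAdjointPair_projection_orthogonal h.isSymm hc
  obtain ⟨p, hp⟩ : ∃ p : K[X], aeval φ p = π := by
    refine exists_aeval_eq_of_commute hx ((LinearMap.IsIdempotentElem.commute_iff hidem).2 ?_)
    rw [hπ, Submodule.range_projection, Submodule.ker_projection]
    exact ⟨hP, h.orthogonal_invt hP⟩
  have hpψ : aeval ψ p = π := by
    refine f.isAdjointPair_unique_of_nondegenerate h.nondegenerate π _ _ ?_ hadj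
    rw [← hp]
    exact isAdjointPair_aeval (isAdjointPair_swap h.isSymm h.isAdjointPair) p
  have hcomm : Commute π σ := by
    have := semiconjBy_aeval h.semiconjBy p
    rw [hp, hpψ] at this
    exact this.symm
  have := ((LinearMap.IsIdempotentElem.commute_iff hidem).1 hcomm).1
  rwa [hπ, Submodule.range_projection] at this

theorem orthIndec_of_cycSub_nondegenerate [FiniteDimensional K V]
    (h : ReversedIsometry f φ ψ σ) (hind : OrthIndecPair f φ σ) {x : V} (hx0 : x ≠ 0)
    (hx : σ x ∈ K ∙ x) (hnd : (f.restrict (cycSub φ x)).Nondegenerate) : OrthIndec f φ := by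
  have hspan : K ∙ x ≤ cycSub φ x := (Submodule.span_singleton_le_iff_mem _ _).2 self_mem_cycSub
  have htop : cycSub φ x = ⊤ :=
    (hind.2 _ ⟨invt_cycSub, h.cycSub_invt_involution (hspan hx), hnd⟩).resolve_left
      fun hbot => hx0 ((Submodule.mem_bot K).1 (hbot ▸ self_mem_cycSub))
  exact ⟨hind.1, fun P hP hPnd =>
    hind.2 P ⟨hP, h.invt_involution_of_cycSub_eq_top htop hP hPnd, hPnd⟩⟩

end ReversedIsometry

theorem OrthIndecPair.nontrivial {f : LinearMap.BilinForm K V} {φ σ : End K V}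
    (h : OrthIndecPair f φ σ) : Nontrivial V :=
  not_subsingleton_iff_nontrivial.1 fun _ => h.1 (Subsingleton.elim _ _)

theorem OrthIndecPair.isNilpotent_or_injective [FiniteDimensional K V]
    {f : LinearMap.BilinForm K V} {φ σ T : End K V} (h : OrthIndecPair f φ σ) (hf : f.IsSymm)
    (hnd : f.Nondegenerate) (hT : LinearMap.IsAdjointPair f f T T) (hφ : Commute φ T)
    (hσ : Commute σ T) : IsNilpotent T ∨ Function.Injective T := by
  obtain ⟨n, hn, hn0⟩ := (T.eventually_isCompl_ker_pow_range_pow.and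
    (Filter.eventually_ge_atTop 1)).exists
  have hker {A : End K V} (hA : Commute A T) : Invt A (LinearMap.ker (T ^ n)) := fun x hx => by
    rw [LinearMap.mem_ker, ← Module.End.mul_apply, ← (hA.pow_right n).eq, Module.End.mul_apply,
      LinearMap.mem_ker.1 hx, map_zero]
  rcases h.2 _ ⟨hker hφ, hker hσ,
    restrict_ker_nondegenerate hf hnd (isAdjointPair_pow hT n) hn.codisjoint⟩ with hbot | htop
  · refine .inr (Function.Injective.of_comp (f := ⇑(T ^ (n - 1))) ?_)
    rw [← Module.End.coe_mul, ← pow_succ, Nat.sub_add_cancel hn0]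
    exact LinearMap.ker_eq_bot.1 hbot
  · exact .inl ⟨n, LinearMap.ker_eq_top.1 htop⟩

section Skew

variable {f : LinearMap.BilinForm K V}

theorem apply_self_eq_zero_of_isAdjointPair_neg [NeZero (2 : K)] (hf : f.IsSymm) {G : End K V}
    (hG : LinearMap.IsAdjointPair f f G ⇑(-G)) (x : V) : f (G x) x = 0 := by
  have hneg : f (G x) x = -f (G x) x := by
    conv_lhs => rw [hG, LinearMap.neg_apply, map_neg, hf.eq]
  have htwo : (2 : K) * f (G x) x = 0 := by linear_combination hneg
  exact (mul_eq_zero.1 htwo).resolve_left two_ne_zero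

theorem comp_ne_zero_of_nondegenerate (hf : f.Nondegenerate) {E : End K V} (hE : E ≠ 0) :
    f ∘ₗ E ≠ 0 := fun h =>
  hE <| LinearMap.ext fun x => hf.1 _ fun y => LinearMap.congr_fun₂ h x y

end Skew

namespace ReversedIsometry

variable [NeZero (2 : K)] {f : LinearMap.BilinForm K V} {φ ψ σ : End K V}

theorem exists_apply_mem_span (h : ReversedIsometry f φ ψ σ) {E : End K V} (hE0 : E ≠ 0)
    (hE : LinearMap.IsAdjointPair f f E E) (hσE : Commute σ E) :
    ∃ x, σ x ∈ K ∙ x ∧ f (E x) x ≠ 0 := by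
  refine exists_apply_mem_span_of_isSymm (B := f ∘ₗ E) ⟨fun x y => ?_⟩
    (comp_ne_zero_of_nondegenerate h.nondegenerate hE0) h.involution fun x y => ?_
  · exact (hE x y).trans (h.isSymm.eq _ _)
  · have hσσ : σ (σ y) = y := LinearMap.congr_fun h.involution y
    have hcomm : E (σ x) = σ (E x) := LinearMap.congr_fun hσE.symm.eq x
    rw [LinearMap.comp_apply, LinearMap.comp_apply, hcomm, h.involution_isAdjointPair, hσσ]

theorem apply_sub_apply_eq_zero (h : ReversedIsometry f φ ψ σ) {x a b : V}
    (ha : a ∈ cycSub (φ + ψ) x) (hb : b ∈ cycSub (φ + ψ) x) : f ((φ - ψ) b) a = 0 := by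
  obtain ⟨s, rfl⟩ := mem_cycSub.1 ha
  obtain ⟨r, rfl⟩ := mem_cycSub.1 hb
  have hcomm := semiconjBy_aeval h.commute_sub_add
  have hadj := isAdjointPair_aeval h.add_isAdjointPair
  have hskew := h.sub_isAdjointPair.mul (hadj (s * r))
  rw [mul_neg, ← (hcomm _).eq] at hskew
  have hmul : aeval (φ + ψ) s * ((φ - ψ) * aeval (φ + ψ) r) =
      (φ - ψ) * aeval (φ + ψ) (s * r) := by
    rw [map_mul, ← mul_assoc, ← (hcomm s).eq, mul_assoc]
  rw [← hadj, ← Module.End.mul_apply, ← Module.End.mul_apply, mul_assoc, hmul]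
  exact apply_self_eq_zero_of_isAdjointPair_neg h.isSymm hskew x

theorem invt_cycSub_sup_map (h : ReversedIsometry f φ ψ σ) (x : V) :
    Invt φ (cycSub (φ + ψ) x ⊔ (cycSub (φ + ψ) x).map (φ - ψ)) := by
  set A := cycSub (φ + ψ) x
  have hA : Invt (φ + ψ) A := invt_cycSub
  have hadd : Invt (φ + ψ) (A ⊔ A.map (φ - ψ)) := hA.sup <| by
    rintro _ ⟨a, ha, rfl⟩
    exact ⟨_, hA a ha, LinearMap.congr_fun h.commute_sub_add.eq a⟩
  have hsub : Invt (φ - ψ) (A ⊔ A.map (φ - ψ)) := fun v hv => by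
    obtain ⟨a, ha, _, ⟨b, hb, rfl⟩, rfl⟩ := Submodule.mem_sup.1 hv
    rw [map_add, ← Module.End.mul_apply (φ - ψ) (φ - ψ), h.sub_mul_sub, add_comm]
    exact Submodule.add_mem_sup (hA.aeval _ b hb) ⟨a, ha, rfl⟩
  intro v hv
  have hφv : φ v = (2 : K)⁻¹ • ((φ + ψ) + (φ - ψ)) v := by
    rw [add_add_sub_cancel, ← two_smul K φ, LinearMap.smul_apply, inv_smul_smul₀ two_ne_zero]
  rw [hφv]
  exact Submodule.smul_mem _ _ (hadd.add hsub v hv)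

theorem restrict_cycSub_nondegenerate_of_injective_sub [FiniteDimensional K V]
    (h : ReversedIsometry f φ ψ σ)
    (hinj : Function.Injective (φ - ψ)) {x : V}
    (hnd : (f.restrict (cycSub (φ + ψ) x)).Nondegenerate) :
    (f.restrict (cycSub φ x)).Nondegenerate := by
  rw [restrict_nondegenerate_iff h.isSymm] at hnd ⊢
  have hφ : Invt φ (cycSub φ x) := invt_cycSub
  have hψ : Invt ψ (cycSub φ x) := hφ.of_mul_eq_one h.inv_mul
  have hle : cycSub (φ + ψ) x ≤ cycSub φ x := cycSub_le (hφ.add hψ) self_mem_cycSub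
  intro z hz hrad
  obtain ⟨a, ha, _, ⟨b, hb, rfl⟩, rfl⟩ := Submodule.mem_sup.1 <|
    cycSub_le (h.invt_cycSub_sup_map x) (Submodule.mem_sup_left self_mem_cycSub) hz
  have ha0 : a = 0 := hnd a ha fun v hv => by
    have := hrad v (hle hv)
    rwa [map_add, LinearMap.add_apply, h.apply_sub_apply_eq_zero hv hb, add_zero] at this
  rw [ha0, zero_add] at hrad ⊢
  refine hinj ((hnd _ ?_ fun v hv => ?_).trans (map_zero _).symm)
  · rw [← Module.End.mul_apply, h.sub_mul_sub]
    exact invt_cycSub.aeval _ b hb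
  · rw [h.sub_isAdjointPair, LinearMap.neg_apply, map_neg, hrad _ ((hφ.sub hψ) v (hle hv)),
      neg_zero]

theorem orthIndec_of_injective_sub [FiniteDimensional K V] (h : ReversedIsometry f φ ψ σ)
    (hind : OrthIndecPair f φ σ) (hinj : Function.Injective (φ - ψ)) : OrthIndec f φ := by
  have := hind.nontrivial
  obtain ⟨q, hq, hker⟩ := exists_irreducible_not_injective_aeval (φ + ψ)
  have hadj := isAdjointPair_aeval h.add_isAdjointPair q
  have hφ : Commute φ (aeval (φ + ψ) q) := semiconjBy_aeval h.commute_add q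
  have hσ : Commute σ (aeval (φ + ψ) q) := semiconjBy_aeval h.involution_commute_add q
  obtain ⟨n, hn, hn0⟩ := exists_pow_ne_zero_of_isNilpotent <|
    (hind.isNilpotent_or_injective h.isSymm h.nondegenerate hadj hφ hσ).resolve_right hker
  obtain ⟨x, hσx, hx⟩ := h.exists_apply_mem_span hn0 (isAdjointPair_pow hadj n) (hσ.pow_right n)
  have hx0 : x ≠ 0 := by rintro rfl; simp at hx
  exact h.orthIndec_of_cycSub_nondegenerate hind hx0 hσx <|
    h.restrict_cycSub_nondegenerate_of_injective_sub hinj <|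
      restrict_cycSub_nondegenerate h.isSymm h.add_isAdjointPair invt_cycSub hq hn hx

end ReversedIsometry

section Alternating

variable {B : LinearMap.BilinForm K V} {x y : V}

theorem plucker_of_isAlt (hB : B.IsAlt) (hspan : ∀ v, B v ∈ Submodule.span K {B x, B y})
    (p p' r r' : V) : B p p' * B r r' - B p r * B p' r' + B p r' * B p' r = 0 := by
  have hcoord (v : V) : ∃ a b : K, ∀ w, B v w = a * B x w + b * B y w := by
    obtain ⟨a, b, hab⟩ := Submodule.mem_span_pair.1 (hspan v)
    exact ⟨a, b, fun w => by simp [← hab]⟩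
  have hdet (v w : V) (a b c d : K) (hv : ∀ w, B v w = a * B x w + b * B y w)
      (hw : ∀ v, B w v = c * B x v + d * B y v) : B v w = (a * d - b * c) * B x y := by
    have hyx : B y x = -B x y := (hB.neg_eq x y).symm
    have hxx : B x x = 0 := hB x
    have hyy : B y y = 0 := hB y
    rw [hv, ← hB.neg_eq w x, ← hB.neg_eq w y, hw, hw, hyx, hxx, hyy]
    ring
  obtain ⟨a, b, hp⟩ := hcoord p
  obtain ⟨a', b', hp'⟩ := hcoord p'
  obtain ⟨c, d, hr⟩ := hcoord r
  obtain ⟨c', d', hr'⟩ := hcoord r'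
  rw [hdet _ _ _ _ _ _ hp hp', hdet _ _ _ _ _ _ hr hr', hdet _ _ _ _ _ _ hp hr,
    hdet _ _ _ _ _ _ hp' hr', hdet _ _ _ _ _ _ hp hr', hdet _ _ _ _ _ _ hp' hr]
  ring

theorem eq_zero_on_or_eq_zero_on_of_isAlt (hB : B.IsAlt)
    (hspan : ∀ v, B v ∈ Submodule.span K {B x, B y}) {P Q : Submodule K V}
    (hPQ : ∀ p ∈ P, ∀ r ∈ Q, B p r = 0) :
    (∀ p ∈ P, ∀ p' ∈ P, B p p' = 0) ∨ ∀ r ∈ Q, ∀ r' ∈ Q, B r r' = 0 := by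
  by_contra! ⟨⟨p, hp, p', -, hpp'⟩, r, hr, r', hr', hrr'⟩
  have := plucker_of_isAlt hB hspan p p' r r'
  rw [hPQ p hp r hr, hPQ p hp r' hr', zero_mul, zero_mul, sub_zero, add_zero] at this
  exact mul_ne_zero hpp' hrr' this

end Alternating

section Unipotent

theorem sub_one_pow_eq_neg_one_pow_mul {R : Type*} [Ring R] {u v : R} (huv : u * v = 1)
    (hvu : v * u = 1) {k : ℕ} (hk : (u - 1) ^ (k + 1) = 0) :
    (v - 1) ^ k = (-1) ^ k * (u - 1) ^ k := by
  have hfix : v * (u - 1) ^ k = (u - 1) ^ k := by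
    have hu : u * (u - 1) ^ k = (u - 1) ^ k := by
      rwa [pow_succ', sub_mul, one_mul, sub_eq_zero] at hk
    conv_lhs => rw [← hu, ← mul_assoc, hvu, one_mul]
  have hpow (j : ℕ) : v ^ j * (u - 1) ^ k = (u - 1) ^ k := by
    induction j with
    | zero => rw [pow_zero, one_mul]
    | succ j ih => rw [pow_succ, mul_assoc, hfix, ih]
  have hcomm : Commute v (u - 1) := Commute.sub_right (hvu.trans huv.symm) (Commute.one_right v)
  have hv : v - 1 = -(v * (u - 1)) := by rw [mul_sub, hvu, mul_one, neg_sub]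
  rw [hv, neg_pow, hcomm.mul_pow, hpow]

theorem exists_eq_smul_add_of_mem_cycSub {T : End K V} {x u : V} (hu : u ∈ cycSub T x) :
    ∃ a : K, ∃ w ∈ cycSub T x, u = a • x + (T - 1) w := by
  obtain ⟨p, rfl⟩ := mem_cycSub.1 hu
  obtain ⟨s, hs⟩ := X_sub_C_dvd_sub_C_eval (a := (1 : K)) (p := p)
  refine ⟨p.eval 1, aeval T s x, mem_cycSub.2 ⟨s, rfl⟩, ?_⟩
  have hp : p = C (p.eval 1) + (X - C 1) * s := by rw [← hs]; ring
  conv_lhs => rw [hp]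
  simp

theorem exists_eq_smul_add_smul_add_of_mem_sup_cycSub {T : End K V} {x y u : V}
    (hu : u ∈ cycSub T x ⊔ cycSub T y) :
    ∃ a b : K, ∃ w ∈ cycSub T x ⊔ cycSub T y, u = a • x + b • y + (T - 1) w := by
  obtain ⟨v, hv, v', hv', rfl⟩ := Submodule.mem_sup.1 hu
  obtain ⟨a, w, hw, rfl⟩ := exists_eq_smul_add_of_mem_cycSub hv
  obtain ⟨b, w', hw', rfl⟩ := exists_eq_smul_add_of_mem_cycSub hv'
  exact ⟨a, b, w + w', Submodule.add_mem_sup hw hw', by rw [map_add]; abel⟩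

end Unipotent

namespace ReversedIsometry

variable {f : LinearMap.BilinForm K V} {φ ψ σ : End K V} {k : ℕ}

theorem sub_one_isAdjointPair (h : ReversedIsometry f φ ψ σ) :
    LinearMap.IsAdjointPair f f ⇑(φ - 1) ⇑(ψ - 1) :=
  h.isAdjointPair.sub fun _ _ => rfl

theorem sub_one_pow_isAdjointPair (h : ReversedIsometry f φ ψ σ) (hk : (φ - 1) ^ (k + 1) = 0) :
    LinearMap.IsAdjointPair f f ⇑((φ - 1) ^ k) ⇑((-1) ^ k * (φ - 1) ^ k) := by
  rw [← sub_one_pow_eq_neg_one_pow_mul h.mul_inv h.inv_mul hk]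
  exact isAdjointPair_pow h.sub_one_isAdjointPair k

theorem commute_sub_one_pow_of_even (h : ReversedIsometry f φ ψ σ)
    (hk : (φ - 1) ^ (k + 1) = 0) (heven : Even k) : Commute σ ((φ - 1) ^ k) := by
  have := (h.semiconjBy.sub_right (SemiconjBy.one_right σ)).pow_right k
  rwa [sub_one_pow_eq_neg_one_pow_mul h.mul_inv h.inv_mul hk, heven.neg_one_pow, one_mul] at this

theorem orthIndec_of_even [NeZero (2 : K)] [FiniteDimensional K V] (h : ReversedIsometry f φ ψ σ)
    (hind : OrthIndecPair f φ σ) (hk : (φ - 1) ^ (k + 1) = 0) (hk0 : (φ - 1) ^ k ≠ 0)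
    (heven : Even k) : OrthIndec f φ := by
  have hadj := h.sub_one_pow_isAdjointPair hk
  rw [heven.neg_one_pow, one_mul] at hadj
  obtain ⟨x, hσx, hx⟩ :=
    h.exists_apply_mem_span hk0 hadj (h.commute_sub_one_pow_of_even hk heven)
  have hx0 : x ≠ 0 := by rintro rfl; simp at hx
  have haeval : aeval φ (X - C 1 : K[X]) = φ - 1 := by simp
  refine h.orthIndec_of_cycSub_nondegenerate hind hx0 hσx <|
    restrict_cycSub_nondegenerate h.isSymm h.isAdjointPair (invt_cycSub.of_mul_eq_one h.inv_mul)
      (irreducible_X_sub_C 1) (n := k) ?_ ?_ <;> rwa [haeval]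

theorem eq_bot_of_le_range_sub_one (h : ReversedIsometry f φ ψ σ) (hnil : IsNilpotent (φ - 1))
    {P : Submodule K V} (hP : Invt φ P) (hnd : (f.restrict P).Nondegenerate)
    (hle : P ≤ LinearMap.range (φ - 1)) : P = ⊥ := by
  have hker (z : V) (hz : z ∈ P) (hNz : (φ - 1) z = 0) : z = 0 := by
    refine (restrict_nondegenerate_iff h.isSymm).1 hnd z hz fun v hv => ?_
    obtain ⟨w, rfl⟩ := hle hv
    have hφz : φ z = z := sub_eq_zero.1 hNz
    have hψz : ψ z = z := by conv_lhs => rw [← hφz, ← Module.End.mul_apply, h.inv_mul,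
      Module.End.one_apply]
    rw [← isAdjointPair_swap h.isSymm h.sub_one_isAdjointPair, LinearMap.sub_apply, hψz,
      Module.End.one_apply, sub_self, map_zero, LinearMap.zero_apply]
  have hN : Invt (φ - 1) P := hP.sub fun _ hx => hx
  have hpow (j : ℕ) (z : V) (hz : z ∈ P) (hj : ((φ - 1) ^ j) z = 0) : z = 0 := by
    induction j with
    | zero => exact hj
    | succ j ih =>
      refine ih (hker _ (hN.pow j z hz) ?_)
      rwa [pow_succ', Module.End.mul_apply] at hj
  obtain ⟨j, hj⟩ := hnil
  exact (Submodule.eq_bot_iff P).2 fun z hz => hpow j z hz (by rw [hj, LinearMap.zero_apply])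

end ReversedIsometry

section AlternatingPower

variable {f : LinearMap.BilinForm K V} {T : End K V} {k : ℕ} {x y : V}

theorem comp_pow_apply_smul_add_smul_add {N : End K V} (hk : N ^ (k + 1) = 0) (a b : K)
    (x y w : V) :
    (f ∘ₗ N ^ k) (a • x + b • y + N w) = a • (f ∘ₗ N ^ k) x + b • (f ∘ₗ N ^ k) y := by
  have hw : (N ^ k) (N w) = 0 := by
    rw [← Module.End.mul_apply, ← pow_succ, hk, LinearMap.zero_apply]
  simp [hw]

theorem mem_map_sub_one_of_apply_pow_eq_zero (hk : (T - 1) ^ (k + 1) = 0)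
    (halt : LinearMap.BilinForm.IsAlt (f ∘ₗ (T - 1) ^ k)) (hxy : f (((T - 1) ^ k) x) y ≠ 0)
    {u : V} (hu : u ∈ cycSub T x ⊔ cycSub T y) (hux : f (((T - 1) ^ k) u) x = 0)
    (huy : f (((T - 1) ^ k) u) y = 0) : u ∈ (cycSub T x ⊔ cycSub T y).map (T - 1) := by
  obtain ⟨a, b, w, hw, rfl⟩ := exists_eq_smul_add_smul_add_of_mem_sup_cycSub hu
  have hcoord (v : V) : f (((T - 1) ^ k) (a • x + b • y + (T - 1) w)) v =
      a * f (((T - 1) ^ k) x) v + b * f (((T - 1) ^ k) y) v :=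
    LinearMap.congr_fun (comp_pow_apply_smul_add_smul_add hk a b x y w) v
  have hxx : f (((T - 1) ^ k) x) x = 0 := halt x
  have hyy : f (((T - 1) ^ k) y) y = 0 := halt y
  have hyx : f (((T - 1) ^ k) y) x = -f (((T - 1) ^ k) x) y := (halt.neg_eq x y).symm
  have ha : a = 0 := by
    rw [hcoord, hyy, mul_zero, add_zero] at huy
    exact (mul_eq_zero.1 huy).resolve_right hxy
  have hb : b = 0 := by
    rw [hcoord, hxx, mul_zero, zero_add, hyx] at hux
    exact (mul_eq_zero.1 hux).resolve_right (neg_ne_zero.2 hxy)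
  exact ⟨w, hw, by rw [ha, hb, zero_smul, zero_smul, add_zero, zero_add]⟩

end AlternatingPower

namespace ReversedIsometry

section Odd

variable {f : LinearMap.BilinForm K V} {φ ψ σ : End K V} {k : ℕ} {x y : V}

theorem isAlt_comp_sub_one_pow [NeZero (2 : K)] (h : ReversedIsometry f φ ψ σ)
    (hk : (φ - 1) ^ (k + 1) = 0) (hodd : Odd k) :
    LinearMap.BilinForm.IsAlt (f ∘ₗ (φ - 1) ^ k) := by
  have hadj := h.sub_one_pow_isAdjointPair hk
  rw [hodd.neg_one_pow, neg_one_mul] at hadj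
  exact apply_self_eq_zero_of_isAdjointPair_neg h.isSymm hadj

theorem eq_bot_of_apply_sub_one_pow_eq_zero (h : ReversedIsometry f φ ψ σ)
    (hk : (φ - 1) ^ (k + 1) = 0) (halt : LinearMap.BilinForm.IsAlt (f ∘ₗ (φ - 1) ^ k))
    (hxy : f (((φ - 1) ^ k) x) y ≠ 0) (htop : cycSub φ x ⊔ cycSub φ y = ⊤)
    {P : Submodule K V} (hP : Invt φ P) (hnd : (f.restrict P).Nondegenerate)
    (hzero : ∀ p ∈ P, ∀ p' ∈ P, f (((φ - 1) ^ k) p) p' = 0) : P = ⊥ := by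
  refine h.eq_bot_of_le_range_sub_one ⟨k + 1, hk⟩ hP hnd fun p hp => ?_
  have hN : Invt (φ - 1) P := hP.sub fun _ hv => hv
  have hEp : ((φ - 1) ^ k) p = 0 :=
    (restrict_nondegenerate_iff h.isSymm).1 hnd _ (hN.pow k p hp) (hzero p hp)
  exact LinearMap.map_le_range <| mem_map_sub_one_of_apply_pow_eq_zero hk halt hxy
    (htop ▸ Submodule.mem_top) (by simp [hEp]) (by simp [hEp])

variable [FiniteDimensional K V]

theorem restrict_sup_cycSub_nondegenerate (h : ReversedIsometry f φ ψ σ)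
    (hk : (φ - 1) ^ (k + 1) = 0) (halt : LinearMap.BilinForm.IsAlt (f ∘ₗ (φ - 1) ^ k))
    (hxy : f (((φ - 1) ^ k) x) y ≠ 0) :
    (f.restrict (cycSub φ x ⊔ cycSub φ y)).Nondegenerate := by
  have hψ : Invt ψ (cycSub φ x ⊔ cycSub φ y) :=
    (invt_cycSub.sup invt_cycSub).of_mul_eq_one h.inv_mul
  refine restrict_nondegenerate_of_pow_succ_eq_zero h.isSymm h.sub_one_isAdjointPair
    (hψ.sub fun _ hv => hv) hk fun u hu horth => ?_
  exact mem_map_sub_one_of_apply_pow_eq_zero hk halt hxy hu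
    (horth x (Submodule.mem_sup_left self_mem_cycSub))
    (horth y (Submodule.mem_sup_right self_mem_cycSub))

theorem orthIndec_of_sup_cycSub_eq_top (h : ReversedIsometry f φ ψ σ)
    (hne : (⊥ : Submodule K V) ≠ ⊤) (hk : (φ - 1) ^ (k + 1) = 0)
    (halt : LinearMap.BilinForm.IsAlt (f ∘ₗ (φ - 1) ^ k)) (hxy : f (((φ - 1) ^ k) x) y ≠ 0)
    (htop : cycSub φ x ⊔ cycSub φ y = ⊤) : OrthIndec f φ := by
  refine ⟨hne, fun P hP hnd => ?_⟩
  have hspan (v : V) : (f ∘ₗ (φ - 1) ^ k) v ∈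
      Submodule.span K {(f ∘ₗ (φ - 1) ^ k) x, (f ∘ₗ (φ - 1) ^ k) y} := by
    obtain ⟨a, b, w, -, rfl⟩ :=
      exists_eq_smul_add_smul_add_of_mem_sup_cycSub (htop ▸ Submodule.mem_top : v ∈ _)
    exact Submodule.mem_span_pair.2 ⟨a, b, (comp_pow_apply_smul_add_smul_add hk a b x y w).symm⟩
  have hN : Invt (φ - 1) P := hP.sub fun _ hv => hv
  rcases eq_zero_on_or_eq_zero_on_of_isAlt halt hspan (P := P) (Q := f.orthogonal P)
    fun p hp r hr => hr _ (hN.pow k p hp) with hPzero | hQzero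
  · exact .inl (h.eq_bot_of_apply_sub_one_pow_eq_zero hk halt hxy htop hP hnd hPzero)
  · refine .inr (f.eq_top_of_restrict_nondegenerate_of_orthogonal_eq_bot h.isSymm.isRefl hnd ?_)
    exact h.eq_bot_of_apply_sub_one_pow_eq_zero hk halt hxy htop (h.orthogonal_invt hP)
      (restrict_orthogonal_nondegenerate h.isSymm h.nondegenerate hnd) hQzero

theorem orthIndec_of_odd [NeZero (2 : K)] (h : ReversedIsometry f φ ψ σ)
    (hind : OrthIndecPair f φ σ) (hk : (φ - 1) ^ (k + 1) = 0) (hk0 : (φ - 1) ^ k ≠ 0)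
    (hodd : Odd k) : OrthIndec f φ := by
  have halt := h.isAlt_comp_sub_one_pow hk hodd
  obtain ⟨x, y, hσx, hσy, hxy⟩ :=
    exists_apply_mem_span_pair (comp_ne_zero_of_nondegenerate h.nondegenerate hk0) h.involution
  have hσ {z : V} (hz : σ z ∈ K ∙ z) : Invt σ (cycSub φ z) :=
    h.cycSub_invt_involution ((Submodule.span_singleton_le_iff_mem _ _).2 self_mem_cycSub hz)
  have hx0 : x ≠ 0 := by rintro rfl; simp at hxy
  refine h.orthIndec_of_sup_cycSub_eq_top hind.1 hk halt hxy <|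
    (hind.2 _ ⟨invt_cycSub.sup invt_cycSub, (hσ hσx).sup (hσ hσy),
      h.restrict_sup_cycSub_nondegenerate hk halt hxy⟩).resolve_left fun hbot => hx0 ?_
  exact (Submodule.mem_bot K).1 (hbot ▸ Submodule.mem_sup_left self_mem_cycSub)

end Odd

section Main

variable [NeZero (2 : K)] [FiniteDimensional K V] {f : LinearMap.BilinForm K V} {φ ψ σ : End K V}

theorem orthIndec_of_isNilpotent_sub_one (h : ReversedIsometry f φ ψ σ)
    (hind : OrthIndecPair f φ σ) (hnil : IsNilpotent (φ - 1)) : OrthIndec f φ := by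
  have := hind.nontrivial
  obtain ⟨k, hk, hk0⟩ := exists_pow_ne_zero_of_isNilpotent hnil
  exact (Nat.even_or_odd k).elim (h.orthIndec_of_even hind hk hk0) (h.orthIndec_of_odd hind hk hk0)

theorem orthIndec_of_not_injective_add_sub_two (h : ReversedIsometry f φ ψ σ)
    (hind : OrthIndecPair f φ σ) (hker : ¬Function.Injective ⇑(φ + ψ - 2)) : OrthIndec f φ := by
  have haeval : aeval (φ + ψ) (X - 2 : K[X]) = φ + ψ - 2 := by
    rw [map_sub, aeval_X, map_ofNat]
  have hφ : Commute φ (aeval (φ + ψ) (X - 2 : K[X])) := semiconjBy_aeval h.commute_add _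
  have hσ : Commute σ (aeval (φ + ψ) (X - 2 : K[X])) := semiconjBy_aeval h.involution_commute_add _
  have hadj := isAdjointPair_aeval h.add_isAdjointPair (X - 2)
  rw [haeval] at hφ hσ hadj
  have hnil : IsNilpotent (φ + ψ - 2) :=
    (hind.isNilpotent_or_injective h.isSymm h.nondegenerate hadj hφ hσ).resolve_right hker
  have hsq : (φ - 1) ^ 2 = φ * (φ + ψ - 2) := by
    rw [sq, mul_sub φ, mul_add, h.mul_inv, mul_two]
    noncomm_ring
  refine h.orthIndec_of_isNilpotent_sub_one hind ?_
  refine IsNilpotent.of_pow (m := 2) ?_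
  rw [hsq]
  exact hφ.isNilpotent_mul_left hnil

theorem orthIndec (h : ReversedIsometry f φ ψ σ) (hind : OrthIndecPair f φ σ) :
    OrthIndec f φ := by
  by_cases hinj : Function.Injective (φ - ψ)
  · exact h.orthIndec_of_injective_sub hind hinj
  by_cases hsub : Function.Injective ⇑(φ + ψ - 2)
  · have hneg : ¬Function.Injective ⇑(-φ + -ψ - 2) := fun hadd => hinj <| by
      refine Function.Injective.of_comp (f := ⇑(φ - ψ)) ?_
      have hmul : (φ - ψ) * (φ - ψ) = -((φ + ψ - 2) * (-φ + -ψ - 2)) := by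
        rw [h.sub_mul_sub, show (X ^ 2 - 4 : K[X]) = -((X - 2) * (-X - 2)) by ring]
        simp only [map_neg, map_mul, map_sub, aeval_X, map_ofNat, neg_add]
      rw [← Module.End.coe_mul, hmul]
      exact neg_injective.comp (hsub.comp hadd)
    exact orthIndec_neg_iff.1 <|
      h.neg.orthIndec_of_not_injective_add_sub_two (orthIndecPair_neg_iff.2 hind) hneg
  · exact h.orthIndec_of_not_injective_add_sub_two hind hsub

end Main

end ReversedIsometry

theorem exists_orthogonal_decomposition_minimal [FiniteDimensional K V]
    {f : LinearMap.BilinForm K V} (hf : f.IsSymm) {p : Submodule K V → Prop}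
    (hnd : ∀ U, p U → (f.restrict U).Nondegenerate)
    (hinf : ∀ A U, p A → p U → A ≤ U → p (U ⊓ f.orthogonal A)) {U : Submodule K V} (hU : p U) :
    ∃ (m : ℕ) (F : Fin m → Submodule K V),
      (∀ i j, i ≠ j → ∀ x ∈ F i, ∀ y ∈ F j, f x y = 0) ∧ (⨆ i, F i) = U ∧
        ∀ i, Minimal (fun A => p A ∧ A ≠ ⊥) (F i) := by
  induction U using WellFoundedLT.induction with | _ U ih
  rcases eq_or_ne U ⊥ with rfl | hU0
  · exact ⟨0, Fin.elim0, fun i => i.elim0, iSup_of_empty _, fun i => i.elim0⟩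
  obtain ⟨A, hAU, hA⟩ := exists_minimal_le_of_wellFoundedLT
    (fun A => p A ∧ A ≠ ⊥) U ⟨hU, hU0⟩
  have hc := f.isCompl_orthogonal_of_restrict_nondegenerate hf.isRefl (hnd A hA.prop.1)
  have hlt : U ⊓ f.orthogonal A < U := by
    refine inf_le_left.lt_of_ne fun heq => hA.prop.2 ?_
    exact hc.disjoint.eq_bot_of_le (hAU.trans (inf_eq_left.1 heq))
  obtain ⟨m, F, horth, hsup, hmin⟩ := ih _ hlt (hinf A U hA.prop.1 hU hAU)
  have hF (i : Fin m) : F i ≤ f.orthogonal A := (hsup ▸ le_iSup F i).trans inf_le_right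
  refine ⟨m + 1, Fin.cons A F, ?_, ?_, ?_⟩
  · refine Fin.forall_fin_succ.2 ⟨Fin.forall_fin_succ.2 ⟨fun h => absurd rfl h, ?_⟩, fun i =>
      Fin.forall_fin_succ.2 ⟨?_, fun j hij => horth i j (by simpa using hij)⟩⟩
    · exact fun j _ x hx y hy => hF j hy x hx
    · exact fun _ x hx y hy => hf.isRefl _ _ (hF i hx y hy)
  · rw [iSup, Fin.range_cons, sSup_insert, ← iSup, hsup, inf_comm, ← sup_inf_assoc_of_le _ hAU,
      hc.sup_eq_top, top_inf_eq]
  · exact Fin.forall_fin_succ.2 ⟨hA, hmin⟩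

theorem orthIndecPair_restrict_of_minimal {f : LinearMap.BilinForm K V} (hf : f.IsSymm)
    {φ σ : End K V} {A : Submodule K V} (hφ : Invt φ A) (hσ : Invt σ A)
    (hA : Minimal (fun A => IsReducing f φ σ A ∧ A ≠ ⊥) A) :
    OrthIndecPair (f.restrict A) (LinearMap.restrict φ hφ) (LinearMap.restrict σ hσ) := by
  have hmap {T : End K V} {hT : Invt T A} {W : Submodule K A}
      (hW : Invt (LinearMap.restrict T hT) W) : Invt T (W.map A.subtype) := by
    rintro _ ⟨w, hw, rfl⟩
    exact ⟨_, hW w hw, rfl⟩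
  refine ⟨fun hbot => hA.prop.2 ?_, fun W hW => or_iff_not_imp_left.2 fun hW0 => ?_⟩
  · rw [← A.map_subtype_top, ← hbot, Submodule.map_bot]
  have hinj := Submodule.map_injective_of_injective A.subtype_injective
  have hAW : A ≤ W.map A.subtype := hA.le_of_le
    ⟨⟨hmap hW.1, hmap hW.2.1, restrict_map_subtype_nondegenerate hf hW.2.2⟩,
      (hinj.ne_iff' (Submodule.map_bot _)).2 hW0⟩
    (A.map_subtype_le W)
  exact hinj (((A.map_subtype_le W).antisymm hAW).trans A.map_subtype_top.symm)

namespace ReversedIsometry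

variable {f : LinearMap.BilinForm K V} {φ ψ σ : End K V}

theorem isReducing_top (h : ReversedIsometry f φ ψ σ) : IsReducing f φ σ ⊤ :=
  ⟨fun _ _ => trivial, fun _ _ => trivial, restrict_top_nondegenerate h.isSymm h.nondegenerate⟩

variable [FiniteDimensional K V]

theorem isReducing_inf_orthogonal (h : ReversedIsometry f φ ψ σ) {A U : Submodule K V}
    (hA : IsReducing f φ σ A) (hU : IsReducing f φ σ U) (hAU : A ≤ U) :
    IsReducing f φ σ (U ⊓ f.orthogonal A) :=
  ⟨hU.1.inf (h.orthogonal_invt hA.1), hU.2.1.inf (hA.2.1.orthogonal h.involution_isAdjointPair),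
    restrict_inf_orthogonal_nondegenerate h.isSymm hA.2.2 hU.2.2 hAU⟩

theorem orthIndec_restrict_of_minimal [NeZero (2 : K)] (h : ReversedIsometry f φ ψ σ)
    {A : Submodule K V} (hA : Minimal (fun A => IsReducing f φ σ A ∧ A ≠ ⊥) A) (hφ : Invt φ A) :
    OrthIndec (f.restrict A) (LinearMap.restrict φ hφ) := by
  obtain ⟨-, hσ, hnd⟩ := hA.prop.1
  exact (h.restrict hnd hφ (hφ.of_mul_eq_one h.inv_mul) hσ).orthIndec
    (orthIndecPair_restrict_of_minimal h.isSymm hφ hσ hA)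

end ReversedIsometry

theorem reversedIsometry_of_mem_orthGroup {f : LinearMap.BilinForm K V} (hsymm : f.IsSymm)
    (hnd : f.Nondegenerate) {φ σ : V ≃ₗ[K] V} (hφ : φ ∈ orthGroup f) (hσ : σ ∈ orthGroup f)
    (hσ2 : σ ^ 2 = 1) (hrev : σ * φ * σ⁻¹ = φ⁻¹) :
    ReversedIsometry f (φ : V →ₗ[K] V) (φ.symm : V →ₗ[K] V) (σ : V →ₗ[K] V) where
  isSymm := hsymm
  nondegenerate := hnd
  mul_inv := LinearMap.ext φ.apply_symm_apply
  inv_mul := LinearMap.ext φ.symm_apply_apply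
  isAdjointPair := fun x y => by simpa using hφ x (φ.symm y)
  involution := LinearMap.ext fun x => LinearEquiv.congr_fun ((sq σ).symm.trans hσ2) x
  involution_isAdjointPair := fun x y => by
    have hy : σ (σ y) = y := LinearEquiv.congr_fun ((sq σ).symm.trans hσ2) y
    simpa [hy] using hσ x (σ y)
  semiconjBy := LinearMap.ext fun x =>
    LinearEquiv.congr_fun (mul_inv_eq_iff_eq_mul.1 hrev) x

/-- If `φ ∈ O(V)` is reversed by an involution `σ ∈ O(V)`, then `V` is an
orthogonal sum of `φ`- and `σ`-invariant nondegenerate subspaces on each of which `φ` is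
orthogonally indecomposable. -/
theorem stmt12 [FiniteDimensional K V] (hK : ringChar K ≠ 2)
    (f : LinearMap.BilinForm K V) (hsymm : f.IsSymm) (hnd : f.Nondegenerate)
    (φ σ : V ≃ₗ[K] V) (hφ : φ ∈ orthGroup f) (hσ : σ ∈ orthGroup f)
    (hσ2 : σ ^ 2 = 1) (hrev : σ * φ * σ⁻¹ = φ⁻¹) :
    ∃ (m : ℕ) (U : Fin m → Submodule K V),
      (∀ i j, i ≠ j → ∀ x ∈ U i, ∀ y ∈ U j, f x y = 0) ∧
      (⨆ i, U i) = ⊤ ∧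
      ∀ i, ∃ hUi : Invt (φ : V →ₗ[K] V) (U i),
        Invt (σ : V →ₗ[K] V) (U i) ∧ (f.restrict (U i)).Nondegenerate ∧
        OrthIndec (f.restrict (U i)) ((φ : V →ₗ[K] V).restrict hUi) := by
  have : NeZero (2 : K) := ⟨Ring.two_ne_zero hK⟩
  have h := reversedIsometry_of_mem_orthGroup hsymm hnd hφ hσ hσ2 hrev
  obtain ⟨m, U, horth, hsup, hmin⟩ := exists_orthogonal_decomposition_minimal hsymm
    (p := IsReducing f (φ : V →ₗ[K] V) (σ : V →ₗ[K] V)) (fun _ hU => hU.2.2)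
    (fun _ _ => h.isReducing_inf_orthogonal) h.isReducing_top
  refine ⟨m, U, horth, hsup, fun i => ?_⟩
  obtain ⟨hφU, hσU, hndU⟩ := (hmin i).prop.1
  exact ⟨hφU, hσU, hndU, h.orthIndec_restrict_of_minimal (hmin i) hφU⟩

end Biref
end

section
/- Let (V, f) be a finite-dimensional nondegenerate symmetric bilinear space over a field K with char K ≠ 2, and let φ ∈ O(V) be cyclic (V is a cyclic K[x]-module, x acting as φ) with minimal polynomial (x − 1)^{2m+1}. Suppose φ = στ with σ, τ involutions in O(V). Then: (1) dim Bahn(σ) = dim Bahn(τ) ∈ {m, m+1}; (2) either Bahn(σ) and Bahn(τ) are both hyperbolic subspaces, or Fix(σ) and Fix(τ) are both hyperbolic subspaces; (3) disc Bahn(σ) = disc Bahn(τ), and this common class in K*/(K*)² lies in {(−1)^t, (−1)^t · disc V}, where t = ⌊(m+1)/2⌋. -/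
open Polynomial Module

namespace Biref

variable {K V : Type*} [Field K] [AddCommGroup V] [Module K V]

/-!
For involutions `S`, `T` with product `φ = S T`, the commutator `η = S T - T S = φ - φ⁻¹` is
skew-adjoint and anticommutes with `S` and with `T`. It equals `(φ - 1) (1 + φ⁻¹)` with `1 + φ⁻¹`
invertible, so it is nilpotent with a single Jordan block of size `2m + 1`. Hence an eigenvector `v`
of `S` with `η ^ (2m) v ≠ 0` generates a basis `η ^ i v` consisting of eigenvectors of `S` with
alternating eigenvalues `± 1`. Its Gram matrix is antitriangular with antidiagonal `± c`, where
`c = f v (η ^ (2m) v)` represents `disc V`, so dimensions, discriminants and totally isotropic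
subspaces of `Bahn S` and `Fix S` are read off every second basis vector. The same holds for `T`,
with an eigenvector of the same sign because `η ^ (2m) S = η ^ (2m) T`.
-/

section AntitriangularDet

variable {R : Type*} [CommRing R]

theorem neg_one_pow_mul_neg_one_pow_half (n : ℕ) :
    (-1 : R) ^ n * (-1) ^ (n / 2) = (-1) ^ ((n + 1) / 2) := by
  obtain ⟨k, rfl | rfl⟩ := n.even_or_odd' <;> rw [← pow_add] <;>
    exact neg_one_pow_congr (by grind)

theorem prod_neg_one_pow_fin (n : ℕ) : ∏ i : Fin n, (-1 : R) ^ (i : ℕ) = (-1) ^ (n / 2) := by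
  induction n with
  | zero => simp
  | succ n ih =>
    rw [Fin.prod_univ_castSucc, ← neg_one_pow_mul_neg_one_pow_half, mul_comm]
    exact congrArg _ ih

theorem det_eq_of_antitriangular {d : ℕ} (M : Matrix (Fin d) (Fin d) R)
    (hM : ∀ i j : Fin d, d ≤ (i : ℕ) + j → M i j = 0) :
    M.det = (-1) ^ (d / 2) * ∏ i, M i i.rev := by
  induction d with
  | zero => simp
  | succ n ih =>
    have hminor := ih (M.submatrix Fin.castSucc Fin.succ) fun i j hij ↦
      hM _ _ (by simp only [Fin.val_castSucc, Fin.val_succ]; omega)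
    rw [Matrix.det_succ_row M (Fin.last n), Finset.sum_eq_single 0]
    · rw [Fin.succAbove_last, Fin.succAbove_zero, hminor, Fin.prod_univ_castSucc,
        ← neg_one_pow_mul_neg_one_pow_half]
      have hprod : ∏ i, M.submatrix Fin.castSucc Fin.succ i i.rev =
          ∏ i : Fin n, M i.castSucc i.castSucc.rev :=
        Finset.prod_congr rfl fun i _ ↦ by rw [Matrix.submatrix_apply, Fin.rev_castSucc]
      rw [hprod, Fin.rev_last, Fin.val_last, Fin.val_zero, add_zero]
      ring
    · intro j _ hj
      have hj0 : (j : ℕ) ≠ 0 := fun h ↦ hj (Fin.ext h)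
      rw [hM (Fin.last n) j (by simp only [Fin.val_last]; omega), mul_zero, zero_mul]
    · simp

end AntitriangularDet

section Discriminant

variable {f : LinearMap.BilinForm K V} {d e : K}

theorem HasDisc.of_mul_sq {s : K} (h : HasDisc f (d * s ^ 2)) (hs : s ≠ 0) : HasDisc f d := by
  obtain ⟨b, c, hb⟩ := h
  exact ⟨b, Units.mk0 s hs * c, by rw [hb, Units.val_mul, Units.val_mk0]; ring⟩

theorem HasDisc.or_of_mul_pow {n : ℕ} (h : HasDisc f (d * e ^ n)) (he : e ≠ 0) :
    HasDisc f d ∨ HasDisc f (d * e) := by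
  obtain ⟨k, rfl | rfl⟩ := n.even_or_odd'
  · rw [pow_mul'] at h
    exact .inl (h.of_mul_sq (pow_ne_zero k he))
  · rw [pow_succ', pow_mul', ← mul_assoc] at h
    exact .inr (h.of_mul_sq (pow_ne_zero k he))

theorem HasDisc.exists_eq_mul_sq (hd : HasDisc f d) (he : HasDisc f e) :
    ∃ s : K, s ≠ 0 ∧ d = e * s ^ 2 := by
  obtain ⟨b, c, hb⟩ := hd
  obtain ⟨b', c', hb'⟩ := he
  have hP : (b'.toMatrix b).det ≠ 0 := by
    simpa only [Basis.det_apply] using (b'.isUnit_det b).ne_zero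
  have hgram := congrArg Matrix.det (LinearMap.BilinForm.toMatrix_mul_basis_toMatrix b' b f)
  have hcongr : e * c' ^ 2 * (b'.toMatrix b).det ^ 2 = d * c ^ 2 := by
    have htoMatrix (b : Basis (Fin (finrank K V)) K V) :
        LinearMap.BilinForm.toMatrix b f = Matrix.of fun i j ↦ f (b i) (b j) := by
      ext; simp
    rw [Matrix.det_mul, Matrix.det_mul, Matrix.det_transpose, htoMatrix, htoMatrix, hb,
      hb'] at hgram
    linear_combination hgram
  refine ⟨(b'.toMatrix b).det * c' / c, by simp [hP], ?_⟩
  field_simp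
  linear_combination -hcongr

theorem hasDisc_iff_of_common_disc {V' : Type*} [AddCommGroup V'] [Module K V']
    {f' : LinearMap.BilinForm K V'} (h : HasDisc f e) (h' : HasDisc f' e) :
    HasDisc f d ↔ HasDisc f' d := by
  constructor <;> intro hd
  · obtain ⟨s, hs, rfl⟩ := h.exists_eq_mul_sq hd
    exact h'.of_mul_sq hs
  · obtain ⟨s, hs, rfl⟩ := h'.exists_eq_mul_sq hd
    exact h.of_mul_sq hs

theorem hasDisc_of_antitriangular [FiniteDimensional K V] {n : ℕ} {u : Fin n → V}
    (hu : LinearIndependent K u) (hn : finrank K V = n)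
    (hzero : ∀ i j : Fin n, n ≤ (i : ℕ) + j → f (u i) (u j) = 0) :
    HasDisc f ((-1) ^ (n / 2) * ∏ i, f (u i) (u i.rev)) := by
  subst hn
  refine ⟨basisOfLinearIndependentOfCardEqFinrank' u hu (by simp), 1, ?_⟩
  rw [coe_basisOfLinearIndependentOfCardEqFinrank',
    det_eq_of_antitriangular (Matrix.of fun i j ↦ f (u i) (u j)) hzero]
  simp

theorem isHyperbolicSpace_of_antitriangular {k : ℕ} {u : Fin (k + k) → V}
    (hu : LinearIndependent K u) (hk : finrank K V = k + k)
    (hzero : ∀ i j : Fin (k + k), k + k ≤ (i : ℕ) + j → f (u i) (u j) = 0) :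
    IsHyperbolicSpace f := by
  refine ⟨Submodule.span K (Set.range (u ∘ Fin.natAdd k)), fun x hx y hy ↦ ?_, ?_⟩
  · induction hx, hy using Submodule.span_induction₂ with
    | mem_mem x y hx hy =>
      obtain ⟨i, rfl⟩ := hx
      obtain ⟨j, rfl⟩ := hy
      exact hzero _ _ (by simp only [Fin.val_natAdd]; omega)
    | zero_left | zero_right => simp
    | add_left _ _ _ _ _ _ hx hy | add_right _ _ _ _ _ _ hx hy => simp [hx, hy]
    | smul_left _ _ _ _ _ h | smul_right _ _ _ _ _ h => simp [h]
  · rw [finrank_span_eq_card (hu.comp _ (Fin.natAdd_injective k k)), hk, Fintype.card_fin, two_mul]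

end Discriminant

section CyclicEndomorphism

theorem finrank_eq_natDegree_minpoly [FiniteDimensional K V] {φ : Module.End K V}
    (hφ : IsCyclicEnd φ) : finrank K V = (minpoly K φ).natDegree := by
  refine le_antisymm ?_ ?_
  · obtain ⟨v, hv⟩ := hφ
    have hspan : Submodule.span K (Set.range fun i : Fin (minpoly K φ).natDegree ↦
        (φ ^ (i : ℕ)) v) = ⊤ := by
      rw [eq_top_iff, ← hv, cycSub, Submodule.span_le]
      rintro _ ⟨n, rfl⟩
      have hpow := (Algebra.IsIntegral.isIntegral (R := K) φ).mem_span_pow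
        ⟨X ^ n, by simp⟩ (y := φ ^ n)
      have := Submodule.mem_map_of_mem (f := LinearMap.applyₗ v) hpow
      rwa [Submodule.map_span, ← Set.range_comp] at this
    have hcard := finrank_range_le_card (R := K)
      fun i : Fin (minpoly K φ).natDegree ↦ (φ ^ (i : ℕ)) v
    rwa [Set.finrank, hspan, finrank_top, Fintype.card_fin] at hcard
  · rw [← LinearMap.charpoly_natDegree φ]
    exact natDegree_le_of_dvd φ.minpoly_dvd_charpoly φ.charpoly_monic.ne_zero

theorem sub_one_pow_eq_zero_of_minpoly {A : Type*} [Ring A] [Algebra K A] {a : A} {n : ℕ}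
    (h : minpoly K a = (X - 1) ^ n) : (a - 1) ^ n = 0 := by
  simpa [h] using minpoly.aeval K a

theorem sub_one_pow_ne_zero_of_minpoly {A : Type*} [Ring A] [Algebra K A] {a : A} {n : ℕ}
    (h : minpoly K a = (X - 1) ^ (n + 1)) : (a - 1) ^ n ≠ 0 := fun h0 ↦ by
  have hmonic : (X - 1 : K[X]).Monic := by simpa using monic_X_sub_C (1 : K)
  have hdvd : (X - 1 : K[X]) ^ (n + 1) ∣ (X - 1) ^ n := h ▸ minpoly.dvd K a (by simpa using h0)
  have hdeg := natDegree_le_of_dvd hdvd (hmonic.pow n).ne_zero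
  have hone : (X - 1 : K[X]).natDegree = 1 := by simpa using natDegree_X_sub_C (1 : K)
  rw [hmonic.natDegree_pow, hmonic.natDegree_pow, hone] at hdeg
  omega

theorem linearIndependent_pow_apply {η : Module.End K V} {n : ℕ} {v : V}
    (hzero : (η ^ (n + 1)) v = 0) (hne : (η ^ n) v ≠ 0) :
    LinearIndependent K fun i : Fin (n + 1) ↦ (η ^ (i : ℕ)) v := by
  induction n generalizing v with
  | zero => simpa using hne
  | succ n ih =>
    have htail : Fin.tail (fun i : Fin (n + 2) ↦ (η ^ (i : ℕ)) v) =
        fun i : Fin (n + 1) ↦ (η ^ (i : ℕ)) (η v) := by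
      ext i; simp [Fin.tail, pow_succ]
    rw [linearIndependent_finSucc, htail]
    refine ⟨ih (by simpa [pow_succ] using hzero) (by simpa [pow_succ] using hne), fun hmem ↦ hne ?_⟩
    have hker : Submodule.span K (Set.range fun i : Fin (n + 1) ↦ (η ^ (i : ℕ)) (η v)) ≤
        LinearMap.ker (η ^ (n + 1)) := by
      rw [Submodule.span_le]
      rintro _ ⟨i, rfl⟩
      change (η ^ (n + 1)) ((η ^ (i : ℕ)) (η v)) = 0
      rw [← Module.End.mul_apply, (Commute.pow_pow_self η _ _).eq, Module.End.mul_apply,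
        ← Module.End.mul_apply _ η, ← pow_succ, hzero, map_zero]
    simpa using hker hmem

end CyclicEndomorphism

section Involutions

variable {R : Type*} [Ring R] {s t : R}

theorem mul_mul_swap_of_involutions (hs : s * s = 1) (ht : t * t = 1) :
    s * t * (t * s) = 1 := by
  rw [mul_assoc, ← mul_assoc t, ht, one_mul, hs]

theorem commute_mul_swap_of_involutions (hs : s * s = 1) (ht : t * t = 1) :
    Commute (s * t) (t * s) :=
  (mul_mul_swap_of_involutions hs ht).trans (mul_mul_swap_of_involutions ht hs).symm

theorem commute_sub_one_one_add_of_involutions (hs : s * s = 1) (ht : t * t = 1) :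
    Commute (s * t - 1) (1 + t * s) :=
  ((Commute.one_right _).add_right (commute_mul_swap_of_involutions hs ht)).sub_left
    (Commute.one_left _)

theorem commutator_eq_mul_of_involutions (hs : s * s = 1) (ht : t * t = 1) :
    s * t - t * s = (s * t - 1) * (1 + t * s) := by
  rw [sub_mul, mul_add, mul_mul_swap_of_involutions hs ht]
  noncomm_ring

theorem isUnit_one_add_of_involutions (h2 : IsUnit (2 : R)) (hs : s * s = 1) (ht : t * t = 1)
    (h : IsNilpotent (s * t - 1)) : IsUnit (1 + t * s) := by
  have hcomm : Commute (t * s) (s * t - 1) :=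
    (commute_mul_swap_of_involutions ht hs).sub_right (Commute.one_right _)
  have hnil : IsNilpotent (-(t * s * (s * t - 1))) := (hcomm.isNilpotent_mul_left h).neg
  have heq : 1 + t * s = 2 + -(t * s * (s * t - 1)) := by
    rw [mul_sub, mul_mul_swap_of_involutions ht hs, mul_one, ← one_add_one_eq_two]
    abel
  exact heq ▸ hnil.isUnit_add_left_of_commute h2 (Commute.ofNat_right _ 2)

theorem commutator_pow_eq_zero_iff_of_involutions (h2 : IsUnit (2 : R)) (hs : s * s = 1)
    (ht : t * t = 1) (h : IsNilpotent (s * t - 1)) (k : ℕ) :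
    (s * t - t * s) ^ k = 0 ↔ (s * t - 1) ^ k = 0 := by
  rw [commutator_eq_mul_of_involutions hs ht,
    (commute_sub_one_one_add_of_involutions hs ht).mul_pow,
    ((isUnit_one_add_of_involutions h2 hs ht h).pow k).mul_left_eq_zero]

theorem commutator_pow_mul_eq_of_involutions (hs : s * s = 1) (ht : t * t = 1) {k : ℕ}
    (hk : (s * t - 1) ^ (k + 1) = 0) :
    (s * t - t * s) ^ k * s = (s * t - t * s) ^ k * t := by
  have hcomm := commute_sub_one_one_add_of_involutions hs ht
  have hzero : (s * t - t * s) ^ k * (s * t - 1) = 0 := by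
    rw [commutator_eq_mul_of_involutions hs ht, hcomm.mul_pow, (hcomm.pow_pow k k).eq, mul_assoc,
      ← pow_succ, hk, mul_zero]
  have hst : (s * t - 1) * t = s - t := by rw [sub_mul, mul_assoc, ht, mul_one, one_mul]
  rw [← sub_eq_zero, ← mul_sub, ← hst, ← mul_assoc, hzero, zero_mul]

theorem left_mul_commutator_of_involution (hs : s * s = 1) :
    s * (s * t - t * s) = -((s * t - t * s) * s) := by
  rw [mul_sub, sub_mul, ← mul_assoc, hs, mul_assoc t, hs, mul_assoc, one_mul, mul_one, neg_sub]

theorem right_mul_commutator_of_involution (ht : t * t = 1) :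
    t * (s * t - t * s) = -((s * t - t * s) * t) := by
  rw [← neg_sub (t * s), mul_neg, neg_mul, left_mul_commutator_of_involution ht]

end Involutions

section SkewChain

/-- `v` generates `V` under the skew-adjoint endomorphism `η`, which is nilpotent with a single
Jordan block of size `n + 1`: the Jordan chain `v, η v, …, ηⁿ v` is a basis of `V`, on which the
Gram matrix of `f` is antitriangular. -/
structure IsSkewChain (f : LinearMap.BilinForm K V) (η : Module.End K V) (n : ℕ) (v : V) :
    Prop where
  isSkewAdjoint : f.IsSkewAdjoint η
  finrank_eq : finrank K V = n + 1
  pow_eq_zero : η ^ (n + 1) = 0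
  pow_apply_ne_zero : (η ^ n) v ≠ 0

variable {f : LinearMap.BilinForm K V} {η : Module.End K V} {n m : ℕ} {v : V}

theorem apply_pow_left_of_isSkewAdjoint (hη : f.IsSkewAdjoint η) (i : ℕ) (x y : V) :
    f ((η ^ i) x) y = (-1) ^ i * f x ((η ^ i) y) := by
  induction i generalizing y with
  | zero => simp
  | succ i ih =>
    rw [pow_succ', Module.End.mul_apply, hη, Pi.neg_apply, map_neg, ih, ← Module.End.mul_apply,
      ← pow_succ, ← pow_succ']
    ring

namespace IsSkewChain

theorem linearIndependent (h : IsSkewChain f η n v) :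
    LinearIndependent K fun i : Fin (n + 1) ↦ (η ^ (i : ℕ)) v :=
  linearIndependent_pow_apply (by simp [h.pow_eq_zero]) h.pow_apply_ne_zero

theorem span_eq_top [FiniteDimensional K V] (h : IsSkewChain f η n v) :
    Submodule.span K (Set.range fun i : Fin (n + 1) ↦ (η ^ (i : ℕ)) v) = ⊤ :=
  h.linearIndependent.span_eq_top_of_card_eq_finrank' (by simp [h.finrank_eq])

theorem apply_pow_pow (h : IsSkewChain f η n v) (i j : ℕ) :
    f ((η ^ i) v) ((η ^ j) v) = (-1) ^ i * f v ((η ^ (i + j)) v) := by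
  rw [apply_pow_left_of_isSkewAdjoint h.isSkewAdjoint, pow_add, Module.End.mul_apply]

theorem apply_pow_pow_eq_zero (h : IsSkewChain f η n v) {i j : ℕ} (hij : n + 1 ≤ i + j) :
    f ((η ^ i) v) ((η ^ j) v) = 0 := by
  rw [h.apply_pow_pow, pow_eq_zero_of_le hij h.pow_eq_zero, LinearMap.zero_apply, map_zero,
    mul_zero]

theorem apply_pow_ne_zero [FiniteDimensional K V] (h : IsSkewChain f η n v)
    (hf : f.SeparatingRight) : f v ((η ^ n) v) ≠ 0 := fun h0 ↦ by
  refine h.pow_apply_ne_zero (hf _ fun x ↦ ?_)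
  have hx : x ∈ Submodule.span K (Set.range fun i : Fin (n + 1) ↦ (η ^ (i : ℕ)) v) :=
    h.span_eq_top ▸ Submodule.mem_top
  have hker : Submodule.span K (Set.range fun i : Fin (n + 1) ↦ (η ^ (i : ℕ)) v) ≤
      LinearMap.ker (f.flip ((η ^ n) v)) := by
    rw [Submodule.span_le]
    rintro _ ⟨⟨_ | i, _⟩, rfl⟩
    · simpa using h0
    · exact h.apply_pow_pow_eq_zero (by simp only; omega)
  exact hker hx

theorem hasDisc_pow [FiniteDimensional K V] (h : IsSkewChain f η n v) :
    HasDisc f (f v ((η ^ n) v) ^ (n + 1)) := by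
  have hanti (i : Fin (n + 1)) :
      f ((η ^ (i : ℕ)) v) ((η ^ (i.rev : ℕ)) v) = (-1) ^ (i : ℕ) * f v ((η ^ n) v) := by
    rw [h.apply_pow_pow, show (i : ℕ) + i.rev = n by rw [Fin.val_rev]; omega]
  have hdisc := hasDisc_of_antitriangular h.linearIndependent h.finrank_eq
    fun i j hij ↦ h.apply_pow_pow_eq_zero hij
  rwa [Finset.prod_congr rfl fun i _ ↦ hanti i, Finset.prod_mul_distrib, prod_neg_one_pow_fin,
    Finset.prod_const, Finset.card_univ, Fintype.card_fin, ← mul_assoc, ← mul_pow, neg_mul_neg,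
    one_mul, one_pow, one_mul] at hdisc

theorem hasDisc [FiniteDimensional K V] (h : IsSkewChain f η (2 * m) v) (hf : f.SeparatingRight) :
    HasDisc f (f v ((η ^ (2 * m)) v)) := by
  refine HasDisc.of_mul_sq ?_ (pow_ne_zero m (h.apply_pow_ne_zero hf))
  rw [← pow_mul', ← pow_succ']
  exact h.hasDisc_pow

section Subchain

variable {d r : ℕ} {W : Submodule K V}

theorem linearIndependent_subchain (h : IsSkewChain f η (2 * m) v) (hdr : d + r = m + 1)
    (hW : ∀ i, (η ^ (2 * i + r)) v ∈ W) :
    LinearIndependent K fun i : Fin d ↦ (⟨(η ^ (2 * (i : ℕ) + r)) v, hW i⟩ : W) := by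
  refine LinearIndependent.of_comp W.subtype ?_
  refine h.linearIndependent.comp (fun i : Fin d ↦ ⟨2 * i + r, by omega⟩) fun i j hij ↦ ?_
  simpa [Fin.ext_iff] using hij

theorem le_finrank_of_subchain_mem [FiniteDimensional K V] (h : IsSkewChain f η (2 * m) v)
    (hdr : d + r = m + 1) (hW : ∀ i, (η ^ (2 * i + r)) v ∈ W) : d ≤ finrank K W := by
  simpa using (h.linearIndependent_subchain hdr hW).fintype_card_le_finrank

theorem hasDisc_restrict_of_subchain_mem [FiniteDimensional K V] (h : IsSkewChain f η (2 * m) v)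
    (hdr : d + r = m + 1) (hW : ∀ i, (η ^ (2 * i + r)) v ∈ W) (hd : finrank K W = d) :
    HasDisc (f.restrict W) ((-1) ^ (d / 2) * ((-1) ^ r * f v ((η ^ (2 * m)) v)) ^ d) := by
  have hanti (i : Fin d) :
      f.restrict W ⟨(η ^ (2 * (i : ℕ) + r)) v, hW i⟩ ⟨(η ^ (2 * (i.rev : ℕ) + r)) v, hW i.rev⟩ =
        (-1) ^ r * f v ((η ^ (2 * m)) v) := by
    rw [LinearMap.BilinForm.restrict_apply, LinearMap.domRestrict_apply, h.apply_pow_pow, pow_add,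
      (even_two_mul (i : ℕ)).neg_one_pow, one_mul,
      show 2 * (i : ℕ) + r + (2 * (i.rev : ℕ) + r) = 2 * m by rw [Fin.val_rev]; omega]
  have hdisc := hasDisc_of_antitriangular (f := f.restrict W)
    (h.linearIndependent_subchain hdr hW) hd fun i j hij ↦ h.apply_pow_pow_eq_zero (by omega)
  rwa [Finset.prod_congr rfl fun i _ ↦ hanti i, Finset.prod_const, Finset.card_univ,
    Fintype.card_fin] at hdisc

theorem isHyperbolicSpace_restrict_of_subchain_mem (h : IsSkewChain f η (2 * m) v)
    (hdr : d + r = m + 1) (hW : ∀ i, (η ^ (2 * i + r)) v ∈ W) (hd : finrank K W = d)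
    (heven : Even d) : IsHyperbolicSpace (f.restrict W) := by
  obtain ⟨k, rfl⟩ := heven
  exact isHyperbolicSpace_of_antitriangular (h.linearIndependent_subchain hdr hW) hd
    fun i j hij ↦ h.apply_pow_pow_eq_zero (by omega)

end Subchain

end IsSkewChain

end SkewChain

section InvertedChain

variable {S η : Module.End K V} {v : V} {p q : ℕ}

theorem apply_pow_of_anticommute (hS : S * η = -(η * S)) (hv : S v = (-1 : K) ^ q • v) (i : ℕ) :
    S ((η ^ i) v) = (-1 : K) ^ (i + q) • (η ^ i) v := by
  induction i with
  | zero => simpa using hv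
  | succ i ih =>
    rw [pow_succ', Module.End.mul_apply, ← Module.End.mul_apply S, hS, LinearMap.neg_apply,
      Module.End.mul_apply, ih, map_smul, ← neg_smul]
    ring_nf

theorem pow_apply_mem_ker_sub_one (hS : S * η = -(η * S)) (hv : S v = (-1 : K) ^ q • v) (i : ℕ) :
    (η ^ (2 * i + q)) v ∈ LinearMap.ker (S - 1) := by
  have heven : Even (2 * i + q + q) := ⟨i + q, by ring⟩
  rw [LinearMap.mem_ker, LinearMap.sub_apply, apply_pow_of_anticommute hS hv, heven.neg_one_pow,
    one_smul, Module.End.one_apply, sub_self]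

theorem mem_range_sub_one_of_apply_eq_neg (h2 : (2 : K) ≠ 0) {x : V} (hx : S x = -x) :
    x ∈ LinearMap.range (S - 1) := by
  refine ⟨(-2⁻¹ : K) • x, ?_⟩
  rw [LinearMap.sub_apply, map_smul, hx, Module.End.one_apply]
  match_scalars
  field_simp
  norm_num

theorem pow_apply_mem_range_sub_one (h2 : (2 : K) ≠ 0) (hpq : p + q = 1) (hS : S * η = -(η * S))
    (hv : S v = (-1 : K) ^ q • v) (i : ℕ) :
    (η ^ (2 * i + p)) v ∈ LinearMap.range (S - 1) := by
  have hodd : Odd (2 * i + p + q) := ⟨i, by omega⟩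
  refine mem_range_sub_one_of_apply_eq_neg h2 ?_
  rw [apply_pow_of_anticommute hS hv, hodd.neg_one_pow, neg_one_smul]

variable [FiniteDimensional K V] {f : LinearMap.BilinForm K V} {m : ℕ}

namespace IsSkewChain

theorem finrank_range_sub_one_and_finrank_ker_sub_one (h : IsSkewChain f η (2 * m) v)
    (h2 : (2 : K) ≠ 0) (hpq : p + q = 1) (hS : S * η = -(η * S)) (hv : S v = (-1 : K) ^ q • v) :
    finrank K (LinearMap.range (S - 1)) = m + q ∧ finrank K (LinearMap.ker (S - 1)) = m + p := by
  have hrange := h.le_finrank_of_subchain_mem (d := m + q) (by omega)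
    (pow_apply_mem_range_sub_one h2 hpq hS hv)
  have hker := h.le_finrank_of_subchain_mem (d := m + p) (by omega)
    (pow_apply_mem_ker_sub_one hS hv)
  have hsum := LinearMap.finrank_range_add_finrank_ker (S - 1)
  have hdim := h.finrank_eq
  omega

theorem hasDisc_range_sub_one (h : IsSkewChain f η (2 * m) v) (hf : f.SeparatingRight)
    (h2 : (2 : K) ≠ 0) (hpq : p + q = 1) (hS : S * η = -(η * S)) (hv : S v = (-1 : K) ^ q • v)
    {e : K} (he : HasDisc f e) :
    HasDisc (f.restrict (LinearMap.range (S - 1))) ((-1) ^ ((m + 1) / 2) * e ^ (m + q)) := by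
  obtain ⟨s, hs, hse⟩ := (h.hasDisc hf).exists_eq_mul_sq he
  have hdisc := h.hasDisc_restrict_of_subchain_mem (d := m + q) (by omega)
    (pow_apply_mem_range_sub_one h2 hpq hS hv)
    (h.finrank_range_sub_one_and_finrank_ker_sub_one h2 hpq hS hv).1
  have hsign : (-1 : K) ^ ((m + q) / 2) * ((-1) ^ p) ^ (m + q) = (-1) ^ ((m + 1) / 2) := by
    obtain ⟨rfl, rfl⟩ | ⟨rfl, rfl⟩ : p = 0 ∧ q = 1 ∨ p = 1 ∧ q = 0 := by omega
    · simp
    · rw [← neg_one_pow_mul_neg_one_pow_half, pow_one, add_zero, mul_comm]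
  refine HasDisc.of_mul_sq (s := s ^ (m + q)) ?_ (pow_ne_zero _ hs)
  convert hdisc using 1
  rw [hse, ← hsign]
  ring

theorem isHyperbolicSpace_range_sub_one (h : IsSkewChain f η (2 * m) v) (h2 : (2 : K) ≠ 0)
    (hpq : p + q = 1) (hS : S * η = -(η * S)) (hv : S v = (-1 : K) ^ q • v)
    (heven : Even (m + q)) : IsHyperbolicSpace (f.restrict (LinearMap.range (S - 1))) :=
  h.isHyperbolicSpace_restrict_of_subchain_mem (by omega)
    (pow_apply_mem_range_sub_one h2 hpq hS hv)
    (h.finrank_range_sub_one_and_finrank_ker_sub_one h2 hpq hS hv).1 heven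

theorem isHyperbolicSpace_ker_sub_one (h : IsSkewChain f η (2 * m) v) (h2 : (2 : K) ≠ 0)
    (hpq : p + q = 1) (hS : S * η = -(η * S)) (hv : S v = (-1 : K) ^ q • v)
    (heven : Even (m + p)) : IsHyperbolicSpace (f.restrict (LinearMap.ker (S - 1))) :=
  h.isHyperbolicSpace_restrict_of_subchain_mem (by omega) (pow_apply_mem_ker_sub_one hS hv)
    (h.finrank_range_sub_one_and_finrank_ker_sub_one h2 hpq hS hv).2 heven

end IsSkewChain

end InvertedChain

section CommonEigenvalue

theorem exists_sign_eigenvector {V' : Type*} [AddCommGroup V'] [Module K V'] (h2 : (2 : K) ≠ 0)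
    {S : Module.End K V} (hS : S * S = 1) {A : V →ₗ[K] V'} (hA : A ≠ 0) :
    ∃ q ≤ 1, ∃ v, S v = (-1 : K) ^ q • v ∧ A v ≠ 0 := by
  obtain ⟨x, hx⟩ : ∃ x, A x ≠ 0 := by
    by_contra! h
    exact hA (LinearMap.ext h)
  have hSS (y : V) : S (S y) = y := LinearMap.congr_fun hS y
  by_cases hplus : A (x + S x) = 0
  · refine ⟨1, le_rfl, x - S x, by simp [hSS], fun hminus ↦ hx ?_⟩
    have hsum : (2 : K) • A x = A (x + S x) + A (x - S x) := by
      rw [← map_add, ← map_smul]; congr 1; module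
    rw [hplus, hminus, add_zero] at hsum
    exact (smul_eq_zero.1 hsum).resolve_left h2
  · exact ⟨0, zero_le_one, x + S x, by simp [hSS, add_comm], hplus⟩

theorem exists_eigenvector_of_comp_eq {V' : Type*} [AddCommGroup V'] [Module K V']
    (h2 : (2 : K) ≠ 0) {S T : Module.End K V} (hT : T * T = 1) {A : V →ₗ[K] V'}
    (hST : A ∘ₗ S = A ∘ₗ T) {q : ℕ} {v : V} (hv : S v = (-1 : K) ^ q • v) (hA : A v ≠ 0) :
    ∃ w, T w = (-1 : K) ^ q • w ∧ A w ≠ 0 := by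
  have hsign : (-1 : K) ^ q * (-1) ^ q = 1 := by rw [← mul_pow]; simp
  have hTT : T (T v) = v := LinearMap.congr_fun hT v
  have hAT : A (T v) = (-1 : K) ^ q • A v := by
    rw [← map_smul, ← hv]
    exact (LinearMap.congr_fun hST v).symm
  refine ⟨v + (-1 : K) ^ q • T v, ?_, ?_⟩
  · rw [map_add, map_smul, hTT, smul_add, smul_smul, hsign, one_smul, add_comm]
  · rw [map_add, map_smul, hAT, smul_smul, hsign, one_smul, ← two_smul K]
    exact smul_ne_zero h2 hA

end CommonEigenvalue

section ProductOfInvolutions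

variable {f : LinearMap.BilinForm K V} {S T : Module.End K V}

theorem isSkewAdjoint_commutator_of_involutions (hS : S * S = 1) (hT : T * T = 1)
    (hiso : ∀ x y, f ((S * T) x) ((S * T) y) = f x y) :
    f.IsSkewAdjoint (S * T - T * S : Module.End K V) := by
  have hcancel (x : V) : (S * T) ((T * S) x) = x :=
    LinearMap.congr_fun (mul_mul_swap_of_involutions hS hT) x
  intro x y
  have hleft : f ((S * T) x) y = f x ((T * S) y) := by
    rw [← hiso x, hcancel]
  have hright : f ((T * S) x) y = f x ((S * T) y) := by
    rw [← hiso _ y, hcancel]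
  rw [LinearMap.sub_apply, map_sub, LinearMap.sub_apply, hleft, hright, Pi.neg_apply,
    LinearMap.sub_apply, map_neg, map_sub, neg_sub]

theorem commutator_pow_eq_zero_iff_of_minpoly (h2 : (2 : K) ≠ 0) (hS : S * S = 1)
    (hT : T * T = 1) {n : ℕ} (hmin : minpoly K (S * T) = (X - 1) ^ n) (k : ℕ) :
    (S * T - T * S) ^ k = 0 ↔ (S * T - 1) ^ k = 0 := by
  have h2unit : IsUnit (2 : Module.End K V) :=
    map_ofNat (algebraMap K (Module.End K V)) 2 ▸ (IsUnit.mk0 (2 : K) h2).map _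
  exact commutator_pow_eq_zero_iff_of_involutions h2unit hS hT
    ⟨n, sub_one_pow_eq_zero_of_minpoly hmin⟩ k

theorem isSkewChain_commutator_of_involutions [FiniteDimensional K V] (h2 : (2 : K) ≠ 0)
    (hS : S * S = 1) (hT : T * T = 1) (hiso : ∀ x y, f ((S * T) x) ((S * T) y) = f x y) {n : ℕ}
    (hcyc : IsCyclicEnd (S * T)) (hmin : minpoly K (S * T) = (X - 1) ^ (n + 1)) {v : V}
    (hv : ((S * T - T * S) ^ n) v ≠ 0) : IsSkewChain f (S * T - T * S) n v where
  isSkewAdjoint := isSkewAdjoint_commutator_of_involutions hS hT hiso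
  finrank_eq := by
    rw [finrank_eq_natDegree_minpoly hcyc, hmin, ← C_1, natDegree_pow, natDegree_X_sub_C, mul_one]
  pow_eq_zero := (commutator_pow_eq_zero_iff_of_minpoly h2 hS hT hmin _).2
    (sub_one_pow_eq_zero_of_minpoly hmin)
  pow_apply_ne_zero := hv

theorem exists_isSkewChain_common_sign [FiniteDimensional K V] (h2 : (2 : K) ≠ 0)
    (hS : S * S = 1) (hT : T * T = 1) (hiso : ∀ x y, f ((S * T) x) ((S * T) y) = f x y) {n : ℕ}
    (hcyc : IsCyclicEnd (S * T)) (hmin : minpoly K (S * T) = (X - 1) ^ (n + 1)) :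
    ∃ q ≤ 1, ∃ v w, IsSkewChain f (S * T - T * S) n v ∧ S v = (-1 : K) ^ q • v ∧
      IsSkewChain f (S * T - T * S) n w ∧ T w = (-1 : K) ^ q • w := by
  have hne : (S * T - T * S) ^ n ≠ 0 := fun h0 ↦ sub_one_pow_ne_zero_of_minpoly hmin
    ((commutator_pow_eq_zero_iff_of_minpoly h2 hS hT hmin n).1 h0)
  obtain ⟨q, hq, v, hv, hv0⟩ := exists_sign_eigenvector h2 hS hne
  obtain ⟨w, hw, hw0⟩ := exists_eigenvector_of_comp_eq h2 hT
    (commutator_pow_mul_eq_of_involutions hS hT (sub_one_pow_eq_zero_of_minpoly hmin)) hv hv0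
  exact ⟨q, hq, v, w, isSkewChain_commutator_of_involutions h2 hS hT hiso hcyc hmin hv0, hv,
    isSkewChain_commutator_of_involutions h2 hS hT hiso hcyc hmin hw0, hw⟩

end ProductOfInvolutions

theorem stmt13_general [FiniteDimensional K V] (hK : ringChar K ≠ 2)
    {f : LinearMap.BilinForm K V} (hf : f.SeparatingRight) {S T : Module.End K V}
    (hS : S * S = 1) (hT : T * T = 1) (hiso : ∀ x y, f ((S * T) x) ((S * T) y) = f x y) {m : ℕ}
    (hcyc : IsCyclicEnd (S * T)) (hmin : minpoly K (S * T) = (X - 1) ^ (2 * m + 1)) :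
    (finrank K (LinearMap.range (S - 1)) = finrank K (LinearMap.range (T - 1)) ∧
      (finrank K (LinearMap.range (S - 1)) = m ∨ finrank K (LinearMap.range (S - 1)) = m + 1)) ∧
    ((IsHyperbolicSpace (f.restrict (LinearMap.range (S - 1))) ∧
        IsHyperbolicSpace (f.restrict (LinearMap.range (T - 1)))) ∨
      (IsHyperbolicSpace (f.restrict (LinearMap.ker (S - 1))) ∧
        IsHyperbolicSpace (f.restrict (LinearMap.ker (T - 1))))) ∧
    ((∀ d : K, HasDisc (f.restrict (LinearMap.range (S - 1))) d ↔
        HasDisc (f.restrict (LinearMap.range (T - 1))) d) ∧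
      (HasDisc (f.restrict (LinearMap.range (S - 1))) ((-1 : K) ^ ((m + 1) / 2)) ∨
        ∃ e : K, HasDisc f e ∧
          HasDisc (f.restrict (LinearMap.range (S - 1))) ((-1 : K) ^ ((m + 1) / 2) * e))) := by
  have h2 : (2 : K) ≠ 0 := Ring.two_ne_zero hK
  have hSη := left_mul_commutator_of_involution (t := T) hS
  have hTη := right_mul_commutator_of_involution (s := S) hT
  obtain ⟨q, hq, v, w, hchain, hv, hchain', hw⟩ :=
    exists_isSkewChain_common_sign h2 hS hT hiso hcyc hmin
  obtain ⟨p, hpq⟩ : ∃ p, p + q = 1 := ⟨1 - q, by omega⟩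
  obtain ⟨hrange, -⟩ := hchain.finrank_range_sub_one_and_finrank_ker_sub_one h2 hpq hSη hv
  obtain ⟨hrange', -⟩ := hchain'.finrank_range_sub_one_and_finrank_ker_sub_one h2 hpq hTη hw
  have he := hchain.hasDisc hf
  have hdisc := hchain.hasDisc_range_sub_one hf h2 hpq hSη hv he
  have hdisc' := hchain'.hasDisc_range_sub_one hf h2 hpq hTη hw he
  refine ⟨⟨hrange.trans hrange'.symm, by omega⟩, ?_,
    fun d ↦ hasDisc_iff_of_common_disc hdisc hdisc', ?_⟩
  · obtain heven | heven : Even (m + q) ∨ Even (m + p) := by grind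
    · exact .inl ⟨hchain.isHyperbolicSpace_range_sub_one h2 hpq hSη hv heven,
        hchain'.isHyperbolicSpace_range_sub_one h2 hpq hTη hw heven⟩
    · exact .inr ⟨hchain.isHyperbolicSpace_ker_sub_one h2 hpq hSη hv heven,
        hchain'.isHyperbolicSpace_ker_sub_one h2 hpq hTη hw heven⟩
  · exact (hdisc.or_of_mul_pow (hchain.apply_pow_ne_zero hf)).imp_right fun h ↦ ⟨_, he, h⟩

/-- Let `φ ∈ O(V)` be cyclic with minimal polynomial `(x-1)^{2m+1}` and
`φ = στ` with `σ, τ` involutions of `O(V)`. Then (1) `dim Bahn(σ) = dim Bahn(τ) ∈ {m, m+1}`;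
(2) either both `Bahn(σ), Bahn(τ)` or both `Fix(σ), Fix(τ)` are hyperbolic; (3)
`disc Bahn(σ) = disc Bahn(τ) ∈ {(-1)^t, (-1)^t disc V}` with `t = ⌊(m+1)/2⌋`. -/
theorem stmt13 [FiniteDimensional K V] (hK : ringChar K ≠ 2)
    (f : LinearMap.BilinForm K V) (hsymm : f.IsSymm) (hnd : f.Nondegenerate)
    (φ σ τ : V ≃ₗ[K] V) (hφ : φ ∈ orthGroup f) (hσ : σ ∈ orthGroup f) (hτ : τ ∈ orthGroup f)
    (m : ℕ) (hcyc : IsCyclicEnd (φ : V →ₗ[K] V))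
    (hmin : minpoly K (φ : V →ₗ[K] V) = (X - 1) ^ (2 * m + 1))
    (hσ2 : σ ^ 2 = 1) (hτ2 : τ ^ 2 = 1) (hprod : φ = σ * τ) :
    (Module.finrank K (LinearMap.range ((σ : V →ₗ[K] V) - 1)) =
        Module.finrank K (LinearMap.range ((τ : V →ₗ[K] V) - 1)) ∧
      (Module.finrank K (LinearMap.range ((σ : V →ₗ[K] V) - 1)) = m ∨
        Module.finrank K (LinearMap.range ((σ : V →ₗ[K] V) - 1)) = m + 1)) ∧
    ((IsHyperbolicSpace (f.restrict (LinearMap.range ((σ : V →ₗ[K] V) - 1))) ∧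
        IsHyperbolicSpace (f.restrict (LinearMap.range ((τ : V →ₗ[K] V) - 1)))) ∨
      (IsHyperbolicSpace (f.restrict (LinearMap.ker ((σ : V →ₗ[K] V) - 1))) ∧
        IsHyperbolicSpace (f.restrict (LinearMap.ker ((τ : V →ₗ[K] V) - 1))))) ∧
    ((∀ d : K, HasDisc (f.restrict (LinearMap.range ((σ : V →ₗ[K] V) - 1))) d ↔
        HasDisc (f.restrict (LinearMap.range ((τ : V →ₗ[K] V) - 1))) d) ∧
      (HasDisc (f.restrict (LinearMap.range ((σ : V →ₗ[K] V) - 1)))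
          ((-1 : K) ^ ((m + 1) / 2)) ∨
        ∃ e : K, HasDisc f e ∧
          HasDisc (f.restrict (LinearMap.range ((σ : V →ₗ[K] V) - 1)))
            ((-1 : K) ^ ((m + 1) / 2) * e))) := by
  subst hprod
  exact stmt13_general hK hnd.2 (congrArg LinearEquiv.toLinearMap (sq σ ▸ hσ2))
    (congrArg LinearEquiv.toLinearMap (sq τ ▸ hτ2)) hφ hcyc hmin

end Biref
end

section
/- Let (V, f) be a finite-dimensional nondegenerate symmetric bilinear space over a field K with char K ≠ 2, and let φ ∈ O(V) be orthogonally indecomposable. Then: (1) if V is a direct sum of two cyclic K[x]-submodules (x acting as φ) and φ has exactly two elementary divisors, both equal to (x − 1)^m or both equal to (x + 1)^m, then dim V ≡ 0 (mod 4); (2) dim V is odd if and only if V is indecomposable as a K[x]-module and the minimal polynomial of φ is (x − 1)^{dim V} or (x + 1)^{dim V}. -/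
open Polynomial Module

namespace Biref

variable {K V : Type*} [Field K] [AddCommGroup V] [Module K V]

/-!
Let `ε = ±1` be an eigenvalue of `φ` and `N = φ - ε`. From `f (N x) (φ y) = -ε f x (N y)` the
Fitting decomposition of `N` is orthogonal, so indecomposability makes `N` nilpotent, say of class
`n = k + 1`. The form `g x y = f (Nᵏ x) y` is nonzero, symmetric for `n` odd and alternating for
`n` even, so it is nondegenerate on some `W` of dimension `1`, respectively `2`.
Then `W ⊕ N W ⊕ ⋯ ⊕ Nᵏ W` is a nondegenerate invariant subspace, hence all of `V`: thus
`dim V = n` for `n` odd and `dim V = 2 n` for `n` even.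

Two elementary divisors `(x - ε)ᵐ` force `dim ker N ≥ 2`, which excludes `dim V = n`, so
`4 ∣ 2 n = dim V`. If `dim V` is odd, then `det φ = ±1` is an eigenvalue, because comparing Gram
determinants in the adjunction formula gives `det N · det φ = (-ε) ^ dim V · det N`; then
`dim V = n`, and `φ` has a single Jordan block.
-/

section Nilpotent

variable {N φ : End K V} {ε : K}

lemma invt_sub_smul_one_iff {U : Submodule K V} : Invt (φ - ε • 1) U ↔ Invt φ U :=
  forall₂_congr fun _ hx => U.sub_mem_iff_left (U.smul_mem ε hx)

lemma inf_ker_ne_bot_of_isNilpotent (hN : IsNilpotent N) {U : Submodule K V} (hU : Invt N U)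
    (hU_ne : U ≠ ⊥) : U ⊓ N.ker ≠ ⊥ := by
  intro h
  obtain ⟨n, hn⟩ := hN
  have injOn : ∀ x ∈ U, N x = 0 → x = 0 := fun x hxU hx =>
    (Submodule.mem_bot K).mp (h ▸ ⟨hxU, hx⟩)
  have pow_injOn : ∀ (k : ℕ), ∀ x ∈ U, (N ^ k) x = 0 → x = 0 := by
    intro k
    induction k with
    | zero => simp
    | succ k ih =>
      exact fun x hxU hx => injOn x hxU (ih _ (hU x hxU) (by simpa [pow_succ] using hx))
  exact hU_ne ((Submodule.eq_bot_iff U).mpr fun x hxU => pow_injOn n x hxU (by simp [hn]))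

variable [FiniteDimensional K V]

lemma pow_finrank_eq_zero_of_isNilpotent (hN : IsNilpotent N) : N ^ finrank K V = 0 := by
  simpa [hN.charpoly_eq_X_pow_finrank] using N.aeval_self_charpoly

lemma nilpotencyClass_le_finrank_range_add_one (hN : IsNilpotent N) :
    nilpotencyClass N ≤ finrank K N.range + 1 := by
  have maps_range : ∀ x ∈ N.range, N x ∈ N.range := fun x _ => N.mem_range_self x
  have pow_restrict_range : N.restrict maps_range ^ finrank K N.range = 0 := by
    refine pow_finrank_eq_zero_of_isNilpotent (hN.imp fun n hn => ?_)
    rw [Module.End.pow_restrict n maps_range]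
    ext x
    simp [hn]
  refine Nat.sInf_le (LinearMap.ext fun x => ?_)
  rw [Module.End.pow_restrict _ maps_range] at pow_restrict_range
  simpa [pow_succ] using
    congrArg Subtype.val (LinearMap.congr_fun pow_restrict_range ⟨N x, N.mem_range_self x⟩)

lemma finrank_ker_le_one_of_finrank_eq_nilpotencyClass (hN : IsNilpotent N)
    (hdim : finrank K V = nilpotencyClass N) : finrank K N.ker ≤ 1 := by
  have := N.finrank_range_add_finrank_ker
  have := nilpotencyClass_le_finrank_range_add_one hN
  lia

lemma modIndec_of_finrank_eigenspace_le_one [Nontrivial V] (hN : IsNilpotent (φ - ε • 1))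
    (hker : finrank K (φ.eigenspace ε) ≤ 1) : ModIndec φ := by
  refine ⟨bot_ne_top, ?_⟩
  rintro ⟨A, B, hA, hB, hA_ne, hB_ne, hAB, -⟩
  have eigenspace_le : ∀ U : Submodule K V, Invt φ U → U ≠ ⊥ → φ.eigenspace ε ≤ U := by
    intro U hU hU_ne
    have hU_inf := inf_ker_ne_bot_of_isNilpotent hN (invt_sub_smul_one_iff.mpr hU) hU_ne
    rw [← Module.End.eigenspace_def] at hU_inf
    have := Submodule.one_le_finrank_iff.mpr hU_inf
    exact inf_eq_right.mp (Submodule.eq_of_le_of_finrank_le inf_le_right (by lia))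
  have inf_ne_bot := inf_ker_ne_bot_of_isNilpotent hN (U := ⊤) (fun _ _ => trivial) top_ne_bot
  rw [top_inf_eq, ← Module.End.eigenspace_def] at inf_ne_bot
  exact inf_ne_bot <| le_bot_iff.mp <|
    hAB ▸ le_inf (eigenspace_le A hA hA_ne) (eigenspace_le B hB hB_ne)

end Nilpotent

lemma minpoly_eq_X_sub_C_pow_nilpotencyClass {A : Type*} [Ring A] [Algebra K A]
    {a : A} {ε : K} (ha : IsNilpotent (a - ε • 1)) :
    minpoly K a = (X - C ε) ^ nilpotencyClass (a - ε • 1) := by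
  have aeval_pow : ∀ i, aeval a ((X - C ε) ^ i) = (a - ε • 1) ^ i := by
    simp [Algebra.algebraMap_eq_smul_one]
  have aeval_eq_zero := (aeval_pow _).trans (pow_nilpotencyClass ha)
  have monic_pow : ∀ i, ((X - C ε) ^ i).Monic := (monic_X_sub_C ε).pow
  obtain ⟨i, hi, associated⟩ :=
    (dvd_prime_pow (prime_X_sub_C ε) _).mp (minpoly.dvd K a aeval_eq_zero)
  have minpoly_eq : minpoly K a = (X - C ε) ^ i :=
    eq_of_monic_of_associated (minpoly.monic ⟨_, monic_pow _, aeval_eq_zero⟩) (monic_pow i)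
      associated
  have pow_eq_zero : (a - ε • 1) ^ i = 0 := by
    rw [← aeval_pow, ← minpoly_eq, minpoly.aeval]
  rw [minpoly_eq, hi.antisymm (Nat.sInf_le pow_eq_zero)]

section ElementaryDivisors

variable {V₁ V₂ V₃ : Type*} [AddCommGroup V₁] [AddCommGroup V₂] [AddCommGroup V₃] [Module K V₁]
  [Module K V₂] [Module K V₃]

lemma finrank_ker_comp_le [FiniteDimensional K V₁] [FiniteDimensional K V₂] (S : V₂ →ₗ[K] V₃)
    (T : V₁ →ₗ[K] V₂) : finrank K (S ∘ₗ T).ker ≤ finrank K S.ker + finrank K T.ker := by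
  have range_le : (T.domRestrict (S ∘ₗ T).ker).range ≤ S.ker := by
    rintro _ ⟨⟨x, hx⟩, rfl⟩
    exact hx
  have map_ker_le : (T.domRestrict (S ∘ₗ T).ker).ker.map (S ∘ₗ T).ker.subtype ≤ T.ker := by
    rintro _ ⟨x, hx, rfl⟩
    exact hx
  calc
    finrank K (S ∘ₗ T).ker
        = finrank K (T.domRestrict (S ∘ₗ T).ker).range +
            finrank K (T.domRestrict (S ∘ₗ T).ker).ker :=
      (LinearMap.finrank_range_add_finrank_ker _).symm
    _ ≤ finrank K S.ker + finrank K T.ker := by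
      refine add_le_add (Submodule.finrank_mono range_le) ?_
      rw [← Submodule.finrank_map_subtype_eq]
      exact Submodule.finrank_mono map_ker_le

variable [FiniteDimensional K V]

lemma edMult_le_finrank_ker_div_natDegree (φ : End K V) (p : K[X]) (d : ℕ) :
    edMult φ p d ≤ finrank K (aeval φ p).ker / p.natDegree := by
  refine Nat.div_le_div_right ?_
  have ker_mono : finrank K (aeval φ p ^ d).ker ≤ finrank K (aeval φ p ^ (d + 1)).ker := by
    rw [pow_succ']
    exact Submodule.finrank_mono (LinearMap.ker_le_ker_comp _ _)
  cases d with
  | zero => lia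
  | succ e =>
    have := finrank_ker_comp_le (aeval φ p ^ e) (aeval φ p)
    rw [← Module.End.mul_eq_comp, ← pow_succ] at this
    rw [Nat.add_sub_cancel]
    lia

lemma edMult_X_sub_C_le_finrank_eigenspace (φ : End K V) (ε : K) (d : ℕ) :
    edMult φ (X - C ε) d ≤ finrank K (φ.eigenspace ε) := by
  have aeval_eq : aeval φ (X - C ε) = φ - ε • 1 := by
    simp [Algebra.algebraMap_eq_smul_one]
  have := edMult_le_finrank_ker_div_natDegree φ (X - C ε) d
  rwa [natDegree_X_sub_C, Nat.div_one, aeval_eq, ← Module.End.eigenspace_def] at this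

end ElementaryDivisors

section NondegenerateSubspace

variable {g : LinearMap.BilinForm K V}

lemma nondegenerate_restrict_of_forall_eq_zero (hg : g.IsRefl) {U : Submodule K V}
    (hU : ∀ x ∈ U, (∀ y ∈ U, g x y = 0) → x = 0) : (g.restrict U).Nondegenerate :=
  g.nondegenerate_restrict_of_disjoint_orthogonal hg <|
    Submodule.disjoint_def.mpr fun x hxU hx => hU x hxU fun y hy => hg y x (hx y hy)

lemma exists_finrank_eq_one_nondegenerate_restrict (h2 : (2 : K) ≠ 0) (hg : g.IsSymm)
    (hg_ne : g ≠ 0) : ∃ W : Submodule K V, finrank K W = 1 ∧ (g.restrict W).Nondegenerate := by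
  have := invertibleOfNonzero h2
  obtain ⟨x, hx⟩ := LinearMap.BilinForm.exists_bilinForm_self_ne_zero hg_ne
    (LinearMap.BilinForm.isSymm_iff.mp hg)
  have x_ne : x ≠ 0 := by
    rintro rfl
    simp at hx
  exact ⟨K ∙ x, finrank_span_singleton x_ne,
    g.nondegenerate_restrict_of_disjoint_orthogonal hg.isRefl
      (LinearMap.BilinForm.isCompl_span_singleton_orthogonal hx).disjoint⟩

lemma exists_finrank_eq_two_nondegenerate_restrict (hg : g.IsAlt) (hg_ne : g ≠ 0) :
    ∃ W : Submodule K V, finrank K W = 2 ∧ (g.restrict W).Nondegenerate := by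
  obtain ⟨x, y, hxy⟩ : ∃ x y, g x y ≠ 0 := by
    by_contra! h
    exact hg_ne (LinearMap.ext₂ h)
  have coeff_eq_zero : ∀ a b : K,
      g (a • x + b • y) x = 0 → g (a • x + b • y) y = 0 → a = 0 ∧ b = 0 := by
    have hyx : g y x ≠ 0 := fun h => hxy (hg.isRefl y x h)
    simp +contextual [hg.self_eq_zero, hxy, hyx]
  have linearIndependent : LinearIndependent K ![x, y] :=
    LinearIndependent.pair_iff.mpr fun a b hab => coeff_eq_zero a b (by simp [hab]) (by simp [hab])
  refine ⟨Submodule.span K {x, y}, ?_, nondegenerate_restrict_of_forall_eq_zero hg.isRefl ?_⟩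
  · rw [← Matrix.range_cons_cons_empty x y ![], finrank_span_eq_card linearIndependent,
      Fintype.card_fin]
  · intro v hv v_ortho
    obtain ⟨a, b, rfl⟩ := Submodule.mem_span_pair.mp hv
    obtain ⟨rfl, rfl⟩ := coeff_eq_zero a b (v_ortho x (Submodule.mem_span_of_mem (by simp)))
      (v_ortho y (Submodule.mem_span_of_mem (by simp)))
    simp

end NondegenerateSubspace

section Chain

/-- The linear map `(w₀, …, wₙ₋₁) ↦ w₀ + N w₁ + ⋯ + Nⁿ⁻¹ wₙ₋₁`. If `Nⁿ = 0`, its range is the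
`K[x]`-submodule generated by `W`, where `x` acts as `N`. -/
def chainMap (N : End K V) (W : Submodule K V) (n : ℕ) : (Fin n → W) →ₗ[K] V :=
  ∑ j : Fin n, (N ^ (j : ℕ)) ∘ₗ W.subtype ∘ₗ LinearMap.proj j

variable {N : End K V} {W : Submodule K V} {n : ℕ}

lemma chainMap_apply (w : Fin n → W) :
    chainMap N W n w = ∑ j : Fin n, (N ^ (j : ℕ)) (w j) := by
  simp [chainMap, LinearMap.sum_apply]

lemma pow_apply_mem_range_chainMap (hN : N ^ n = 0) (j : ℕ) {w : V} (hw : w ∈ W) :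
    (N ^ j) w ∈ (chainMap N W n).range := by
  rcases lt_or_ge j n with hj | hj
  · refine ⟨Pi.single ⟨j, hj⟩ ⟨w, hw⟩, ?_⟩
    rw [chainMap_apply, Finset.sum_eq_single ⟨j, hj⟩] <;> simp +contextual
  · simp [pow_eq_zero_of_le hj hN]

lemma invt_range_chainMap (hN : N ^ n = 0) : Invt N (chainMap N W n).range := by
  rintro _ ⟨w, rfl⟩
  rw [chainMap_apply, map_sum]
  refine Submodule.sum_mem _ fun j _ => ?_
  simpa [pow_succ'] using pow_apply_mem_range_chainMap hN (j + 1) (w j).2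

lemma pow_apply_chainMap_eq_pow_apply {k : ℕ} (hN : N ^ (k + 1) = 0) (w : Fin (k + 1) → W)
    (j : Fin (k + 1)) (hw : ∀ i < j, w i = 0) :
    (N ^ (k - j)) (chainMap N W (k + 1) w) = (N ^ k) (w j) := by
  rw [chainMap_apply, map_sum, Finset.sum_eq_single j]
  · rw [← Module.End.mul_apply, ← pow_add, Nat.sub_add_cancel (by lia)]
  · intro i _ hij
    rcases hij.lt_or_gt with hij | hij
    · simp [hw i hij]
    · rw [← Module.End.mul_apply, ← pow_add, pow_eq_zero_of_le (by lia) hN, LinearMap.zero_apply]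
  · simp

end Chain

section Isometry

variable {f : LinearMap.BilinForm K V} {φ : End K V} {ε : K}

lemma apply_sub_smul_one_apply (hφ : f.IsOrthogonal φ) (hε : ε * ε = 1) (x y : V) :
    f ((φ - ε • 1) x) (φ y) = -ε * f x ((φ - ε • 1) y) := by
  have : f (φ x) (φ y) = f x y := hφ x y
  simp only [LinearMap.sub_apply, LinearMap.smul_apply, Module.End.one_apply, map_sub, map_smul,
    smul_eq_mul, this]
  linear_combination -f x y * hε

lemma apply_pow_sub_smul_one_apply_pow (hφ : f.IsOrthogonal φ) (hε : ε * ε = 1) (i : ℕ)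
    (x y : V) :
    f (((φ - ε • 1) ^ i) x) ((φ ^ i) y) = (-ε) ^ i * f x (((φ - ε • 1) ^ i) y) := by
  induction i generalizing y with
  | zero => simp
  | succ i ih =>
    have commute : (φ - ε • 1) * φ ^ i = φ ^ i * (φ - ε • 1) :=
      (((Commute.refl φ).sub_left ((Commute.one_left φ).smul_left ε)).pow_right i).eq
    calc
      f (((φ - ε • 1) ^ (i + 1)) x) ((φ ^ (i + 1)) y)
          = f ((φ - ε • 1) (((φ - ε • 1) ^ i) x)) (φ ((φ ^ i) y)) := by
        rw [pow_succ', pow_succ', Module.End.mul_apply, Module.End.mul_apply]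
      _ = -ε * f (((φ - ε • 1) ^ i) x) ((φ ^ i) ((φ - ε • 1) y)) := by
        rw [apply_sub_smul_one_apply hφ hε, ← Module.End.mul_apply, commute, Module.End.mul_apply]
      _ = (-ε) ^ (i + 1) * f x (((φ - ε • 1) ^ (i + 1)) y) := by
        rw [ih, ← mul_assoc, ← pow_succ', pow_succ (φ - ε • 1), Module.End.mul_apply]

lemma apply_pow_apply_of_mem_eigenspace (hφ : f.IsOrthogonal φ) (hε : ε * ε = 1) {z : V}
    (hz : z ∈ φ.eigenspace ε) (i : ℕ) (y : V) : f z ((φ ^ i) y) = ε ^ i * f z y := by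
  induction i generalizing y with
  | zero => simp
  | succ i ih =>
    have apply_isometry : f z y = ε * f z (φ y) := by
      rw [← hφ z y, Module.End.mem_eigenspace_iff.mp hz, map_smul, LinearMap.smul_apply,
        smul_eq_mul]
    rw [pow_succ, Module.End.mul_apply, ih, apply_isometry, pow_succ, mul_assoc, ← mul_assoc ε, hε,
      one_mul]

lemma apply_pow_sub_smul_one_of_pow_succ_eq_zero (hφ : f.IsOrthogonal φ) (hε : ε * ε = 1)
    {i : ℕ} {x : V} (hx : ((φ - ε • 1) ^ (i + 1)) x = 0) (y : V) :
    f (((φ - ε • 1) ^ i) x) y = (-1) ^ i * f x (((φ - ε • 1) ^ i) y) := by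
  have mem_eigenspace : ((φ - ε • 1) ^ i) x ∈ φ.eigenspace ε := by
    rwa [Module.End.eigenspace_def, LinearMap.mem_ker, ← Module.End.mul_apply, ← pow_succ']
  calc
    f (((φ - ε • 1) ^ i) x) y = ε ^ i * (ε ^ i * f (((φ - ε • 1) ^ i) x) y) := by
      rw [← mul_assoc, ← mul_pow, hε, one_pow, one_mul]
    _ = ε ^ i * ((-ε) ^ i * f x (((φ - ε • 1) ^ i) y)) := by
      rw [← apply_pow_apply_of_mem_eigenspace hφ hε mem_eigenspace,
        apply_pow_sub_smul_one_apply_pow hφ hε]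
    _ = (-1) ^ i * f x (((φ - ε • 1) ^ i) y) := by
      rw [← mul_assoc, ← mul_pow, mul_neg, hε]

section TopForm

variable {k : ℕ}

lemma compLeft_ne_zero {T : End K V} (hf : f.Nondegenerate) (hT : T ≠ 0) :
    f.compLeft T ≠ 0 := fun h =>
  hT <| LinearMap.ext fun x => hf.1 _ fun y => LinearMap.congr_fun₂ h x y

lemma isSymm_compLeft_pow (hf : f.IsSymm) (hφ : f.IsOrthogonal φ) (hε : ε * ε = 1)
    (hN : (φ - ε • 1) ^ (k + 1) = 0) (hk : Even k) :
    (f.compLeft ((φ - ε • 1) ^ k)).IsSymm := by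
  refine ⟨fun x y => ?_⟩
  rw [LinearMap.BilinForm.compLeft_apply, LinearMap.BilinForm.compLeft_apply,
    apply_pow_sub_smul_one_of_pow_succ_eq_zero hφ hε (by simp [hN]), hk.neg_one_pow, one_mul, hf.eq]

lemma isAlt_compLeft_pow (h2 : (2 : K) ≠ 0) (hf : f.IsSymm) (hφ : f.IsOrthogonal φ)
    (hε : ε * ε = 1) (hN : (φ - ε • 1) ^ (k + 1) = 0) (hk : Odd k) :
    (f.compLeft ((φ - ε • 1) ^ k)).IsAlt := by
  intro x
  have self_eq_neg := apply_pow_sub_smul_one_of_pow_succ_eq_zero hφ hε (i := k) (x := x)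
    (by simp [hN]) x
  rw [hk.neg_one_pow, hf.eq x] at self_eq_neg
  rw [LinearMap.BilinForm.compLeft_apply]
  refine (mul_eq_zero.mp ?_).resolve_left h2
  linear_combination self_eq_neg

lemma eq_zero_of_chainMap_orthogonal (hφ : f.IsOrthogonal φ) (hε : ε * ε = 1)
    (hN : (φ - ε • 1) ^ (k + 1) = 0) {W : Submodule K V}
    (hW : ((f.compLeft ((φ - ε • 1) ^ k)).restrict W).Nondegenerate) {w : Fin (k + 1) → W}
    (hw : ∀ y ∈ (chainMap (φ - ε • 1) W (k + 1)).range,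
      f (chainMap (φ - ε • 1) W (k + 1) w) y = 0) : w = 0 := by
  suffices ∀ j, w j = 0 from funext this
  intro j
  induction j using WellFoundedLT.induction with
  | ind j w_lt_eq_zero =>
    have pow_apply := pow_apply_chainMap_eq_pow_apply hN w j w_lt_eq_zero
    have pow_succ_apply :
        ((φ - ε • 1) ^ (k - j + 1)) (chainMap (φ - ε • 1) W (k + 1) w) = 0 := by
      rw [pow_succ', Module.End.mul_apply, pow_apply, ← Module.End.mul_apply, ← pow_succ', hN,
        LinearMap.zero_apply]
    refine hW.1 (w j) fun y => ?_
    calc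
      f (((φ - ε • 1) ^ k) (w j)) y
          = (-1) ^ (k - j : ℕ) *
              f (chainMap (φ - ε • 1) W (k + 1) w) (((φ - ε • 1) ^ (k - j : ℕ)) y) := by
        rw [← pow_apply, apply_pow_sub_smul_one_of_pow_succ_eq_zero hφ hε pow_succ_apply]
      _ = 0 := by rw [hw _ (pow_apply_mem_range_chainMap hN _ y.2), mul_zero]

lemma nondegenerate_restrict_range_chainMap (hf : f.IsSymm) (hφ : f.IsOrthogonal φ)
    (hε : ε * ε = 1) (hN : (φ - ε • 1) ^ (k + 1) = 0) {W : Submodule K V}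
    (hW : ((f.compLeft ((φ - ε • 1) ^ k)).restrict W).Nondegenerate) :
    (f.restrict (chainMap (φ - ε • 1) W (k + 1)).range).Nondegenerate := by
  refine nondegenerate_restrict_of_forall_eq_zero hf.isRefl ?_
  rintro _ ⟨w, rfl⟩ w_ortho
  rw [eq_zero_of_chainMap_orthogonal hφ hε hN hW w_ortho, map_zero]

lemma injective_chainMap (hφ : f.IsOrthogonal φ) (hε : ε * ε = 1)
    (hN : (φ - ε • 1) ^ (k + 1) = 0) {W : Submodule K V}
    (hW : ((f.compLeft ((φ - ε • 1) ^ k)).restrict W).Nondegenerate) :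
    Function.Injective (chainMap (φ - ε • 1) W (k + 1)) :=
  (injective_iff_map_eq_zero _).mpr fun w hw =>
    eq_zero_of_chainMap_orthogonal hφ hε hN hW fun y _ => by simp [hw]

end TopForm

lemma nondegenerate_restrict_ker_pow (hf : f.IsSymm) (hnd : f.Nondegenerate)
    (hφ : f.IsOrthogonal φ) (hε : ε * ε = 1) {n : ℕ}
    (hn : Codisjoint ((φ - ε • 1) ^ n).ker ((φ - ε • 1) ^ n).range) :
    (f.restrict ((φ - ε • 1) ^ n).ker).Nondegenerate := by
  have neg_ε_pow_ne_zero : (-ε) ^ n ≠ 0 :=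
    pow_ne_zero n (neg_ne_zero.mpr (left_ne_zero_of_mul_eq_one hε))
  have ker_ortho_range : ∀ x ∈ ((φ - ε • 1) ^ n).ker, ∀ y, f x (((φ - ε • 1) ^ n) y) = 0 := by
    intro x hx y
    have := apply_pow_sub_smul_one_apply_pow hφ hε n x y
    rw [LinearMap.mem_ker.mp hx, map_zero, LinearMap.zero_apply] at this
    exact (mul_eq_zero.mp this.symm).resolve_left neg_ε_pow_ne_zero
  refine nondegenerate_restrict_of_forall_eq_zero hf.isRefl fun x hx x_ortho => hnd.1 x fun y => ?_
  obtain ⟨u, hu, _, ⟨v, rfl⟩, rfl⟩ :=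
    Submodule.mem_sup.mp (hn.eq_top ▸ Submodule.mem_top (x := y))
  rw [map_add, x_ortho u hu, ker_ortho_range x hx v, add_zero]

section Determinant

variable [FiniteDimensional K V]

lemma det_mul_det_eq_of_comp_eq (hf : f.Nondegenerate) {A B C D : End K V}
    (h : f.comp A B = f.comp C D) : A.det * B.det = C.det * D.det := by
  let b := finBasis K V
  have gram_det_ne_zero := (LinearMap.BilinForm.nondegenerate_iff_det_ne_zero b).mp hf
  have gram_det_eq := congrArg (fun g => (LinearMap.BilinForm.toMatrix b g).det) h
  simp only [LinearMap.BilinForm.toMatrix_comp b, Matrix.det_mul, Matrix.det_transpose,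
    LinearMap.det_toMatrix] at gram_det_eq
  refine mul_right_cancel₀ gram_det_ne_zero ?_
  linear_combination gram_det_eq

lemma det_mul_self_eq_one (hf : f.Nondegenerate) (hφ : f.IsOrthogonal φ) :
    φ.det * φ.det = 1 := by
  have comp_eq : f.comp φ φ = f.comp 1 1 := LinearMap.ext₂ hφ
  simpa using det_mul_det_eq_of_comp_eq hf comp_eq

lemma hasEigenvalue_det_of_odd_finrank (h2 : (2 : K) ≠ 0) (hf : f.Nondegenerate)
    (hφ : f.IsOrthogonal φ) (hodd : Odd (finrank K V)) : φ.HasEigenvalue φ.det := by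
  set ε := φ.det
  have hε : ε * ε = 1 := det_mul_self_eq_one hf hφ
  have comp_eq : f.comp (φ - ε • 1) φ = f.comp 1 (-ε • (φ - ε • 1)) :=
    LinearMap.ext₂ fun x y => by
      simpa using apply_sub_smul_one_apply hφ hε x y
  have det_eq : (φ - ε • 1).det * ε = (-ε) ^ finrank K V * (φ - ε • 1).det := by
    have := det_mul_det_eq_of_comp_eq hf comp_eq
    rwa [map_one, one_mul, LinearMap.det_smul] at this
  have det_eq_zero : (φ - ε • 1).det = 0 := by
    have pow_finrank : ε ^ finrank K V = ε := by
      obtain ⟨l, hl⟩ := hodd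
      rw [hl, pow_succ, pow_mul, pow_two, hε, one_pow, one_mul]
    rw [hodd.neg_pow, pow_finrank] at det_eq
    refine (mul_eq_zero.mp ?_).resolve_left
      (mul_ne_zero h2 (left_ne_zero_of_mul_eq_one hε))
    linear_combination det_eq
  rw [Module.End.hasEigenvalue_iff, Module.End.eigenspace_def]
  exact (LinearMap.bot_lt_ker_of_det_eq_zero det_eq_zero).ne'

end Determinant

end Isometry

namespace OrthIndec

variable {f : LinearMap.BilinForm K V} {φ : End K V} {ε : K}

lemma nontrivial (hoi : OrthIndec f φ) : Nontrivial V :=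
  (Submodule.nontrivial_iff K).mp ⟨_, _, hoi.1⟩

variable [FiniteDimensional K V]

lemma isNilpotent_sub_smul_one (hoi : OrthIndec f φ) (hf : f.IsSymm) (hnd : f.Nondegenerate)
    (hφ : f.IsOrthogonal φ) (hε : ε * ε = 1) (hev : φ.HasEigenvalue ε) :
    IsNilpotent (φ - ε • 1) := by
  obtain ⟨n, isCompl, n_pos⟩ := ((φ - ε • 1).eventually_isCompl_ker_pow_range_pow.and
    (Filter.eventually_ge_atTop 1)).exists
  have invt_ker : Invt φ ((φ - ε • 1) ^ n).ker := by
    refine (invt_sub_smul_one_iff (ε := ε)).mp fun x hx => ?_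
    rw [LinearMap.mem_ker, ← Module.End.mul_apply, ← pow_succ, pow_succ', Module.End.mul_apply,
      LinearMap.mem_ker.mp hx, map_zero]
  have ker_ne_bot : ((φ - ε • 1) ^ n).ker ≠ ⊥ := by
    rw [Module.End.hasEigenvalue_iff, Module.End.eigenspace_def] at hev
    refine ne_bot_of_le_ne_bot hev ?_
    rw [← Nat.sub_add_cancel n_pos, pow_succ]
    exact LinearMap.ker_le_ker_comp _ _
  have ker_eq_top : ((φ - ε • 1) ^ n).ker = ⊤ :=
    (hoi.2 _ invt_ker (nondegenerate_restrict_ker_pow hf hnd hφ hε isCompl.codisjoint)).resolve_left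
      ker_ne_bot
  exact ⟨n, LinearMap.ker_eq_top.mp ker_eq_top⟩

lemma finrank_eq_mul_finrank (hoi : OrthIndec f φ) (hf : f.IsSymm) (hφ : f.IsOrthogonal φ)
    (hε : ε * ε = 1) {k : ℕ} (hN : (φ - ε • 1) ^ (k + 1) = 0) {W : Submodule K V} (hW_ne : W ≠ ⊥)
    (hW : ((f.compLeft ((φ - ε • 1) ^ k)).restrict W).Nondegenerate) :
    finrank K V = (k + 1) * finrank K W := by
  have range_ne_bot : (chainMap (φ - ε • 1) W (k + 1)).range ≠ ⊥ :=
    ne_bot_of_le_ne_bot hW_ne fun x hx => pow_apply_mem_range_chainMap hN 0 hx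
  have range_eq_top : (chainMap (φ - ε • 1) W (k + 1)).range = ⊤ :=
    (hoi.2 _ (invt_sub_smul_one_iff.mp (invt_range_chainMap hN))
      (nondegenerate_restrict_range_chainMap hf hφ hε hN hW)).resolve_left range_ne_bot
  calc
    finrank K V = finrank K (chainMap (φ - ε • 1) W (k + 1)).range := by
      rw [range_eq_top, finrank_top]
    _ = finrank K (Fin (k + 1) → W) :=
      LinearMap.finrank_range_of_inj (injective_chainMap hφ hε hN hW)
    _ = (k + 1) * finrank K W := by
      rw [finrank_pi_fintype, Finset.sum_const, Finset.card_univ, Fintype.card_fin, smul_eq_mul]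

lemma finrank_eq_nilpotencyClass_of_odd (hoi : OrthIndec f φ) (h2 : (2 : K) ≠ 0) (hf : f.IsSymm)
    (hnd : f.Nondegenerate) (hφ : f.IsOrthogonal φ) (hε : ε * ε = 1)
    (hodd : Odd (nilpotencyClass (φ - ε • 1))) :
    finrank K V = nilpotencyClass (φ - ε • 1) := by
  obtain ⟨k, hk⟩ := Nat.exists_eq_add_one.mpr hodd.pos
  obtain ⟨pow_succ_eq_zero, pow_ne_zero⟩ := nilpotencyClass_eq_succ_iff.mp hk
  have k_even : Even k := by
    rw [hk] at hodd
    grind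
  obtain ⟨W, finrank_W, hW⟩ := exists_finrank_eq_one_nondegenerate_restrict h2
    (isSymm_compLeft_pow hf hφ hε pow_succ_eq_zero k_even) (compLeft_ne_zero hnd pow_ne_zero)
  have W_ne : W ≠ ⊥ := Submodule.one_le_finrank_iff.mp finrank_W.ge
  rw [hoi.finrank_eq_mul_finrank hf hφ hε pow_succ_eq_zero W_ne hW, finrank_W, mul_one, hk]

lemma finrank_eq_nilpotencyClass_mul_two_of_even (hoi : OrthIndec f φ) (h2 : (2 : K) ≠ 0)
    (hf : f.IsSymm) (hnd : f.Nondegenerate) (hφ : f.IsOrthogonal φ) (hε : ε * ε = 1)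
    (hN : IsNilpotent (φ - ε • 1)) (heven : Even (nilpotencyClass (φ - ε • 1))) :
    finrank K V = nilpotencyClass (φ - ε • 1) * 2 := by
  have := hoi.nontrivial
  obtain ⟨k, hk⟩ := Nat.exists_eq_add_one.mpr (pos_nilpotencyClass_iff.mpr hN)
  obtain ⟨pow_succ_eq_zero, pow_ne_zero⟩ := nilpotencyClass_eq_succ_iff.mp hk
  have k_odd : Odd k := by grind
  obtain ⟨W, finrank_W, hW⟩ := exists_finrank_eq_two_nondegenerate_restrict
    (isAlt_compLeft_pow h2 hf hφ hε pow_succ_eq_zero k_odd) (compLeft_ne_zero hnd pow_ne_zero)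
  have W_ne : W ≠ ⊥ := Submodule.one_le_finrank_iff.mp (by lia)
  rw [hoi.finrank_eq_mul_finrank hf hφ hε pow_succ_eq_zero W_ne hW, finrank_W, hk]

lemma four_dvd_finrank_of_one_lt_edMult (hoi : OrthIndec f φ) (h2 : (2 : K) ≠ 0) (hf : f.IsSymm)
    (hnd : f.Nondegenerate) (hφ : f.IsOrthogonal φ) (hε : ε * ε = 1) {m : ℕ}
    (hm : 1 < edMult φ (X - C ε) m) : 4 ∣ finrank K V := by
  have one_lt_finrank : 1 < finrank K (φ.eigenspace ε) :=
    hm.trans_le (edMult_X_sub_C_le_finrank_eigenspace φ ε m)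
  have hev : φ.HasEigenvalue ε :=
    Module.End.hasEigenvalue_iff.mpr (Submodule.one_le_finrank_iff.mp one_lt_finrank.le)
  have hN := hoi.isNilpotent_sub_smul_one hf hnd hφ hε hev
  have even_nilpotencyClass : Even (nilpotencyClass (φ - ε • 1)) := by
    by_contra hodd
    have finrank_eq :=
      hoi.finrank_eq_nilpotencyClass_of_odd h2 hf hnd hφ hε (Nat.not_even_iff_odd.mp hodd)
    rw [Module.End.eigenspace_def] at one_lt_finrank
    exact one_lt_finrank.not_ge (finrank_ker_le_one_of_finrank_eq_nilpotencyClass hN finrank_eq)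
  rw [hoi.finrank_eq_nilpotencyClass_mul_two_of_even h2 hf hnd hφ hε hN even_nilpotencyClass]
  exact Nat.mul_dvd_mul_right even_nilpotencyClass.two_dvd 2

lemma modIndec_and_minpoly_eq_of_odd_finrank (hoi : OrthIndec f φ) (h2 : (2 : K) ≠ 0)
    (hf : f.IsSymm) (hnd : f.Nondegenerate) (hφ : f.IsOrthogonal φ) (hodd : Odd (finrank K V)) :
    ModIndec φ ∧ minpoly K φ = (X - C φ.det) ^ finrank K V := by
  have := hoi.nontrivial
  have hε := det_mul_self_eq_one hnd hφ
  have hN := hoi.isNilpotent_sub_smul_one hf hnd hφ hε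
    (hasEigenvalue_det_of_odd_finrank h2 hnd hφ hodd)
  have odd_nilpotencyClass : Odd (nilpotencyClass (φ - φ.det • 1)) := by
    by_contra heven
    have := hoi.finrank_eq_nilpotencyClass_mul_two_of_even h2 hf hnd hφ hε hN
      (Nat.not_odd_iff_even.mp heven)
    exact Nat.not_even_iff_odd.mpr hodd (this ▸ even_two.mul_left _)
  have finrank_eq :=
    hoi.finrank_eq_nilpotencyClass_of_odd h2 hf hnd hφ hε odd_nilpotencyClass
  refine ⟨modIndec_of_finrank_eigenspace_le_one hN ?_, ?_⟩
  · rw [Module.End.eigenspace_def]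
    exact finrank_ker_le_one_of_finrank_eq_nilpotencyClass hN finrank_eq
  · rw [finrank_eq, minpoly_eq_X_sub_C_pow_nilpotencyClass hN]

lemma odd_finrank_of_minpoly_eq (hoi : OrthIndec f φ) (h2 : (2 : K) ≠ 0) (hf : f.IsSymm)
    (hnd : f.Nondegenerate) (hφ : f.IsOrthogonal φ) (hε : ε * ε = 1)
    (hmin : minpoly K φ = (X - C ε) ^ finrank K V) : Odd (finrank K V) := by
  have := hoi.nontrivial
  have hN : IsNilpotent (φ - ε • 1) := by
    refine ⟨finrank K V, ?_⟩
    simpa [hmin, Algebra.algebraMap_eq_smul_one] using minpoly.aeval K φ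
  have finrank_eq : finrank K V = nilpotencyClass (φ - ε • 1) := by
    simpa [minpoly_eq_X_sub_C_pow_nilpotencyClass hN] using (congrArg natDegree hmin).symm
  by_contra heven
  rw [finrank_eq, Nat.not_odd_iff_even] at heven
  have := hoi.finrank_eq_nilpotencyClass_mul_two_of_even h2 hf hnd hφ hε hN heven
  have := finrank_pos (R := K) (M := V)
  lia

end OrthIndec

/-- Let `φ ∈ O(V)` be orthogonally indecomposable. (1) If `φ` is bicyclic
with exactly two elementary divisors, both `(x-1)^m` or both `(x+1)^m`, then
`dim V ≡ 0 (mod 4)`. (2) `dim V` is odd iff `V` is an indecomposable `K[x]`-module and the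
minimal polynomial of `φ` is `(x-1)^{dim V}` or `(x+1)^{dim V}`. -/
theorem stmt14 [FiniteDimensional K V] (hK : ringChar K ≠ 2)
    (f : LinearMap.BilinForm K V) (hsymm : f.IsSymm) (hnd : f.Nondegenerate)
    (φ : V ≃ₗ[K] V) (hφ : φ ∈ orthGroup f) (hoi : OrthIndec f (φ : V →ₗ[K] V)) :
    ((IsBicyclicEnd (φ : V →ₗ[K] V) ∧
        ∃ (m : ℕ) (p : K[X]), (p = X - 1 ∨ p = X + 1) ∧
          edMult (φ : V →ₗ[K] V) p m = 2 ∧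
          (∀ (r : K[X]) (d : ℕ), r.Monic → Irreducible r → d ≠ 0 →
            ¬(r = p ∧ d = m) → edMult (φ : V →ₗ[K] V) r d = 0)) →
      Module.finrank K V % 4 = 0) ∧
    (Odd (Module.finrank K V) ↔
      (ModIndec (φ : V →ₗ[K] V) ∧
        (minpoly K (φ : V →ₗ[K] V) = (X - 1) ^ Module.finrank K V ∨
          minpoly K (φ : V →ₗ[K] V) = (X + 1) ^ Module.finrank K V))) := by
  have h2 : (2 : K) ≠ 0 := Ring.two_ne_zero hK
  have X_sub_one_eq : (X - 1 : K[X]) = X - C 1 := by simp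
  have X_add_one_eq : (X + 1 : K[X]) = X - C (-1) := by simp
  rw [X_sub_one_eq, X_add_one_eq]
  refine ⟨?_, ?_, ?_⟩
  · rintro ⟨-, m, p, rfl | rfl, hm, -⟩
    · exact Nat.mod_eq_zero_of_dvd <|
        hoi.four_dvd_finrank_of_one_lt_edMult h2 hsymm hnd hφ (one_mul 1) hm.ge
    · exact Nat.mod_eq_zero_of_dvd <|
        hoi.four_dvd_finrank_of_one_lt_edMult h2 hsymm hnd hφ (by norm_num) hm.ge
  · intro hodd
    obtain ⟨hind, hmin⟩ := hoi.modIndec_and_minpoly_eq_of_odd_finrank h2 hsymm hnd hφ hodd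
    rcases mul_self_eq_one_iff.mp (det_mul_self_eq_one hnd hφ) with hdet | hdet
    · exact ⟨hind, .inl (hdet ▸ hmin)⟩
    · exact ⟨hind, .inr (hdet ▸ hmin)⟩
  · rintro ⟨-, hmin | hmin⟩
    · exact hoi.odd_finrank_of_minpoly_eq h2 hsymm hnd hφ (one_mul 1) hmin
    · exact hoi.odd_finrank_of_minpoly_eq h2 hsymm hnd hφ (by norm_num) hmin

end Biref
end

section
/- Let K be a finite field of odd characteristic and (V, f) a finite-dimensional nondegenerate symmetric bilinear space over K. Let φ ∈ O(V) be orthogonally indecomposable, with V indecomposable as a K[x]-module (x acting as φ) and with minimal polynomial p^m, where p is monic irreducible, p ≠ x − 1, p ≠ x + 1, and m is odd. Then the Witt index of V equals dim V / 2 − 1. -/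
open Polynomial Module

namespace Biref

variable {K V : Type*} [Field K] [AddCommGroup V] [Module K V]

/-!
Write `χ` for the characteristic polynomial of `φ`; it equals `p ^ m` because `V` is
indecomposable. If `f` is symmetric, then `f ((φ - φ⁻¹) x) y` is an alternating form, so its
discriminant is trivial and `disc f = det (φ - φ⁻¹)` up to squares (Zassenhaus); the right-hand
side is `χ(1) χ(-1) χ(0)` up to squares. Since `χ` is self-reciprocal, inversion of the root `α`
induces an automorphism of `L = K[x]/(p)` of order two. Hence `[L : K] = 2 e`, this automorphism is
the `e`-th power of the Frobenius, and Euler's criterion shows that `(-1) ^ e N(α - α⁻¹)`, which is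
`(-1) ^ e p(1) p(-1) p(0)` up to squares, is not a square. For odd `m` the discriminant therefore
differs from that of a hyperbolic space. Over a finite field, forms in at least three variables are
isotropic, so a space of even dimension that is not hyperbolic has an anisotropic part of
dimension exactly two.
-/

section FiniteField

theorem neg_one_pow_pow_div_two {R : Type*} [Ring R] {q : ℕ} (hq : Odd q) (e : ℕ) :
    (-1 : R) ^ (q ^ e / 2) = (-1) ^ (q / 2 * e) := by
  -- Both sides are values of the multiplicative character `χ₄`.
  have h : (-1 : ℤ) ^ (q ^ e / 2) = (-1) ^ (q / 2 * e) := by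
    rw [← ZMod.χ₄_eq_neg_one_pow (Nat.odd_iff.mp hq.pow), pow_mul,
      ← ZMod.χ₄_eq_neg_one_pow (Nat.odd_iff.mp hq), Nat.cast_pow, map_pow]
  exact_mod_cast congrArg (Int.cast : ℤ → R) h

theorem pow_two_mul_sub_one_div_mul_half {q : ℕ} (hq : Odd q) (e : ℕ) :
    (q ^ (2 * e) - 1) / (q - 1) * (q / 2) = (q ^ e - 1) * (q ^ e / 2 + 1) := by
  have hdvd : q - 1 ∣ q ^ (2 * e) - 1 := by simpa using Nat.sub_dvd_pow_sub_pow q 1 (2 * e)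
  have hhalf : ∀ {n : ℕ}, Odd n → 2 * (n / 2) = n - 1 := by grind
  apply Nat.eq_of_mul_eq_mul_left two_pos
  calc 2 * ((q ^ (2 * e) - 1) / (q - 1) * (q / 2))
      = (q ^ (2 * e) - 1) / (q - 1) * (q - 1) := by rw [mul_left_comm, hhalf hq]
    _ = (q ^ e) ^ 2 - 1 ^ 2 := by rw [Nat.div_mul_cancel hdvd, pow_mul', one_pow]
    _ = 2 * ((q ^ e - 1) * (q ^ e / 2 + 1)) := by
        rw [Nat.sq_sub_sq, mul_left_comm, mul_add, hhalf hq.pow, mul_comm]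
        have := (hq.pow (n := e)).pos
        grind

theorem isSquare_of_isSquare_pow {a : K} {n : ℕ} (hn : Odd n) (h : IsSquare (a ^ n)) :
    IsSquare a := by
  obtain ⟨k, rfl⟩ := hn
  obtain rfl | ha := eq_or_ne a 0
  · exact IsSquare.zero
  obtain ⟨r, hr⟩ := h
  refine ⟨r / a ^ k, ?_⟩
  field_simp
  rw [pow_two r, ← hr]
  ring

theorem ringChar_ne_two_of_odd_card [Fintype K] (hodd : Odd (Fintype.card K)) : ringChar K ≠ 2 :=
  fun h => Nat.not_even_iff_odd.mpr hodd
    (Nat.even_iff.mpr (FiniteField.even_card_iff_char_two.mp h))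

variable {L : Type*} [Field L] [Algebra K L]

theorem norm_algebraMap_sub_gen (pb : PowerBasis K L) (c : K) :
    Algebra.norm K (algebraMap K L c - pb.gen) = (minpoly K pb.gen).eval c := by
  rw [Algebra.norm_eq_matrix_det pb.basis, map_sub, ← charpoly_leftMulMatrix, Matrix.eval_charpoly,
    AlgHom.commutes]
  rfl

theorem minpoly_eval_one_mul_eval_neg_one (pb : PowerBasis K L) (heven : Even (finrank K L))
    (h0 : pb.gen ≠ 0) :
    (minpoly K pb.gen).eval 1 * (minpoly K pb.gen).eval (-1) =
      (minpoly K pb.gen).eval 0 * Algebra.norm K (pb.gen - pb.gen⁻¹) := by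
  have hneg (x : L) : Algebra.norm K (-x) = Algebra.norm K x := by
    have : Algebra.norm K (-1 : L) = 1 := by
      simpa [heven.neg_one_pow] using Algebra.norm_algebraMap (S := L) (-1 : K)
    rw [← neg_one_mul, map_mul, this, one_mul]
  rw [← norm_algebraMap_sub_gen, ← norm_algebraMap_sub_gen, ← norm_algebraMap_sub_gen,
    ← map_mul, ← map_mul, ← hneg]
  congr 1
  simp only [map_one, map_neg, map_zero]
  field_simp
  ring

variable [Fintype K] [FiniteDimensional K L]

theorem not_isSquare_neg_one_pow_mul_norm (hodd : Odd (Fintype.card K)) {e : ℕ}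
    (hL : finrank K L = 2 * e) {δ : L} (hδ : δ ≠ 0) (hpow : δ ^ Fintype.card K ^ e = -δ) :
    ¬ IsSquare ((-1) ^ e * Algebra.norm K δ) := by
  have : Finite L := Module.finite_of_finite K
  set q := Fintype.card K
  have hchar := ringChar_ne_two_of_odd_card hodd
  have hroot : δ ^ (q ^ e - 1) = -1 := by
    apply mul_right_cancel₀ hδ
    rw [pow_sub_one_mul hodd.pow.pos.ne', hpow, neg_one_mul]
  have hexp : (Nat.card L - 1) / (Nat.card K - 1) * (q / 2) = (q ^ e - 1) * (q ^ e / 2 + 1) := by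
    rw [Module.natCard_eq_pow_finrank (K := K), hL, Nat.card_eq_fintype_card,
      pow_two_mul_sub_one_div_mul_half hodd]
  have heuler : ((-1) ^ e * Algebra.norm K δ) ^ (q / 2) = -1 := by
    apply (algebraMap K L).injective
    calc algebraMap K L (((-1) ^ e * Algebra.norm K δ) ^ (q / 2))
        = (-1) ^ (q / 2 * e) * (δ ^ (q ^ e - 1)) ^ (q ^ e / 2 + 1) := by
          rw [map_pow, map_mul, FiniteField.algebraMap_norm_eq_pow, mul_pow, ← pow_mul δ, hexp,
            ← pow_mul δ, map_pow, map_neg, map_one, ← pow_mul, mul_comm e]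
      _ = ((-1) ^ 2) ^ (q / 2 * e) * (-1) := by
          rw [hroot, pow_succ, neg_one_pow_pow_div_two hodd, ← mul_assoc, ← mul_pow, ← pow_two]
      _ = algebraMap K L (-1) := by simp
  rw [FiniteField.isSquare_iff hchar
    (mul_ne_zero (pow_ne_zero _ (neg_ne_zero.mpr one_ne_zero)) (Algebra.norm_ne_zero_iff.mpr hδ)),
    heuler]
  exact Ring.neg_one_ne_one_of_char_ne_two hchar

theorem exists_finrank_eq_two_mul_of_sq_eq_one {σ : L →ₐ[K] L} (hσ : σ ^ 2 = 1) (hne : σ ≠ 1) :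
    ∃ e, finrank K L = 2 * e ∧ ∀ x, σ x = x ^ Fintype.card K ^ e := by
  have : Finite L := Module.finite_of_finite K
  obtain ⟨⟨e, he⟩, rfl⟩ := (FiniteField.bijective_frobeniusAlgHom_pow K L).2 σ
  refine ⟨e, ?_, fun x => by simp [FiniteField.coe_frobeniusAlgHom, pow_iterate]⟩
  have hdvd : finrank K L ∣ 2 * e := by
    rw [← FiniteField.orderOf_frobeniusAlgHom K L, mul_comm]
    exact orderOf_dvd_of_pow_eq_one (by rw [pow_mul, hσ])
  have he0 : e ≠ 0 := by
    rintro rfl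
    exact hne (pow_zero _)
  exact Nat.eq_of_dvd_of_lt_two_mul (by omega) hdvd (by omega) |>.symm

theorem exists_finrank_eq_two_mul_of_aeval_inv_gen (pb : PowerBasis K L)
    (hinv : aeval pb.gen⁻¹ (minpoly K pb.gen) = 0) (hne : pb.gen ≠ pb.gen⁻¹) :
    ∃ e, finrank K L = 2 * e ∧
      (pb.gen - pb.gen⁻¹) ^ Fintype.card K ^ e = -(pb.gen - pb.gen⁻¹) := by
  let σ : L →ₐ[K] L := pb.lift pb.gen⁻¹ hinv
  have hσ : σ pb.gen = pb.gen⁻¹ := pb.lift_gen _ hinv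
  have hsq : σ ^ 2 = 1 := pb.algHom_ext (by simp [pow_two, hσ])
  have hne_one : σ ≠ 1 := fun h => hne (by simpa [h] using hσ)
  obtain ⟨e, he, hfrob⟩ := exists_finrank_eq_two_mul_of_sq_eq_one hsq hne_one
  refine ⟨e, he, ?_⟩
  rw [← hfrob, map_sub, map_inv₀, hσ, inv_inv, neg_sub]

theorem exists_not_isSquare_minpoly_eval (hodd : Odd (Fintype.card K)) (pb : PowerBasis K L)
    (hinv : aeval pb.gen⁻¹ (minpoly K pb.gen) = 0) (h0 : pb.gen ≠ 0) (hne : pb.gen ≠ pb.gen⁻¹) :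
    ∃ e, finrank K L = 2 * e ∧ ¬ IsSquare ((-1) ^ e *
      ((minpoly K pb.gen).eval 1 * (minpoly K pb.gen).eval (-1) * (minpoly K pb.gen).eval 0)) := by
  obtain ⟨e, he, hpow⟩ := exists_finrank_eq_two_mul_of_aeval_inv_gen pb hinv hne
  have heval0 : (minpoly K pb.gen).eval 0 ≠ 0 := by
    rw [← norm_algebraMap_sub_gen, Algebra.norm_ne_zero_iff]
    simpa using h0
  refine ⟨e, he, fun hsq => ?_⟩
  apply not_isSquare_neg_one_pow_mul_norm hodd he (sub_ne_zero.mpr hne) hpow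
  have hquot : (-1) ^ e * Algebra.norm K (pb.gen - pb.gen⁻¹) =
      (-1) ^ e * ((minpoly K pb.gen).eval 1 * (minpoly K pb.gen).eval (-1) *
        (minpoly K pb.gen).eval 0) / (minpoly K pb.gen).eval 0 ^ 2 := by
    rw [minpoly_eval_one_mul_eval_neg_one pb (he ▸ even_two_mul e) h0,
      eq_div_iff (pow_ne_zero 2 heval0)]
    ring
  exact hquot ▸ hsq.div (IsSquare.sq _)

theorem exists_not_isSquare_eval_of_aeval_inv_root (hodd : Odd (Fintype.card K)) {p : K[X]}
    [Fact (Irreducible p)] (hp : p.Monic) (hinv : aeval (AdjoinRoot.root p)⁻¹ p = 0)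
    (h0 : p.eval 0 ≠ 0) (h1 : p.eval 1 ≠ 0) (hm1 : p.eval (-1) ≠ 0) :
    ∃ e, p.natDegree = 2 * e ∧
      ¬ IsSquare ((-1) ^ e * (p.eval 1 * p.eval (-1) * p.eval 0)) := by
  let pb := AdjoinRoot.powerBasis hp.ne_zero
  have : FiniteDimensional K (AdjoinRoot p) := pb.finite
  have hmin : minpoly K pb.gen = p := AdjoinRoot.minpoly_powerBasis_gen_of_monic hp
  have hgen {c : K} (hc : p.eval c ≠ 0) : pb.gen ≠ algebraMap K _ c := by
    intro h
    have hroot := minpoly.aeval K pb.gen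
    rw [hmin, h, aeval_algebraMap_apply_eq_algebraMap_eval, map_eq_zero] at hroot
    exact hc hroot
  have hgen0 : pb.gen ≠ 0 := by simpa using hgen h0
  have hne : pb.gen ≠ pb.gen⁻¹ := by
    rw [ne_eq, ← mul_eq_one_iff_eq_inv₀ hgen0, mul_self_eq_one_iff, not_or]
    exact ⟨by simpa using hgen h1, by simpa using hgen hm1⟩
  have hdeg : finrank K (AdjoinRoot p) = p.natDegree := pb.finrank
  simpa only [hmin, hdeg] using
    exists_not_isSquare_minpoly_eval hodd pb (by rw [hmin]; exact hinv) hgen0 hne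

end FiniteField

section Isometry

variable {f : LinearMap.BilinForm K V} {φ : V ≃ₗ[K] V}

theorem apply_symm_right_of_mem_orthGroup (hφ : φ ∈ orthGroup f) (x y : V) :
    f (φ x) y = f x (φ.symm y) := by
  have h := hφ x (φ.symm y)
  rwa [φ.apply_symm_apply] at h

variable [FiniteDimensional K V]

theorem charpoly_eq_of_isAdjointPair (hnd : f.Nondegenerate) {ψ χ : Module.End K V}
    (h : f.IsAdjointPair f ψ χ) : ψ.charpoly = χ.charpoly := by
  let b := Module.finBasis K V
  set A := LinearMap.toMatrix b b ψ
  set B := LinearMap.toMatrix b b χ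
  set J := LinearMap.BilinForm.toMatrix b f
  have hJ : IsUnit J.det :=
    isUnit_iff_ne_zero.mpr ((LinearMap.BilinForm.nondegenerate_iff_det_ne_zero b).mp hnd)
  have hAB : A.transpose * J = J * B := by
    rw [← LinearMap.BilinForm.toMatrix_compLeft, ← LinearMap.BilinForm.toMatrix_compRight]
    congr 1
    ext x y
    exact h x y
  rw [← LinearMap.charpoly_toMatrix ψ b, ← LinearMap.charpoly_toMatrix χ b]
  calc A.charpoly = (A.transpose * J * J⁻¹).charpoly := by
        rw [Matrix.mul_nonsing_inv_cancel_right _ _ hJ, Matrix.charpoly_transpose]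
    _ = B.charpoly := by
        rw [Matrix.charpoly_mul_comm, hAB, Matrix.nonsing_inv_mul_cancel_left _ _ hJ]

theorem exists_charpoly_symm_eq_C_mul_reverse (φ : V ≃ₗ[K] V) :
    ∃ c : K, (φ.symm : V →ₗ[K] V).charpoly = C c * (φ : V →ₗ[K] V).charpoly.reverse := by
  let b := Module.finBasis K V
  have hinv : LinearMap.toMatrix b b (φ.symm : V →ₗ[K] V) =
      (LinearMap.toMatrix b b (φ : V →ₗ[K] V))⁻¹ :=
    (Matrix.inv_eq_left_inv (by rw [← LinearMap.toMatrix_comp]; simp)).symm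
  have hunit : IsUnit (LinearMap.toMatrix b b (φ : V →ₗ[K] V)) := by
    rw [Matrix.isUnit_iff_isUnit_det, LinearMap.det_toMatrix]
    exact φ.isUnit_det'
  rw [← LinearMap.charpoly_toMatrix _ b, ← LinearMap.charpoly_toMatrix _ b, hinv,
    Matrix.charpoly_inv _ hunit, ← Matrix.reverse_charpoly]
  exact ⟨(-1) ^ Fintype.card (Fin (finrank K V)) *
    Ring.inverse (LinearMap.toMatrix b b (φ : V →ₗ[K] V)).det, by simp⟩

theorem aeval_inv_charpoly_eq_zero (hnd : f.Nondegenerate) (hφ : φ ∈ orthGroup f)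
    {L : Type*} [Field L] [Algebra K L] {α : L} (hα0 : α ≠ 0)
    (hα : aeval α (φ : V →ₗ[K] V).charpoly = 0) :
    aeval α⁻¹ (φ : V →ₗ[K] V).charpoly = 0 := by
  obtain ⟨c, hc⟩ := exists_charpoly_symm_eq_C_mul_reverse φ
  have hsymm : (φ : V →ₗ[K] V).charpoly = (φ.symm : V →ₗ[K] V).charpoly :=
    charpoly_eq_of_isAdjointPair hnd (apply_symm_right_of_mem_orthGroup hφ)
  have hreverse : aeval α⁻¹ (φ : V →ₗ[K] V).charpoly.reverse = 0 := by
    let := invertibleOfNonzero hα0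
    rw [← invOf_eq_inv]
    exact (eval₂_reverse_eq_zero_iff _ _ _).mpr hα
  rw [hsymm, hc, map_mul, hreverse, mul_zero]

theorem charpoly_eval_zero_ne_zero (φ : V ≃ₗ[K] V) : (φ : V →ₗ[K] V).charpoly.eval 0 ≠ 0 := by
  intro h
  have hdet := LinearMap.det_eq_sign_charpoly_coeff (φ : V →ₗ[K] V)
  rw [coeff_zero_eq_eval_zero, h, mul_zero] at hdet
  exact φ.isUnit_det'.ne_zero hdet

theorem det_sub_symm_mul_charpoly_eval_zero (heven : Even (finrank K V)) (φ : V ≃ₗ[K] V) :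
    LinearMap.det ((φ : V →ₗ[K] V) - (φ.symm : V →ₗ[K] V)) * (φ : V →ₗ[K] V).charpoly.eval 0 =
      (φ : V →ₗ[K] V).charpoly.eval 1 * (φ : V →ₗ[K] V).charpoly.eval (-1) := by
  have hdet : (φ : V →ₗ[K] V).charpoly.eval 0 = LinearMap.det (φ : V →ₗ[K] V) := by
    rw [LinearMap.det_eq_sign_charpoly_coeff, heven.neg_one_pow, one_mul, coeff_zero_eq_eval_zero]
  rw [hdet, LinearMap.eval_charpoly, LinearMap.eval_charpoly, ← map_mul, ← map_mul]
  congr 1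
  ext v
  simp only [LinearMap.sub_apply, Module.End.mul_apply, LinearEquiv.coe_coe,
    LinearEquiv.symm_apply_apply, map_sub, map_neg, map_one, LinearMap.neg_apply,
    Module.End.one_apply]
  abel

end Isometry

section Discriminant

theorem det_fromBlocks_zero₁₁ {R n : Type*} [CommRing R] [Fintype n] [DecidableEq n]
    (B C D : Matrix n n R) :
    (Matrix.fromBlocks 0 B C D).det = (-1) ^ Fintype.card n * (B.det * C.det) := by
  -- The product of the three unitriangular matrices is `fromBlocks 0 1 (-1) 0`.
  have hswap : Matrix.fromBlocks 0 B C D *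
      (Matrix.fromBlocks 1 1 0 1 * Matrix.fromBlocks 1 0 (-1) 1 * Matrix.fromBlocks 1 1 0 1) =
      Matrix.fromBlocks (-B) 0 (-D) C := by
    simp [Matrix.fromBlocks_multiply]
  have hdet := congrArg Matrix.det hswap
  simp only [Matrix.det_mul, Matrix.det_fromBlocks_zero₂₁, Matrix.det_fromBlocks_zero₁₂,
    Matrix.det_one, mul_one, Matrix.det_neg] at hdet
  rw [hdet, mul_assoc]

variable {ι ι' : Type*} [Fintype ι] [DecidableEq ι] [Fintype ι'] [DecidableEq ι']
  {f : LinearMap.BilinForm K V}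

theorem exists_det_toMatrix_eq_mul_sq (f : LinearMap.BilinForm K V) (b : Basis ι K V)
    (b' : Basis ι' K V) :
    ∃ c : Kˣ, (LinearMap.BilinForm.toMatrix b' f).det =
      (LinearMap.BilinForm.toMatrix b f).det * (c : K) ^ 2 := by
  let e := b.indexEquiv b'
  have hreindex : (LinearMap.BilinForm.toMatrix (b.reindex e) f).det =
      (LinearMap.BilinForm.toMatrix b f).det := by
    rw [← Matrix.det_submatrix_equiv_self e.symm (LinearMap.BilinForm.toMatrix b f)]
    congr 1
    ext i j
    simp [LinearMap.BilinForm.toMatrix_apply]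
  let P := (b.reindex e).toMatrix b'
  have hP : IsUnit P.det := (b.reindex e).isUnit_det b'
  refine ⟨hP.unit, ?_⟩
  rw [← hreindex, ← LinearMap.BilinForm.toMatrix_mul_basis_toMatrix (b.reindex e) b' f,
    Matrix.det_mul, Matrix.det_mul, Matrix.det_transpose, IsUnit.unit_spec]
  ring

theorem hasDisc_iff_det_toMatrix (b : Basis ι K V) {d : K} :
    HasDisc f d ↔ ∃ c : Kˣ, (LinearMap.BilinForm.toMatrix b f).det = d * (c : K) ^ 2 := by
  have hgram (b' : Basis (Fin (finrank K V)) K V) :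
      Matrix.of (fun i j => f (b' i) (b' j)) = LinearMap.BilinForm.toMatrix b' f := by
    ext i j
    rw [LinearMap.BilinForm.toMatrix_apply, Matrix.of_apply]
  constructor
  · rintro ⟨b', c, hc⟩
    obtain ⟨c', hc'⟩ := exists_det_toMatrix_eq_mul_sq f b' b
    exact ⟨c * c', by rw [hc', ← hgram, hc, Units.val_mul]; ring⟩
  · rintro ⟨c, hc⟩
    have := Module.Finite.of_basis b
    obtain ⟨c', hc'⟩ := exists_det_toMatrix_eq_mul_sq f b (Module.finBasis K V)
    exact ⟨Module.finBasis K V, c * c', by rw [hgram, hc', hc, Units.val_mul]; ring⟩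

theorem HasDisc.isSquare_mul {d d' : K} (h : HasDisc f d) (h' : HasDisc f d') :
    IsSquare (d * d') := by
  have ⟨b, _⟩ := h
  obtain ⟨c, hc⟩ := (hasDisc_iff_det_toMatrix b).mp h
  obtain ⟨c', hc'⟩ := (hasDisc_iff_det_toMatrix b).mp h'
  refine ⟨d * c / c', ?_⟩
  field_simp
  linear_combination d * hc - d * hc'

theorem HasDisc.compLeft {d : K} (h : HasDisc f d) (ψ : Module.End K V) :
    HasDisc (f.compLeft ψ) (LinearMap.det ψ * d) := by
  have ⟨b, _⟩ := h
  obtain ⟨c, hc⟩ := (hasDisc_iff_det_toMatrix b).mp h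
  refine (hasDisc_iff_det_toMatrix b).mpr ⟨c, ?_⟩
  rw [LinearMap.BilinForm.toMatrix_compLeft, Matrix.det_mul, Matrix.det_transpose,
    LinearMap.det_toMatrix, hc, mul_assoc]

theorem IsHyperbolicSpace.hasDisc [FiniteDimensional K V] (h : IsHyperbolicSpace f)
    (hnd : f.Nondegenerate) {ε : K} (hε : ∀ x y, f y x = ε * f x y) :
    HasDisc f ((-ε) ^ (finrank K V / 2)) := by
  obtain ⟨W, hW, hfinrank⟩ := h
  obtain ⟨W', hcompl⟩ := Submodule.exists_isCompl W
  have hadd := Submodule.finrank_add_eq_of_isCompl hcompl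
  set e := finrank K V / 2
  let b₁ : Basis (Fin e) K W := Module.finBasisOfFinrankEq K W (by omega)
  let b₂ : Basis (Fin e) K W' := Module.finBasisOfFinrankEq K W' (by omega)
  let b : Basis (Fin e ⊕ Fin e) K V := (b₁.prod b₂).map (W.prodEquivOfIsCompl W' hcompl)
  let B : Matrix (Fin e) (Fin e) K := Matrix.of fun i j => f (b₁ i) (b₂ j)
  let D : Matrix (Fin e) (Fin e) K := Matrix.of fun i j => f (b₂ i) (b₂ j)
  have hgram : LinearMap.BilinForm.toMatrix b f = Matrix.fromBlocks 0 B (ε • B.transpose) D := by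
    ext (i | i) (j | j)
    · simpa [b, LinearMap.BilinForm.toMatrix_apply] using hW _ (b₁ i).2 _ (b₁ j).2
    · simp [b, B, LinearMap.BilinForm.toMatrix_apply]
    · simpa [b, B, LinearMap.BilinForm.toMatrix_apply] using hε _ _
    · simp [b, D, LinearMap.BilinForm.toMatrix_apply]
  have hdet : (LinearMap.BilinForm.toMatrix b f).det = (-ε) ^ e * B.det ^ 2 := by
    rw [hgram, det_fromBlocks_zero₁₁, Matrix.det_smul, Matrix.det_transpose, Fintype.card_fin,
      neg_pow ε]
    ring
  have hB : B.det ≠ 0 := by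
    intro h0
    have hne := (LinearMap.BilinForm.nondegenerate_iff_det_ne_zero b).mp hnd
    rw [hdet, h0] at hne
    simp at hne
  exact (hasDisc_iff_det_toMatrix b).mpr ⟨Units.mk0 _ hB, hdet⟩

end Discriminant

section WittIndex

/-- The subspaces over which `wittIndex` and `IsHyperbolicSpace` quantify: those on which `f`
vanishes identically. -/
def IsTotallyIsotropic (f : LinearMap.BilinForm K V) (W : Submodule K V) : Prop :=
  ∀ x ∈ W, ∀ y ∈ W, f x y = 0

variable {f : LinearMap.BilinForm K V} {W : Submodule K V}

theorem IsTotallyIsotropic.sup_span_singleton (hW : IsTotallyIsotropic f W) (hf : f.IsRefl)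
    {v : V} (hv : v ∈ f.orthogonal W) (hvv : f v v = 0) :
    IsTotallyIsotropic f (W ⊔ K ∙ v) := by
  intro x hx y hy
  obtain ⟨w, hw, _, hav, rfl⟩ := Submodule.mem_sup.mp hx
  obtain ⟨w', hw', _, hbv, rfl⟩ := Submodule.mem_sup.mp hy
  obtain ⟨a, rfl⟩ := Submodule.mem_span_singleton.mp hav
  obtain ⟨b, rfl⟩ := Submodule.mem_span_singleton.mp hbv
  have hwv : ∀ u ∈ W, f u v = 0 := hv
  have hvw : ∀ u ∈ W, f v u = 0 := fun u hu => hf _ _ (hwv u hu)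
  simp [hW w hw w' hw', hwv w hw, hvw w' hw', hvv]

variable [FiniteDimensional K V]

theorem IsTotallyIsotropic.two_mul_finrank_le (hW : IsTotallyIsotropic f W)
    (hnd : f.Nondegenerate) : 2 * finrank K W ≤ finrank K V := by
  have hle : W ≤ f.orthogonal W := fun x hx y hy => hW y hy x hx
  have hfinrank := Submodule.finrank_mono hle
  rw [LinearMap.BilinForm.finrank_orthogonal hnd] at hfinrank
  have := Submodule.finrank_le W
  omega

theorem bddAbove_finrank_isTotallyIsotropic (f : LinearMap.BilinForm K V) :
    BddAbove {n | ∃ W, IsTotallyIsotropic f W ∧ finrank K W = n} :=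
  ⟨finrank K V, by rintro _ ⟨W, -, rfl⟩; exact W.finrank_le⟩

theorem IsTotallyIsotropic.finrank_le_wittIndex (hW : IsTotallyIsotropic f W) :
    finrank K W ≤ wittIndex f :=
  le_csSup (bddAbove_finrank_isTotallyIsotropic f) ⟨W, hW, rfl⟩

theorem exists_isTotallyIsotropic_finrank_eq_wittIndex (f : LinearMap.BilinForm K V) :
    ∃ W, IsTotallyIsotropic f W ∧ finrank K W = wittIndex f :=
  Nat.sSup_mem (s := {n | ∃ W, IsTotallyIsotropic f W ∧ finrank K W = n})
    ⟨0, ⊥, by simp [IsTotallyIsotropic], finrank_bot K V⟩ (bddAbove_finrank_isTotallyIsotropic f)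

theorem two_mul_wittIndex_le_finrank (hnd : f.Nondegenerate) :
    2 * wittIndex f ≤ finrank K V := by
  obtain ⟨W, hW, hfinrank⟩ := exists_isTotallyIsotropic_finrank_eq_wittIndex f
  exact hfinrank ▸ hW.two_mul_finrank_le hnd

theorem isHyperbolicSpace_of_two_mul_wittIndex (h : 2 * wittIndex f = finrank K V) :
    IsHyperbolicSpace f := by
  obtain ⟨W, hW, hfinrank⟩ := exists_isTotallyIsotropic_finrank_eq_wittIndex f
  exact ⟨W, hW, hfinrank ▸ h⟩

theorem IsTotallyIsotropic.mem_of_finrank_eq_wittIndex (hW : IsTotallyIsotropic f W)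
    (hmax : finrank K W = wittIndex f) (hf : f.IsRefl) {v : V} (hv : v ∈ f.orthogonal W)
    (hvv : f v v = 0) : v ∈ W := by
  have hle := (hW.sup_span_singleton hf hv hvv).finrank_le_wittIndex
  have heq : W = W ⊔ K ∙ v := Submodule.eq_of_le_of_finrank_le le_sup_left (hmax ▸ hle)
  exact heq ▸ Submodule.mem_sup_right (Submodule.mem_span_singleton_self v)

theorem isHyperbolicSpace_of_isAlt (hnd : f.Nondegenerate) (halt : f.IsAlt) :
    IsHyperbolicSpace f := by
  obtain ⟨W, hW, hmax⟩ := exists_isTotallyIsotropic_finrank_eq_wittIndex f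
  have hle : f.orthogonal W ≤ W := fun x hx =>
    hW.mem_of_finrank_eq_wittIndex hmax halt.isRefl hx (halt x)
  have hfinrank := Submodule.finrank_mono hle
  rw [LinearMap.BilinForm.finrank_orthogonal hnd] at hfinrank
  have := hW.two_mul_finrank_le hnd
  exact ⟨W, hW, by omega⟩

section FiniteField

variable [Fintype K]

theorem exists_ne_zero_apply_self_eq_zero (hodd : Odd (Fintype.card K)) (hsymm : f.IsSymm)
    (hdim : 3 ≤ finrank K V) : ∃ v, v ≠ 0 ∧ f v v = 0 := by
  by_contra! hani
  have : Invertible (2 : K) :=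
    invertibleOfNonzero (Ring.two_ne_zero (ringChar_ne_two_of_odd_card hodd))
  obtain ⟨b, hb⟩ :=
    LinearMap.BilinForm.exists_orthogonal_basis (LinearMap.BilinForm.isSymm_iff.mp hsymm)
  let u : Fin 3 → V := b ∘ Fin.castLE hdim
  have horth {i j : Fin 3} (hij : i ≠ j) : f (u i) (u j) = 0 :=
    hb ((Fin.castLE_injective hdim).ne hij)
  have hu (i : Fin 3) : f (u i) (u i) ≠ 0 := hani _ (b.ne_zero _)
  obtain ⟨s, t, hst⟩ := FiniteField.exists_root_sum_quadratic
    (f := C (f (u 0) (u 0)) * X ^ 2 + C 0 * X + C (f (u 2) (u 2)))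
    (g := C (f (u 1) (u 1)) * X ^ 2 + C 0 * X + C 0)
    (degree_quadratic (hu 0)) (degree_quadratic (hu 1)) (Nat.odd_iff.mp hodd)
  apply hani (s • u 0 + t • u 1 + u 2)
  · intro h0
    apply hu 2
    simpa [horth] using congrArg (f (u 2)) h0
  · simp only [map_zero, zero_mul, add_zero, eval_add, eval_mul, eval_C, eval_pow, eval_X] at hst
    simp only [map_add, map_smul, LinearMap.add_apply, LinearMap.smul_apply, smul_eq_mul, ne_eq,
      Fin.isValue, Fin.reduceEq, zero_ne_one, one_ne_zero, not_false_eq_true, horth, mul_zero,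
      add_zero, zero_add]
    linear_combination hst

theorem finrank_le_two_mul_wittIndex_add_two (hodd : Odd (Fintype.card K)) (hsymm : f.IsSymm)
    (hnd : f.Nondegenerate) : finrank K V ≤ 2 * wittIndex f + 2 := by
  obtain ⟨W, hW, hmax⟩ := exists_isTotallyIsotropic_finrank_eq_wittIndex f
  obtain ⟨W', hcompl⟩ := Submodule.exists_isCompl W
  by_contra! hlt
  have hU : 3 ≤ finrank K ↥(W' ⊓ f.orthogonal W) := by
    have hcompl_finrank := Submodule.finrank_add_eq_of_isCompl hcompl
    have hinf := Submodule.finrank_sup_add_finrank_inf_eq W' (f.orthogonal W)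
    have horth := LinearMap.BilinForm.finrank_orthogonal hnd W
    have hsup := Submodule.finrank_le (W' ⊔ f.orthogonal W)
    omega
  obtain ⟨v, hv0, hvv⟩ := exists_ne_zero_apply_self_eq_zero hodd (hsymm.restrict _) hU
  have hvW : (v : V) ∈ W := hW.mem_of_finrank_eq_wittIndex hmax hsymm.isRefl v.2.2 hvv
  exact hv0 (Subtype.ext (Submodule.disjoint_def.mp hcompl.disjoint _ hvW v.2.1))

theorem wittIndex_eq_finrank_div_two_sub_one (hodd : Odd (Fintype.card K)) (hsymm : f.IsSymm)
    (hnd : f.Nondegenerate) (heven : Even (finrank K V)) (hhyp : ¬ IsHyperbolicSpace f) :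
    wittIndex f = finrank K V / 2 - 1 := by
  have hle := two_mul_wittIndex_le_finrank hnd
  have hne : 2 * wittIndex f ≠ finrank K V := mt isHyperbolicSpace_of_two_mul_wittIndex hhyp
  have hge := finrank_le_two_mul_wittIndex_add_two hodd hsymm hnd
  grind

end FiniteField

end WittIndex

section Zassenhaus

variable {f : LinearMap.BilinForm K V} {φ : V ≃ₗ[K] V}

theorem isAlt_compLeft_sub_symm (hsymm : f.IsSymm) (hφ : φ ∈ orthGroup f) :
    (f.compLeft ((φ : V →ₗ[K] V) - (φ.symm : V →ₗ[K] V))).IsAlt := by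
  intro x
  have hadj : f (φ x) x = f (φ.symm x) x := by
    rw [apply_symm_right_of_mem_orthGroup hφ, hsymm.eq]
  simp [hadj]

variable [FiniteDimensional K V]

theorem IsHyperbolicSpace.isSquare_neg_one_pow_mul_det (h : IsHyperbolicSpace f)
    (hsymm : f.IsSymm) (hnd : f.Nondegenerate) (hφ : φ ∈ orthGroup f) :
    IsSquare ((-1) ^ (finrank K V / 2) *
      LinearMap.det ((φ : V →ₗ[K] V) - (φ.symm : V →ₗ[K] V))) := by
  set T : Module.End K V := (φ : V →ₗ[K] V) - (φ.symm : V →ₗ[K] V)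
  obtain hT | hT := eq_or_ne (LinearMap.det T) 0
  · rw [hT, mul_zero]
    exact IsSquare.zero
  have hdisc : HasDisc f ((-1) ^ (finrank K V / 2)) :=
    h.hasDisc hnd fun x y => by rw [one_mul, hsymm.eq]
  have halt : (f.compLeft T).IsAlt := isAlt_compLeft_sub_symm hsymm hφ
  have hnd' : (f.compLeft T).Nondegenerate := by
    let b := Module.finBasis K V
    rw [LinearMap.BilinForm.nondegenerate_iff_det_ne_zero b] at hnd ⊢
    rw [LinearMap.BilinForm.toMatrix_compLeft, Matrix.det_mul, Matrix.det_transpose,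
      LinearMap.det_toMatrix]
    exact mul_ne_zero hT hnd
  have hdisc' : HasDisc (f.compLeft T) 1 := by
    simpa using (isHyperbolicSpace_of_isAlt hnd' halt).hasDisc hnd' (ε := -1)
      fun x y => by rw [neg_one_mul, halt.neg_eq]
  simpa [mul_comm] using hdisc'.isSquare_mul (hdisc.compLeft T)

theorem IsHyperbolicSpace.isSquare_neg_one_pow_mul_charpoly_eval (h : IsHyperbolicSpace f)
    (hsymm : f.IsSymm) (hnd : f.Nondegenerate) (hφ : φ ∈ orthGroup f) :
    IsSquare ((-1) ^ (finrank K V / 2) * ((φ : V →ₗ[K] V).charpoly.eval 1 *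
      (φ : V →ₗ[K] V).charpoly.eval (-1) * (φ : V →ₗ[K] V).charpoly.eval 0)) := by
  have heven : Even (finrank K V) := by
    obtain ⟨W, -, hW⟩ := h
    exact hW ▸ even_two_mul _
  have hsq := (h.isSquare_neg_one_pow_mul_det hsymm hnd hφ).mul
    (IsSquare.sq ((φ : V →ₗ[K] V).charpoly.eval 0))
  rw [← det_sub_symm_mul_charpoly_eval_zero heven]
  rwa [mul_assoc, ← sq, ← mul_assoc]

end Zassenhaus

section Indecomposable

variable {ψ : Module.End K V}

theorem ModIndec.eq_bot_or_eq_bot_of_isCompl (h : ModIndec ψ) {A B : Submodule K[X] (AEval' ψ)}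
    (hAB : IsCompl A B) : A = ⊥ ∨ B = ⊥ := by
  let restr := (AEval.mapSubmodule K V ψ).symm
  by_contra! hne
  have hne_bot {N : Submodule K[X] (AEval' ψ)} (hN : N ≠ ⊥) : (restr N : Submodule K V) ≠ ⊥ :=
    fun h0 => hN ((map_eq_bot_iff restr).mp (Subtype.ext h0))
  have hcompl := restr.isCompl hAB
  exact h.2 ⟨restr A, restr B, (restr A).2, (restr B).2, hne_bot hne.1, hne_bot hne.2,
    congrArg Subtype.val hcompl.inf_eq_bot, congrArg Subtype.val hcompl.sup_eq_top⟩

theorem ModIndec.eq_zero_or_injective_of_isIdempotentElem (h : ModIndec ψ)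
    {π : Module.End K[X] (AEval' ψ)} (hπ : IsIdempotentElem π) :
    π = 0 ∨ Function.Injective π :=
  (h.eq_bot_or_eq_bot_of_isCompl (LinearMap.IsIdempotentElem.isCompl hπ)).imp
    LinearMap.range_eq_bot.mp LinearMap.ker_eq_bot.mp

theorem ModIndec.injective_of_comp_eq_id (h : ModIndec ψ) {Q : Type*} [AddCommGroup Q]
    [Module K[X] Q] [Nontrivial Q] {s : Q →ₗ[K[X]] AEval' ψ} {t : AEval' ψ →ₗ[K[X]] Q}
    (hts : t ∘ₗ s = LinearMap.id) : Function.Injective t := by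
  have hid (y : Q) : t (s y) = y := LinearMap.congr_fun hts y
  have hidem : IsIdempotentElem (s ∘ₗ t : Module.End K[X] (AEval' ψ)) := by
    ext x
    simp [hid]
  obtain hzero | hinj := h.eq_zero_or_injective_of_isIdempotentElem hidem
  · obtain ⟨y, hy⟩ := exists_ne (0 : Q)
    have hsy : s (t (s y)) = 0 := LinearMap.congr_fun hzero (s y)
    rw [hid] at hsy
    exact absurd (by rw [← hid y, hsy, map_zero]) hy
  · exact Function.Injective.of_comp hinj

theorem ModIndec.exists_equiv_of_equiv_directSum (h : ModIndec ψ) {ι : Type*}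
    {Q : ι → Type*} [∀ i, AddCommGroup (Q i)] [∀ i, Module K[X] (Q i)]
    (e : AEval' ψ ≃ₗ[K[X]] DirectSum ι Q) : ∃ i, Nonempty (AEval' ψ ≃ₗ[K[X]] Q i) := by
  classical
  have : Nontrivial V := (Submodule.nontrivial_iff K).mp ⟨⊥, ⊤, h.1⟩
  have : Nontrivial (AEval' ψ) := (AEval'.of ψ).symm.toEquiv.nontrivial
  obtain ⟨x, hx⟩ := exists_ne (0 : AEval' ψ)
  obtain ⟨i, hi⟩ : ∃ i, e x i ≠ 0 := by
    by_contra! hzero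
    exact hx (e.map_eq_zero_iff.mp (DFinsupp.ext hzero))
  have : Nontrivial (Q i) := nontrivial_of_ne _ _ hi
  let t : AEval' ψ →ₗ[K[X]] Q i := DirectSum.component K[X] ι Q i ∘ₗ e
  let s : Q i →ₗ[K[X]] AEval' ψ := e.symm ∘ₗ DirectSum.lof K[X] ι Q i
  have hts : t ∘ₗ s = LinearMap.id := by
    ext y
    simp [t, s, DirectSum.component.lof_self]
  exact ⟨i, ⟨LinearEquiv.ofBijective t
    ⟨h.injective_of_comp_eq_id hts, fun y => ⟨s y, LinearMap.congr_fun hts y⟩⟩⟩⟩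

variable [FiniteDimensional K V]

theorem charpoly_eq_minpoly_of_equiv_quotient {I : Ideal K[X]}
    (e : AEval' ψ ≃ₗ[K[X]] K[X] ⧸ I) : ψ.charpoly = minpoly K ψ := by
  have hI : I = Ideal.span {minpoly K ψ} := by
    rw [← Ideal.annihilator_quotient (I := I), ← e.annihilator_eq, AEval.annihilator_eq_ker_aeval,
      minpoly.ker_aeval_eq_span_minpoly]
  have hfinrank : finrank K V = (minpoly K ψ).natDegree := by
    rw [((AEval'.of ψ).trans (e.restrictScalars K)).finrank_eq, hI,
      finrank_quotient_span_eq_natDegree]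
  refine eq_of_monic_of_dvd_of_natDegree_le (minpoly.monic (Algebra.IsIntegral.isIntegral ψ))
    ψ.charpoly_monic ψ.minpoly_dvd_charpoly ?_
  rw [ψ.charpoly_natDegree, hfinrank]

theorem ModIndec.charpoly_eq_minpoly (h : ModIndec ψ) : ψ.charpoly = minpoly K ψ := by
  obtain ⟨ι, _, p, -, k, ⟨e⟩⟩ :=
    Module.equiv_directSum_of_isTorsion (AEval.isTorsion_of_finiteDimensional K V ψ)
  obtain ⟨i, ⟨e'⟩⟩ := h.exists_equiv_of_equiv_directSum e
  exact charpoly_eq_minpoly_of_equiv_quotient e'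

end Indecomposable

theorem eval_ne_zero_of_irreducible_of_ne_X_sub_C {p : K[X]} (hp : p.Monic) (hirr : Irreducible p)
    {c : K} (hc : p ≠ X - C c) : p.eval c ≠ 0 := fun h =>
  hc (eq_of_monic_of_associated (monic_X_sub_C c) hp
    (((irreducible_X_sub_C c).dvd_irreducible_iff_associated hirr).mp (dvd_iff_isRoot.mpr h))).symm

theorem exists_not_isSquare_eval_of_charpoly_eq_pow [Fintype K] (hodd : Odd (Fintype.card K))
    [FiniteDimensional K V] {f : LinearMap.BilinForm K V} (hnd : f.Nondegenerate) {φ : V ≃ₗ[K] V}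
    (hφ : φ ∈ orthGroup f) {p : K[X]} {m : ℕ} (hp : p.Monic) (hirr : Irreducible p)
    (hp1 : p ≠ X - 1) (hp2 : p ≠ X + 1) (hm : m ≠ 0) (hchar : (φ : V →ₗ[K] V).charpoly = p ^ m) :
    ∃ e, p.natDegree = 2 * e ∧
      ¬ IsSquare ((-1) ^ e * (p.eval 1 * p.eval (-1) * p.eval 0)) := by
  have : Fact (Irreducible p) := ⟨hirr⟩
  have h0 : p.eval 0 ≠ 0 := by
    have := charpoly_eval_zero_ne_zero φ
    rw [hchar, eval_pow] at this
    exact ne_zero_pow hm this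
  have hroot0 : AdjoinRoot.root p ≠ 0 := by
    intro h
    have := AdjoinRoot.eval₂_root p
    rw [h, eval₂_at_zero, map_eq_zero, coeff_zero_eq_eval_zero] at this
    exact h0 this
  have hinv : aeval (AdjoinRoot.root p)⁻¹ p = 0 := by
    have hroot : aeval (AdjoinRoot.root p) (φ : V →ₗ[K] V).charpoly = 0 := by
      rw [hchar, map_pow, AdjoinRoot.aeval_eq, AdjoinRoot.mk_self, zero_pow hm]
    have := aeval_inv_charpoly_eq_zero hnd hφ hroot0 hroot
    rwa [hchar, map_pow, pow_eq_zero_iff hm] at this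
  exact exists_not_isSquare_eval_of_aeval_inv_root hodd hp hinv h0
    (eval_ne_zero_of_irreducible_of_ne_X_sub_C hp hirr (by simpa using hp1))
    (eval_ne_zero_of_irreducible_of_ne_X_sub_C hp hirr (by simpa using hp2))

theorem stmt15_general [Fintype K] (hodd : Odd (Fintype.card K)) [FiniteDimensional K V]
    {f : LinearMap.BilinForm K V} (hsymm : f.IsSymm) (hnd : f.Nondegenerate)
    {φ : V ≃ₗ[K] V} (hφ : φ ∈ orthGroup f) {p : K[X]} {m : ℕ} (hp : p.Monic)
    (hirr : Irreducible p) (hp1 : p ≠ X - 1) (hp2 : p ≠ X + 1) (hm : Odd m)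
    (hchar : (φ : V →ₗ[K] V).charpoly = p ^ m) :
    wittIndex f = finrank K V / 2 - 1 := by
  obtain ⟨e, hdeg, hnonsquare⟩ :=
    exists_not_isSquare_eval_of_charpoly_eq_pow hodd hnd hφ hp hirr hp1 hp2 hm.pos.ne' hchar
  have hfinrank : finrank K V = 2 * (e * m) := by
    rw [← LinearMap.charpoly_natDegree (φ : V →ₗ[K] V), hchar, natDegree_pow, hdeg]
    ring
  refine wittIndex_eq_finrank_div_two_sub_one hodd hsymm hnd (hfinrank ▸ even_two_mul _)
    fun hhyp => hnonsquare (isSquare_of_isSquare_pow hm ?_)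
  have hsq := hhyp.isSquare_neg_one_pow_mul_charpoly_eval hsymm hnd hφ
  rwa [hchar, eval_pow, eval_pow, eval_pow, ← mul_pow, ← mul_pow, hfinrank,
    Nat.mul_div_cancel_left _ two_pos, pow_mul, ← mul_pow] at hsq

/-- Over a finite field of odd characteristic, an orthogonally
indecomposable `φ ∈ O(V)` of type 2o (indecomposable as `K[x]`-module, minimal polynomial
`p^m` with `p ≠ x ± 1` irreducible and `m` odd) satisfies `Witt index V = dim V / 2 - 1`. -/
theorem stmt15 [Fintype K] (hodd : Odd (Fintype.card K)) [FiniteDimensional K V]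
    (f : LinearMap.BilinForm K V) (hsymm : f.IsSymm) (hnd : f.Nondegenerate)
    (φ : V ≃ₗ[K] V) (hφ : φ ∈ orthGroup f)
    (hoi : OrthIndec f (φ : V →ₗ[K] V)) (hmi : ModIndec (φ : V →ₗ[K] V))
    (p : K[X]) (m : ℕ) (hp : p.Monic) (hirr : Irreducible p)
    (hp1 : p ≠ X - 1) (hp2 : p ≠ X + 1) (hm : Odd m)
    (hmin : minpoly K (φ : V →ₗ[K] V) = p ^ m) :
    wittIndex f = Module.finrank K V / 2 - 1 := by
  exact stmt15_general hodd hsymm hnd hφ hp hirr hp1 hp2 hm (hmi.charpoly_eq_minpoly.trans hmin)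

end Biref
end
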